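/- arXiv:1710.05586 — 2 statements merged into one kernel-verified Lean document; each statement's English description precedes it below -/
import Mathlib

section
/- Let π* be a cyclic combinatorial datum over a d-letter alphabet and γ : π → π* a Rauzy path of length r ending at π*, with return-time vector q^(r) = B_γ 1⃗ and N := Σ_χ q^(r)_χ. Then the map [α,i] ↦ [α,i−1] on the label set ℐ(γ) (the quotient of 𝒜 × ℤ by the identifications (α,i) ∼ (β,j) iff π_t(β) = π_b(α) and i − j = q^(r)_α + h(β,r) − h(α,r)) is a cyclic permutation of ℐ(γ) of maximal order N = |ℐ(γ)|. -/
namespace RauzyLabels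

variable {A : Type*} [Fintype A] [DecidableEq A]

/-- Return-time vector `q^(k) = B_γ 1⃗` of a Rauzy path, given by the list of
winners `w` and losers `l` of its arrows. -/
def qvec (w l : ℕ → A) : ℕ → A → ℕ
  | 0 => fun _ => 1
  | (k + 1) => fun a =>
      if a = l k then qvec w l k a + qvec w l k (w k) else qvec w l k a

/-- Top Rauzy operation with winner `αt` and loser `αb` (0-indexed positions). -/
def TopRelLab {d : ℕ} (P Q : (A ≃ Fin d) × (A ≃ Fin d)) (αt αb : A) : Prop :=
  (P.1 αt : ℕ) = d - 1 ∧ (P.2 αb : ℕ) = d - 1 ∧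
    Q.1 = P.1 ∧
    (∀ χ : A, (P.2 χ : ℕ) ≤ (P.2 αt : ℕ) → (Q.2 χ : ℕ) = (P.2 χ : ℕ)) ∧
    (Q.2 αb : ℕ) = (P.2 αt : ℕ) + 1 ∧
    (∀ χ : A, χ ≠ αb → (P.2 αt : ℕ) < (P.2 χ : ℕ) → (Q.2 χ : ℕ) = (P.2 χ : ℕ) + 1)

/-- Bottom Rauzy operation with winner `αb` and loser `αt`. -/
def BotRelLab {d : ℕ} (P Q : (A ≃ Fin d) × (A ≃ Fin d)) (αb αt : A) : Prop :=
  (P.1 αt : ℕ) = d - 1 ∧ (P.2 αb : ℕ) = d - 1 ∧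
    Q.2 = P.2 ∧
    (∀ χ : A, (P.1 χ : ℕ) ≤ (P.1 αb : ℕ) → (Q.1 χ : ℕ) = (P.1 χ : ℕ)) ∧
    (Q.1 αt : ℕ) = (P.1 αb : ℕ) + 1 ∧
    (∀ χ : A, χ ≠ αt → (P.1 αb : ℕ) < (P.1 χ : ℕ) → (Q.1 χ : ℕ) = (P.1 χ : ℕ) + 1)

/-- One Rauzy arrow with winner `w` and loser `l`. -/
def StepLab {d : ℕ} (P Q : (A ≃ Fin d) × (A ≃ Fin d)) (w l : A) : Prop :=
  TopRelLab P Q w l ∨ BotRelLab P Q w l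

/-- The identification `(α,i) ∼ (β,j) ⟺ π*_t(β) = π*_b(α) ∧
`i − j = q_α + h(β) − h(α)` generating the label set `ℐ(γ)`. -/
def labelRel {d : ℕ} (Pstar : (A ≃ Fin d) × (A ≃ Fin d)) (q h : A → ℕ)
    (p p' : A × ℤ) : Prop :=
  Pstar.1 p'.1 = Pstar.2 p.1 ∧
    p.2 - p'.2 = (q p.1 : ℤ) + (h p'.1 : ℤ) - (h p.1 : ℤ)

/-- The conjugated subtraction on `ZMod N` is a cyclic permutation of order `N`. -/
theorem conj_sub_cycle {X : Type*} (N : ℕ) (hN : 2 ≤ N) (F : X ≃ ZMod N) :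
    Equiv.Perm.IsCycle ((F.trans (Equiv.subRight (1 : ZMod N))).trans F.symm : Equiv.Perm X) ∧
    orderOf ((F.trans (Equiv.subRight (1 : ZMod N))).trans F.symm : Equiv.Perm X) = N := by
  set e : Equiv.Perm X := (F.trans (Equiv.subRight (1 : ZMod N))).trans F.symm with he
  have : Fact (1 < N) := ⟨hN⟩
  have : NeZero N := ⟨by omega⟩
  have he1 : ∀ x, F (e x) = F x - 1 := fun x => by simp [he]
  have hpow : ∀ (n : ℕ) (x : X), F ((e ^ n) x) = F x - n := by
    intro n
    induction n with
    | zero => intro x; simp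
    | succ n ih => intro x; rw [pow_succ', Equiv.Perm.mul_apply, he1, ih]; push_cast; ring
  constructor
  · refine ⟨F.symm 0, ?_, ?_⟩
    · intro hx
      have := he1 (F.symm 0)
      rw [hx] at this
      simp at this
    · intro y _
      refine ⟨((-(F y)).val : ℕ), ?_⟩
      apply F.injective
      rw [zpow_natCast, hpow]
      simp
  · apply Nat.dvd_antisymm
    · rw [orderOf_dvd_iff_pow_eq_one]
      ext x
      apply F.injective
      rw [hpow]; simp
    · have h1 := hpow (orderOf e) (F.symm 0)
      rw [pow_orderOf_eq_one] at h1
      simp at h1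
      exact (ZMod.natCast_eq_zero_iff _ _).1 h1

/-- Let `π*` be a cyclic combinatorial datum and `γ : π → π*` a Rauzy path of
length `r` ending at `π*`, with return times `q^(r) = B_γ 1⃗` and
`N = Σ_χ q^(r)_χ`.  Then the shift `[α,i] ↦ [α,i−1]` on the label set `ℐ(γ)`
(the quotient of `𝒜 × ℤ` by the identifications above) is a cyclic permutation
of `ℐ(γ)` of maximal order `N = |ℐ(γ)|`. -/
theorem shift_on_labels_is_cyclic
    (h2 : 2 ≤ Fintype.card A)
    (P : ℕ → (A ≃ Fin (Fintype.card A)) × (A ≃ Fin (Fintype.card A)))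
    (w l : ℕ → A) (r : ℕ)
    (hpath : ∀ k < r, StepLab (P k) (P (k + 1)) (w k) (l k))
    (hcyc : Equiv.Perm.IsCycle
        (((P r).1.symm.trans (P r).2) : Equiv.Perm (Fin (Fintype.card A))) ∧
      orderOf (((P r).1.symm.trans (P r).2) : Equiv.Perm (Fin (Fintype.card A)))
        = Fintype.card A)
    (h : A → ℕ) (hh : ∀ a : A, h a < qvec w l r a)
    (N : ℕ) (hN : N = ∑ a : A, qvec w l r a) :
    ∃ e : Equiv.Perm (Quotient (Relation.EqvGen.setoid
        (labelRel (P r) (qvec w l r) h))),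
      (∀ p : A × ℤ,
        e (Quotient.mk (Relation.EqvGen.setoid (labelRel (P r) (qvec w l r) h)) p)
          = Quotient.mk (Relation.EqvGen.setoid (labelRel (P r) (qvec w l r) h))
              (p.1, p.2 - 1)) ∧
      Nat.card (Quotient (Relation.EqvGen.setoid
        (labelRel (P r) (qvec w l r) h))) = N ∧
      e.IsCycle ∧ orderOf e = N := by
  classical
  set q := qvec w l r with hq
  set R := labelRel (P r) q h with hR
  set τ : Equiv.Perm A := (P r).2.trans (P r).1.symm with hτ
  have hcard : 0 < Fintype.card A := by omega
  -- cyclicity of `τ`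
  obtain ⟨hc1, hc2⟩ := hcyc
  set σ : Equiv.Perm (Fin (Fintype.card A)) := (P r).1.symm.trans (P r).2 with hσ
  have hsupp : σ.support = Finset.univ := by
    rw [← Finset.card_eq_iff_eq_univ, ← hc1.orderOf, hc2, Fintype.card_fin]
  have hστ : ∀ (n : ℕ) (x : Fin (Fintype.card A)),
      (τ ^ n) ((P r).1.symm x) = (P r).1.symm ((σ ^ n) x) := by
    intro n
    induction n with
    | zero => intro x; simp
    | succ n ih =>
      intro x
      rw [pow_succ', pow_succ', Equiv.Perm.mul_apply, Equiv.Perm.mul_apply, ih]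
      simp [hσ, hτ]
  have hon : τ.IsCycleOn ((Finset.univ : Finset A) : Set A) := by
    refine ⟨by simp [Set.bijOn_univ, τ.bijective], ?_⟩
    intro x _ y _
    have hx : σ ((P r).1 x) ≠ (P r).1 x := by
      rw [← Equiv.Perm.mem_support, hsupp]; simp
    have hy : σ ((P r).1 y) ≠ (P r).1 y := by
      rw [← Equiv.Perm.mem_support, hsupp]; simp
    obtain ⟨n, hn⟩ := hc1.exists_pow_eq hx hy
    refine ⟨n, ?_⟩
    have := hστ n ((P r).1 x)
    rw [hn] at this
    simpa using this
  obtain ⟨a0⟩ : Nonempty A := Fintype.card_pos_iff.1 hcard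
  have hmod : ∀ m n : ℕ, (τ ^ m) a0 = (τ ^ n) a0 ↔ m ≡ n [MOD Fintype.card A] := by
    intro m n
    exact hon.pow_apply_eq_pow_apply (Finset.mem_univ a0)
  have hex : ∀ a, ∃ n < Fintype.card A, (τ ^ n) a0 = a := by
    intro a
    exact hon.exists_pow_eq (Finset.mem_univ a0) (Finset.mem_univ a)
  let T : ℕ → ℤ := fun k => ∑ i ∈ Finset.range k, (q ((τ ^ i) a0) : ℤ)
  have hTs : ∀ k, T (k + 1) = T k + q ((τ ^ k) a0) := fun k => Finset.sum_range_succ _ _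
  have hTd : T (Fintype.card A) = N := by
    rw [hN]
    push_cast
    refine Finset.sum_bij (fun i _ => (τ ^ i) a0) (by simp) ?_ ?_ (by simp)
    · intro i hi j hj hij
      exact Nat.ModEq.eq_of_lt_of_lt ((hmod i j).1 hij) (Finset.mem_range.1 hi)
        (Finset.mem_range.1 hj)
    · intro a _
      obtain ⟨n, hn, hna⟩ := hex a
      exact ⟨n, Finset.mem_range.2 hn, hna⟩
  have hper : ∀ k, (τ ^ (k + Fintype.card A)) a0 = (τ ^ k) a0 := by
    intro k
    rw [hmod]
    simp [Nat.ModEq]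
  have hTp : ∀ k, T (k + Fintype.card A) = T k + N := by
    intro k
    induction k with
    | zero => simpa [T] using hTd
    | succ k ih =>
      rw [show k + 1 + Fintype.card A = (k + Fintype.card A) + 1 by ring, hTs, ih, hTs, hper]
      ring
  have hTm : ∀ m k, T (k + Fintype.card A * m) = T k + N * m := by
    intro m
    induction m with
    | zero => intro k; simp
    | succ m ih =>
      intro k
      rw [mul_add, mul_one, ← add_assoc, hTp, ih]; push_cast; ring
  have hTz : ∀ m n : ℕ, m ≡ n [MOD Fintype.card A] → ((T m : ℤ) : ZMod N) = (T n : ℤ) := by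
    have key : ∀ m, ((T m : ℤ) : ZMod N) = (T (m % Fintype.card A) : ℤ) := by
      intro m
      conv_lhs => rw [← Nat.mod_add_div m (Fintype.card A), hTm]
      simp
    intro m n hmn
    rw [key m, key n, hmn]
  have hN2 : 2 ≤ N := by
    rw [hN]
    calc 2 ≤ ∑ a : A, 1 := by simpa using h2
      _ ≤ _ := Finset.sum_le_sum fun a _ => by have := hh a; omega
  choose κ hκlt hκ using hex
  -- the labelling
  let f : A × ℤ → ZMod N := fun p => ((p.2 + h p.1 + T (κ p.1) : ℤ) : ZMod N)
  have hR' : ∀ p p' : A × ℤ, R p p' ↔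
      p'.1 = τ p.1 ∧ p.2 - p'.2 = (q p.1 : ℤ) + h p'.1 - h p.1 := by
    intro p p'
    simp only [hR, labelRel, hτ, Equiv.trans_apply, Equiv.eq_symm_apply]
  have hfR : ∀ p p', R p p' → f p = f p' := by
    rintro ⟨a, i⟩ ⟨b, j⟩ hp
    obtain ⟨h1, h3⟩ := (hR' _ _).1 hp
    simp only at h1 h3
    subst h1
    have e1 : ((T (κ (τ a)) : ℤ) : ZMod N) = (T (κ a + 1) : ℤ) := by
      apply hTz
      rw [← hmod, hκ, pow_succ', Equiv.Perm.mul_apply, hκ]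
    have e2 : i = j + q a + h (τ a) - h a := by linarith
    simp only [f]
    rw [Int.cast_add _ (T (κ (τ a))), e1, hTs, hκ, e2]
    push_cast
    ring
  have hfE : ∀ p p', Relation.EqvGen R p p' → f p = f p' := by
    intro p p' hp
    induction hp with
    | rel _ _ h => exact hfR _ _ h
    | refl _ => rfl
    | symm _ _ _ ih => exact ih.symm
    | trans _ _ _ _ _ ih1 ih2 => exact ih1.trans ih2
  have hwalk : ∀ (k : ℕ) (y : ℤ), Relation.EqvGen R (a0, y + T k - h a0)
      ((τ ^ k) a0, y - h ((τ ^ k) a0)) := by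
    intro k
    induction k with
    | zero => intro y; simpa [T] using Relation.EqvGen.refl _
    | succ k ih =>
      intro y
      have h1 := ih (y + q ((τ ^ k) a0))
      rw [hTs, show y + (T k + q ((τ ^ k) a0)) - (h a0 : ℤ)
        = y + q ((τ ^ k) a0) + T k - h a0 by ring]
      refine h1.trans _ _ _ (Relation.EqvGen.rel _ _ ((hR' _ _).2 ⟨?_, ?_⟩))
      · simp [pow_succ']
      · simp only; ring
  have hloop : ∀ y : ℤ, Relation.EqvGen R (a0, y + N) (a0, y) := by
    intro y
    have h1 := hwalk (Fintype.card A) (y + h a0)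
    have h3 := hper 0
    simp only [zero_add, pow_zero, Equiv.Perm.one_apply] at h3
    rw [h3, hTd] at h1
    convert h1 using 2 <;> ring
  have hloopn : ∀ (m : ℕ) (y : ℤ), Relation.EqvGen R (a0, y + N * m) (a0, y) := by
    intro m
    induction m with
    | zero => intro y; simpa using Relation.EqvGen.refl _
    | succ m ih =>
      intro y
      have h1 := ih (y + N)
      have h3 := h1.trans _ _ _ (hloop y)
      convert h3 using 2
      push_cast; ring
  have hloopz : ∀ (m : ℤ) (y : ℤ), Relation.EqvGen R (a0, y + N * m) (a0, y) := by
    intro m y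
    obtain ⟨n, rfl | rfl⟩ := m.eq_nat_or_neg
    · exact hloopn n y
    · have h1 := hloopn n (y + N * (-n))
      refine Relation.EqvGen.symm _ _ ?_
      convert h1 using 2
      ring
  have hbase : ∀ p : A × ℤ, Relation.EqvGen R (a0, p.2 + h p.1 + T (κ p.1) - h a0) p := by
    rintro ⟨a, i⟩
    have h1 := hwalk (κ a) (i + h a)
    rw [hκ] at h1
    simpa using h1
  have hinj : ∀ p p', f p = f p' → Relation.EqvGen R p p' := by
    intro p p' hpp
    obtain ⟨m, hm⟩ := (ZMod.intCast_eq_intCast_iff_dvd_sub _ _ _).1 hpp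
    refine ((hbase p).symm _ _).trans _ _ _ (Relation.EqvGen.trans _ _ _ ?_ (hbase p'))
    refine Relation.EqvGen.symm _ _ ?_
    have h1 := hloopz m (p.2 + h p.1 + T (κ p.1) - h a0)
    rw [← hm] at h1
    convert h1 using 2
    ring
  let F0 : Quotient (Relation.EqvGen.setoid R) → ZMod N := Quotient.lift f hfE
  have hF0 : Function.Bijective F0 := by
    constructor
    · intro x y
      refine Quotient.inductionOn₂ x y ?_
      intro p p' hp
      exact Quotient.sound (hinj p p' hp)
    · intro z
      obtain ⟨n, rfl⟩ := ZMod.intCast_surjective z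
      refine ⟨Quotient.mk _ (a0, n - h a0 - T (κ a0)), ?_⟩
      change f _ = _
      simp only [f]
      push_cast
      ring
  let F := Equiv.ofBijective F0 hF0
  refine ⟨(F.trans (Equiv.subRight (1 : ZMod N))).trans F.symm, ?_, ?_, conj_sub_cycle N hN2 F⟩
  · intro p
    simp only [Equiv.trans_apply]
    rw [Equiv.symm_apply_eq]
    change f p - 1 = f (p.1, p.2 - 1)
    simp only [f]
    push_cast
    ring
  · rw [Nat.card_congr F, Nat.card_zmod]

end RauzyLabels
end

section
/- (Full Family Theorem) Let π be an admissible combinatorial datum whose Rauzy class contains a cyclic combinatorial datum, and let (f_τ)_{τ ∈ Δ^𝒜} be a full family of GIETs over π. Then for every Keane IET T with combinatorial datum π on [0,1) there exists τ ∈ Δ^𝒜 such that f_τ has the same infinite Rauzy renormalization path as T: γ(f_τ, ∞) = γ(T, ∞). -/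
/-- The data of a candidate generalized interval exchange transformation (GIET):
combinatorial datum `(pit, pib)` (positions in `{1,…,d}`), top and bottom
interval lengths `lt`, `lb`, and the map `f` itself. -/
structure GState (A : Type*) where
  pit : A → ℕ
  pib : A → ℕ
  lt : A → ℝ
  lb : A → ℝ
  f : ℝ → ℝ

namespace GState

variable {A : Type*} [Fintype A] [DecidableEq A]

/-- Critical point `u^t_a`: left endpoint of the top interval `I^t_a`. -/
noncomputable def ut (s : GState A) (a : A) : ℝ :=
  ∑ x ∈ Finset.univ.filter (fun x => s.pit x < s.pit a), s.lt x

/-- Critical value `u^b_a`: left endpoint of the bottom interval `I^b_a`. -/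
noncomputable def ub (s : GState A) (a : A) : ℝ :=
  ∑ x ∈ Finset.univ.filter (fun x => s.pib x < s.pib a), s.lb x

/-- Total length of the interval `I = [0, len)` on which `s` acts. -/
noncomputable def len (s : GState A) : ℝ := ∑ x : A, s.lt x

/-- The top (continuity) interval `I^t_a`. -/
noncomputable def Itv (s : GState A) (a : A) : Set ℝ :=
  Set.Ico (s.ut a) (s.ut a + s.lt a)

/-- The bottom (image) interval `I^b_a`. -/
noncomputable def Ibv (s : GState A) (a : A) : Set ℝ :=
  Set.Ico (s.ub a) (s.ub a + s.lb a)

/-- `s` is a genuine GIET: `pit`, `pib` are bijections onto `{1,…,d}`, all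
lengths are positive with equal total sums, and each restriction
`f : I^t_a → I^b_a` is an orientation preserving homeomorphism (a continuous
strictly increasing bijection). -/
def IsGIET (s : GState A) : Prop :=
  Set.BijOn s.pit Set.univ (Set.Ico 1 (Fintype.card A + 1)) ∧
  Set.BijOn s.pib Set.univ (Set.Ico 1 (Fintype.card A + 1)) ∧
  (∀ a, 0 < s.lt a) ∧ (∀ a, 0 < s.lb a) ∧
  (∑ a : A, s.lt a) = (∑ a : A, s.lb a) ∧
  ∀ a, Set.BijOn s.f (s.Itv a) (s.Ibv a) ∧ StrictMonoOn s.f (s.Itv a) ∧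
    ContinuousOn s.f (s.Itv a)

/-- The combinatorial datum of `s` is admissible. -/
def Admissible (s : GState A) : Prop :=
  ∀ k : ℕ, 1 ≤ k → k < Fintype.card A →
    {a : A | s.pit a ≤ k} ≠ {a : A | s.pib a ≤ k}

/-- One step of Rauzy induction from `s` to `s'`, the corresponding arrow having
winner `w` and loser `l`.  The new map is the first return map of `s.f` to the
shortened interval `[0, s'.len)`, and the combinatorial datum is modified by the
top (resp. bottom) Rauzy operation. -/
def RauzyStep (s s' : GState A) (w l : A) : Prop :=
  s'.IsGIET ∧
  (∀ x ∈ Set.Ico (0 : ℝ) s'.len,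
      s'.f x = if s'.len ≤ s.f x then s.f (s.f x) else s.f x) ∧
  ∃ at_ ab : A, s.pit at_ = Fintype.card A ∧ s.pib ab = Fintype.card A ∧
    ((s.ut at_ < s.ub ab ∧ w = at_ ∧ l = ab ∧
        s'.len = s.ub ab ∧
        s'.pit = s.pit ∧
        (∀ x, s.pib x ≤ s.pib at_ → s'.pib x = s.pib x) ∧
        s'.pib ab = s.pib at_ + 1 ∧
        (∀ x, x ≠ ab → s.pib at_ < s.pib x → s'.pib x = s.pib x + 1) ∧
        (∀ x, x ≠ at_ → s'.lt x = s.lt x) ∧ s'.lt at_ = s.lt at_ - s.lb ab) ∨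
      (s.ub ab < s.ut at_ ∧ w = ab ∧ l = at_ ∧
        s'.len = s.ut at_ ∧
        s'.pib = s.pib ∧
        (∀ x, s.pit x ≤ s.pit ab → s'.pit x = s.pit x) ∧
        s'.pit at_ = s.pit ab + 1 ∧
        (∀ x, x ≠ at_ → s.pit ab < s.pit x → s'.pit x = s.pit x + 1) ∧
        (∀ x, x ≠ ab → s'.lb x = s.lb x) ∧ s'.lb ab = s.lb ab - s.lt at_))

/-- `s` together with the sequences of winners `w` and losers `l` realizes `r`
steps of Rauzy induction. -/
def RauzyTower (s : ℕ → GState A) (w l : ℕ → A) (r : ℕ) : Prop :=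
  (s 0).IsGIET ∧ ∀ k < r, RauzyStep (s k) (s (k + 1)) (w k) (l k)

/-- Return-time vector `q^(k) = B_γ 1⃗` of the path with winners `w`, losers `l`. -/
def qvec (w l : ℕ → A) : ℕ → A → ℕ
  | 0 => fun _ => 1
  | (k + 1) => fun a =>
      if a = l k then qvec w l k a + qvec w l k (w k) else qvec w l k a

/-- The Rauzy cocycle matrix `B_γ` of the path with winners `w`, losers `l`. -/
def bmat (w l : ℕ → A) : ℕ → A → A → ℕ
  | 0 => fun a b => if a = b then 1 else 0
  | (k + 1) => fun a b =>
      if a = l k then bmat w l k a b + bmat w l k (w k) b else bmat w l k a b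

/-- The atom `I(f, r, a, i) = f^i(I^t_a(f^(r)))` of the dynamical partition of
order `r`. -/
noncomputable def atom (s : ℕ → GState A) (r : ℕ) (a : A) (i : ℕ) : Set ℝ :=
  (s 0).f^[i] '' ((s r).Itv a)

/-- Combinatorial equivalence `𝒫(f,r) ∼ 𝒫(f',r)` of dynamical partitions:
there is an increasing homeomorphism of the interval sending each labelled atom
of the first partition onto the atom of the second with the same label. -/
noncomputable def PartEquiv (s s' : ℕ → GState A) (q : A → ℕ) (r : ℕ) : Prop :=
  ∃ φ : ℝ → ℝ, StrictMonoOn φ (Set.Ico (0 : ℝ) (s 0).len) ∧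
    ContinuousOn φ (Set.Ico (0 : ℝ) (s 0).len) ∧
    Set.BijOn φ (Set.Ico (0 : ℝ) (s 0).len) (Set.Ico (0 : ℝ) (s' 0).len) ∧
    ∀ a : A, ∀ i < q a, φ '' atom s r a i = atom s' r a i

end GState

namespace GState

variable {A : Type*} [Fintype A] [DecidableEq A]

/-- Closure (in `ℝ²`) of the graph of the continuous branch of `s` over `I^t_a`. -/
noncomputable def branchGraph (s : GState A) (a : A) : Set (ℝ × ℝ) :=
  closure {p : ℝ × ℝ | p.1 ∈ s.Itv a ∧ p.2 = s.f p.1}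

/-- The distance on GIETs: sum over letters of the Hausdorff distances between
the closures of the graphs of the continuous branches. -/
noncomputable def gdist (s s' : GState A) : ℝ :=
  ∑ a : A, Metric.hausdorffDist (branchGraph s a) (branchGraph s' a)

/-- The open standard simplex `Δ^𝒜`. -/
def openSimplex (A : Type*) [Fintype A] : Set (A → ℝ) :=
  {τ | (∀ a, 0 < τ a) ∧ ∑ a : A, τ a = 1}

/-- The closed standard simplex. -/
def closedSimplex (A : Type*) [Fintype A] : Set (A → ℝ) :=
  {τ | (∀ a, 0 ≤ τ a) ∧ ∑ a : A, τ a = 1}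

/-- `D` is a degeneration of a GIET with combinatorial datum `(pit, pib)`: the
union of the (closures of the) branch graphs of a GIET whose combinatorial
datum is a reduction of `(pit, pib)` to a proper subalphabet `A'`, and of one
singular point for each letter outside `A'`, located on the boundaries of the
continuity intervals of the regular part and of its inverse. -/
noncomputable def IsDegeneration (pit pib : A → ℕ) (D : A → Set (ℝ × ℝ)) : Prop :=
  ∃ (s : GState A) (A' : Finset A), A'.Nonempty ∧ A' ≠ Finset.univ ∧
    (∀ a ∈ A', ∀ b ∈ A',
      (s.pit a < s.pit b ↔ pit a < pit b) ∧
      (s.pib a < s.pib b ↔ pib a < pib b)) ∧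
    (∀ a ∉ A', s.lt a = 0 ∧ s.lb a = 0) ∧
    (∀ a ∈ A', 0 < s.lt a ∧ 0 < s.lb a) ∧
    s.len = 1 ∧ (∑ a : A, s.lb a) = 1 ∧
    (∀ a ∈ A', Set.BijOn s.f (s.Itv a) (s.Ibv a) ∧ StrictMonoOn s.f (s.Itv a) ∧
      ContinuousOn s.f (s.Itv a)) ∧
    (∀ a ∈ A', D a = branchGraph s a) ∧
    (∀ a ∉ A', ∃ p : ℝ × ℝ, D a = {p} ∧
      (p.1 = 1 ∨ ∃ b ∈ A', p.1 = s.ut b) ∧ (p.2 = 1 ∨ ∃ b ∈ A', p.2 = s.ub b))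

/-- `F` parametrizes a full family of GIETs over the combinatorial datum
`(pit, pib)`: (1) `F` is continuous on the open simplex for the graph distance;
(2) the critical values of `F τ` are marked by `τ`; (3) `F` extends
continuously to the closed simplex, with degenerations on the boundary. -/
noncomputable def FullFamily (pit pib : A → ℕ) (F : (A → ℝ) → GState A) : Prop :=
  (∀ τ ∈ openSimplex A,
    (F τ).IsGIET ∧ (F τ).pit = pit ∧ (F τ).pib = pib ∧ (F τ).len = 1) ∧
  -- (2) marking of the critical values:
  (∀ τ ∈ openSimplex A, ∀ a : A,
    (F τ).ub a = ∑ x ∈ Finset.univ.filter (fun x => pib x < pib a), τ x) ∧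
  -- (1) continuity on the open simplex:
  (∀ τ ∈ openSimplex A, ∀ ε > (0 : ℝ), ∃ δ > (0 : ℝ), ∀ τ' ∈ openSimplex A,
    dist τ τ' < δ → gdist (F τ) (F τ') < ε) ∧
  -- (3) continuous extension to the closed simplex:
  (∃ Fh : (A → ℝ) → (A → Set (ℝ × ℝ)),
    (∀ τ ∈ openSimplex A, Fh τ = fun a => branchGraph (F τ) a) ∧
    (∀ τ ∈ closedSimplex A, ∀ ε > (0 : ℝ), ∃ δ > (0 : ℝ),
      ∀ τ' ∈ closedSimplex A, dist τ τ' < δ →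
        (∑ a : A, Metric.hausdorffDist (Fh τ a) (Fh τ' a)) < ε) ∧
    (∀ τ ∈ closedSimplex A \ openSimplex A, IsDegeneration pit pib (Fh τ)))

/-- Top Rauzy operation on combinatorial data (positions in `{1,…,d}`). -/
def CombTop (d : ℕ) (pt pb pt' pb' : A → ℕ) : Prop :=
  ∃ at_ ab : A, pt at_ = d ∧ pb ab = d ∧ pt' = pt ∧
    (∀ x, pb x ≤ pb at_ → pb' x = pb x) ∧ pb' ab = pb at_ + 1 ∧
    (∀ x, x ≠ ab → pb at_ < pb x → pb' x = pb x + 1)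

/-- Bottom Rauzy operation on combinatorial data. -/
def CombBot (d : ℕ) (pt pb pt' pb' : A → ℕ) : Prop :=
  ∃ at_ ab : A, pt at_ = d ∧ pb ab = d ∧ pb' = pb ∧
    (∀ x, pt x ≤ pt ab → pt' x = pt x) ∧ pt' at_ = pt ab + 1 ∧
    (∀ x, x ≠ at_ → pt ab < pt x → pt' x = pt x + 1)

/-- One elementary Rauzy operation on combinatorial data. -/
def CombStep (d : ℕ) (P Q : (A → ℕ) × (A → ℕ)) : Prop :=
  CombTop d P.1 P.2 Q.1 Q.2 ∨ CombBot d P.1 P.2 Q.1 Q.2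

/-- `(pt, pb)` is cyclic: `σ = pb ∘ pt⁻¹` is a cycle of maximal order `d`,
equivalently the conjugate map `g = pt⁻¹ ∘ pb : 𝒜 → 𝒜` iterates transitively. -/
def CyclicDatum (pt pb : A → ℕ) : Prop :=
  ∃ g : A → A, (∀ a, pt (g a) = pb a) ∧ ∀ a b : A, ∃ n : ℕ, g^[n] a = b

end GState

namespace Scarf

section
variable {T I : Type*} [DecidableEq T] [DecidableEq I] (v : I → T → ℕ)

/-- `(σ, C)` is a dominant pair. -/
def Dom (σ : Finset T) (C : Finset I) : Prop := ∀ x, ∃ i ∈ C, ∀ y ∈ σ, v i x ≤ v i y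

/-- The door `d` is a facet of the room `r`. -/
def Inc (d r : Finset T × Finset I) : Prop :=
  (r.2 = d.2 ∧ ∃ x, x ∉ d.1 ∧ r.1 = insert x d.1) ∨ (r.1 = d.1 ∧ ∃ j, j ∉ r.2 ∧ d.2 = insert j r.2)

def KK (m : I → T) (τ : Finset T) (D : Finset I) (k : I) (r : Finset T × Finset I) : Prop :=
  r = (τ, D.erase k) ∨
    ∃ x, r = (insert x τ, D) ∧ x ∉ τ ∧ ∀ h ∈ D, h ≠ k → v h (m h) < v h x

theorem dom_mono {σ σ' : Finset T} {C C' : Finset I} (h : Dom v σ C) (hσ : σ' ⊆ σ) (hC : C ⊆ C') :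
    Dom v σ' C' := by
  intro x
  obtain ⟨i, hi, h1⟩ := h x
  exact ⟨i, hC hi, fun y hy => h1 y (hσ hy)⟩

variable [Finite T]

theorem lemA (hv : ∀ i, Function.Injective (v i)) (m : I → T) (τ : Finset T) (D : Finset I)
    (hm : ∀ i, m i ∈ τ ∧ ∀ y ∈ τ, v i (m i) ≤ v i y)
    (hD : Dom v τ D) (k k' : I) (hk : k ∈ D) (hk' : k' ∈ D) (hkk : k' ≠ k) (hmk : m k' = m k) :
    ∃ r, (Dom v r.1 r.2 ∧ KK v m τ D k r) ∧ ∀ r', Dom v r'.1 r'.2 ∧ KK v m τ D k r' → r' = r := by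
  have hsurj : ∀ y ∈ τ, ∃ i ∈ D, m i = y := by
    intro y hy
    obtain ⟨i, hi, h⟩ := hD y
    refine ⟨i, hi, hv i (le_antisymm ((hm i).2 y hy) (h _ (hm i).1))⟩
  by_cases hM : ∃ x, ∀ h ∈ D, h ≠ k → v h (m h) < v h x
  · obtain ⟨x, hx, hmax⟩ : ∃ x, (∀ h ∈ D, h ≠ k → v h (m h) < v h x) ∧
        ∀ z, (∀ h ∈ D, h ≠ k → v h (m h) < v h z) → v k z ≤ v k x := by
      have := (Set.toFinite {x | ∀ h ∈ D, h ≠ k → v h (m h) < v h x}).exists_maximalFor (v k) _ hM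
      obtain ⟨x, hx⟩ := this
      refine ⟨x, hx.1, fun z hz => ?_⟩
      by_contra hlt
      exact hlt (hx.2 hz (by simpa using (not_le.1 hlt).le))
    have hxτ : x ∉ τ := by
      intro hxt
      obtain ⟨h0, hh0, e⟩ := hsurj x hxt
      by_cases hc : h0 = k
      · subst hc
        have := hx k' hk' hkk
        rw [hmk, e] at this
        exact lt_irrefl _ this
      · have := hx h0 hh0 hc
        rw [e] at this
        exact lt_irrefl _ this
    have hxk : v k x ≤ v k (m k) := by
      obtain ⟨h, hh, h1⟩ := hD x
      by_cases hc : h = k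
      · subst hc; exact h1 _ (hm h).1
      · exact absurd (hx h hh hc) (not_lt.2 (h1 _ (hm h).1))
    refine ⟨(insert x τ, D), ⟨?_, Or.inr ⟨x, rfl, hxτ, hx⟩⟩, ?_⟩
    · intro z
      by_cases hz : ∀ h ∈ D, h ≠ k → v h (m h) < v h z
      · refine ⟨k, hk, fun y hy => ?_⟩
        rcases Finset.mem_insert.1 hy with rfl | hy
        · exact hmax z hz
        · exact (hmax z hz).trans (hxk.trans ((hm k).2 y hy))
      · push Not at hz
        obtain ⟨h, hh, hne, hle⟩ := hz
        refine ⟨h, hh, fun y hy => ?_⟩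
        rcases Finset.mem_insert.1 hy with rfl | hy
        · exact hle.trans (hx h hh hne).le
        · exact hle.trans ((hm h).2 y hy)
    · rintro r' ⟨hd, rfl | ⟨x', rfl, hx'τ, hx'⟩⟩
      · obtain ⟨h, hh, h1⟩ := hd x
        rw [Finset.mem_erase] at hh
        exact absurd (hx h hh.2 hh.1) (not_lt.2 (h1 _ (hm h).1))
      · obtain ⟨h, hh, h1⟩ := hd x
        by_cases hc : h = k
        · subst hc
          have e : x = x' := hv h (le_antisymm (h1 x' (Finset.mem_insert_self _ _)) (hmax x' hx'))
          rw [e]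
        · exact absurd (hx h hh hc) (not_lt.2 (h1 _ (Finset.mem_insert_of_mem (hm h).1)))
  · refine ⟨(τ, D.erase k), ⟨?_, Or.inl rfl⟩, ?_⟩
    · intro x
      push Not at hM
      obtain ⟨h, hh, hne, hle⟩ := hM x
      exact ⟨h, Finset.mem_erase.2 ⟨hne, hh⟩, fun y hy => hle.trans ((hm h).2 y hy)⟩
    · rintro r' ⟨hd, rfl | ⟨x', rfl, hx'τ, hx'⟩⟩
      · rfl
      · exact absurd ⟨x', hx'⟩ hM

theorem door_two (hv : ∀ i, Function.Injective (v i)) (τ : Finset T) (D : Finset I)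
    (hD : Dom v τ D) (hne : τ.Nonempty) (hcard : D.card = τ.card + 1) :
    ∃ r1 r2, r1 ≠ r2 ∧ ∀ r, (Dom v r.1 r.2 ∧ Inc (τ, D) r) ↔ r = r1 ∨ r = r2 := by
  have hex : ∀ i, ∃ x, x ∈ τ ∧ ∀ y ∈ τ, v i x ≤ v i y := fun i =>
    Finset.exists_min_image τ (v i) hne
  choose m hm using hex
  have hsurj : ∀ y ∈ τ, ∃ i ∈ D, m i = y := by
    intro y hy
    obtain ⟨i, hi, h⟩ := hD y
    refine ⟨i, hi, hv i (le_antisymm ((hm i).2 y hy) (h _ (hm i).1))⟩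
  obtain ⟨i, hi, j, hj, hij, hmij⟩ : ∃ i ∈ D, ∃ j ∈ D, i ≠ j ∧ m i = m j :=
    Finset.exists_ne_map_eq_of_card_lt_of_maps_to (by omega) (fun a _ => (hm a).1)
  have hinj : ∀ i ∈ D, ∀ j ∈ D, i ≠ j → m i = m j → ∀ a ∈ D, ∀ b ∈ D, a ≠ j → b ≠ j →
      m a = m b → a = b := by
    intro i hi j hj hij hmij a ha b hb haj hbj hab
    have := Finset.injOn_of_surjOn_of_card_le (s := D.erase j) (t := τ) m
      (fun a _ => (hm a).1) (by
        intro y hy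
        obtain ⟨h, hh, e⟩ := hsurj y hy
        by_cases hc : h = j
        · refine ⟨i, ?_, by rw [hmij, ← hc, e]⟩
          simp [hij, hi]
        · exact ⟨h, by simp [hc, hh], e⟩)
      (by rw [Finset.card_erase_of_mem hj]; omega)
    exact this (by simp [haj, ha]) (by simp [hbj, hb]) hab
  have hpair : ∀ a ∈ D, ∀ b ∈ D, a ≠ b → m a = m b → (a = i ∧ b = j) ∨ (a = j ∧ b = i) := by
    intro a ha b hb hab e
    have h1 := hinj i hi j hj hij hmij a ha b hb
    have h2 := hinj j hj i hi hij.symm hmij.symm a ha b hb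
    by_cases ha1 : a = j
    · by_cases hb1 : b = i
      · exact Or.inr ⟨ha1, hb1⟩
      · exact absurd (h2 (by rw [ha1]; exact hij.symm) hb1 e) hab
    · by_cases hb1 : b = j
      · by_cases ha2 : a = i
        · exact Or.inl ⟨ha2, hb1⟩
        · exact absurd (h2 ha2 (by rw [hb1]; exact hij.symm) e) hab
      · exact absurd (h1 ha1 hb1 e) hab
  obtain ⟨r1, h1, u1⟩ := lemA v hv m τ D hm hD i j hi hj hij.symm hmij.symm
  obtain ⟨r2, h2, u2⟩ := lemA v hv m τ D hm hD j i hj hi hij hmij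
  have hKinc : ∀ k ∈ D, ∀ r, KK v m τ D k r → Inc (τ, D) r := by
    rintro k hk r (rfl | ⟨x, rfl, hx, -⟩)
    · exact Or.inr ⟨rfl, k, by simp, by simp [Finset.insert_erase hk]⟩
    · exact Or.inl ⟨rfl, x, hx, rfl⟩
  refine ⟨r1, r2, ?_, fun r => ⟨?_, ?_⟩⟩
  · rintro rfl
    rcases h1.2 with e1 | ⟨x, e1, hx, hx'⟩
    · rcases h2.2 with e2 | ⟨x', e2, hx2, hx2'⟩
      · have : D.erase i = D.erase j := by rw [e1] at e2; exact (Prod.ext_iff.1 e2).2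
        have : i ∈ D.erase i := by rw [this]; simp [hij, hi]
        simp at this
      · rw [e1] at e2
        have := (Prod.ext_iff.1 e2).1
        simp only at this
        exact hx2 (by rw [this]; simp)
    · rcases h2.2 with e2 | ⟨x', e2, hx2, hx2'⟩
      · rw [e1] at e2
        have := (Prod.ext_iff.1 e2).1
        simp only at this
        exact hx (by rw [← this]; simp)
      · rw [e1] at e2
        have := (Prod.ext_iff.1 e2).1
        simp only at this
        have e : x = x' := by
          have : x ∈ insert x' τ := by rw [← this]; simp
          rcases Finset.mem_insert.1 this with h | h
          · exact h
          · exact absurd h hx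
        subst e
        obtain ⟨h, hh, hle⟩ := hD x
        by_cases hc : h = i
        · exact absurd (hx2' h hh (by rw [hc]; exact hij)) (not_lt.2 (hle _ (hm h).1))
        · exact absurd (hx' h hh hc) (not_lt.2 (hle _ (hm h).1))
  · rintro ⟨hd, hinc⟩
    suffices KK v m τ D i r ∨ KK v m τ D j r by
      rcases this with h | h
      · exact Or.inl (u1 r ⟨hd, h⟩)
      · exact Or.inr (u2 r ⟨hd, h⟩)
    obtain ⟨σ, C⟩ := r
    rcases hinc with ⟨hC, x, hx, hσ⟩ | ⟨hσ, j0, hj0, hC⟩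
    · simp only at hC hσ hx hd
      subst hC hσ
      by_contra hcon
      have hni : ¬ ∀ h ∈ C, h ≠ i → v h (m h) < v h x := fun hh =>
        hcon (Or.inl (Or.inr ⟨x, rfl, hx, hh⟩))
      have hnj : ¬ ∀ h ∈ C, h ≠ j → v h (m h) < v h x := fun hh =>
        hcon (Or.inr (Or.inr ⟨x, rfl, hx, hh⟩))
      push Not at hni hnj
      have key : ∀ h1 ∈ C, v h1 x ≤ v h1 (m h1) → ∃ h ∈ C, h ≠ h1 ∧ m h = m h1 ∧
          v h (m h) ≤ v h x := by
        intro h1 hh1 hb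
        obtain ⟨h, hh, hle⟩ := hd (m h1)
        have e : m h = m h1 := hv h (le_antisymm ((hm h).2 _ (hm h1).1)
          (hle _ (Finset.mem_insert_of_mem (hm h).1)))
        refine ⟨h, hh, ?_, e, ?_⟩
        · rintro rfl
          have := hle x (by simp)
          exact hx (by rw [hv h (le_antisymm hb this)]; exact (hm h).1)
        · rw [e]; exact hle x (by simp)
      obtain ⟨h1, hh1, hn1, hb1⟩ := hni
      obtain ⟨h2, hh2, hn2, hb2⟩ := hnj
      obtain ⟨g1, hg1, gn1, e1, c1⟩ := key h1 hh1 hb1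
      obtain ⟨g2, hg2, gn2, e2, c2⟩ := key h2 hh2 hb2
      rcases hpair g1 hg1 h1 hh1 gn1 e1 with ⟨a1, a2⟩ | ⟨a1, a2⟩
      · rcases hpair g2 hg2 h2 hh2 gn2 e2 with ⟨a3, a4⟩ | ⟨a3, a4⟩
        · exact hn2 a4
        · rw [a4] at hb2
          rw [a1] at c1
          exact hx (by rw [hv i (le_antisymm hb2 c1)]; exact (hm i).1)
      · exact hn1 a2
    · simp only at hC hσ hj0 hd
      subst hσ
      have hCe : C = D.erase j0 := by rw [hC, Finset.erase_insert hj0]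
      have hj0D : j0 ∈ D := by rw [hC]; simp
      obtain ⟨h, hh, hle⟩ := hd (m j0)
      have e : m h = m j0 := hv h (le_antisymm ((hm h).2 _ (hm j0).1) (hle _ (hm h).1))
      have hhj : h ≠ j0 := fun hc => hj0 (hc ▸ hh)
      have hhD : h ∈ D := by rw [hC]; exact Finset.mem_insert_of_mem hh
      rcases hpair h hhD j0 hj0D hhj e with ⟨a1, a2⟩ | ⟨a1, a2⟩
      · right; left; rw [hCe, a2]
      · left; left; rw [hCe, a2]
  · rintro (rfl | rfl)
    · exact ⟨h1.1, hKinc i hi _ h1.2⟩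
    · exact ⟨h2.1, hKinc j hj _ h2.2⟩

end
end Scarf

namespace Scarf

section
variable {T I : Type*} [DecidableEq T] [DecidableEq I] (v : I → T → ℕ)

/-- Door of colour type `i0`. -/
def Dr (c : T → I) (i0 : I) (d : Finset T × Finset I) : Prop :=
  d.2.card = d.1.card + 1 ∧ i0 ∈ d.2 ∧ d.1.image c = d.2.erase i0 ∧ Dom v d.1 d.2

theorem room_two (c : T → I) (i0 : I) (σ : Finset T) (C : Finset I)
    (hD : Dom v σ C) (hcard : σ.card = C.card) (hnc : σ.image c ≠ C)
    (d0 : Finset T × Finset I) (hd0 : Dr v c i0 d0) (hi0 : Inc d0 (σ, C)) :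
    ∃ d1 d2, d1 ≠ d2 ∧ ∀ d, (Dr v c i0 d ∧ Inc d (σ, C)) ↔ d = d1 ∨ d = d2 := by
  -- common case: a fresh colour
  have caseFresh : ∀ y ∈ σ, c y ∉ C → i0 ∈ C → (σ.erase y).image c = C.erase i0 →
      ∃ d1 d2, d1 ≠ d2 ∧ ∀ d, (Dr v c i0 d ∧ Inc d (σ, C)) ↔ d = d1 ∨ d = d2 := by
    intro y hy hcy hi him
    have hneq : c y ≠ i0 := fun h => hcy (h ▸ hi)
    have hσ : insert y (σ.erase y) = σ := Finset.insert_erase hy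
    have himσ : σ.image c = insert (c y) (C.erase i0) := by
      rw [← him, ← Finset.image_insert, hσ]
    refine ⟨(σ.erase y, C), (σ, insert (c y) C), ?_, fun d => ⟨?_, ?_⟩⟩
    · intro h
      have := (Prod.ext_iff.1 h).1
      simp only at this
      have h2 : y ∈ σ.erase y := by rw [this]; exact hy
      simp at h2
    · obtain ⟨τ, D⟩ := d
      rintro ⟨⟨k1, k2, k3, k4⟩, ⟨h1, x, hx, h2⟩ | ⟨h1, j, hj, h2⟩⟩
      · left
        simp only at h1 h2 hx k1 k2 k3
        subst h1
        have : x = y := by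
          by_contra hxy
          have : y ∈ τ := by
            rw [h2] at hy
            rcases Finset.mem_insert.1 hy with h | h
            · exact absurd h.symm hxy
            · exact h
          have : c y ∈ τ.image c := Finset.mem_image_of_mem _ this
          rw [k3] at this
          exact hcy (Finset.mem_of_mem_erase this)
        subst this
        rw [h2, Finset.erase_insert hx]
      · right
        simp only at h1 h2 hj k1 k2 k3
        subst h1
        have hji : j ≠ i0 := fun h => hj (h ▸ hi)
        have : j ∈ σ.image c := by rw [k3, h2]; simp [hji]
        rw [himσ] at this
        rcases Finset.mem_insert.1 this with h | h
        · rw [h2, h]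
        · exact absurd (Finset.mem_of_mem_erase h) hj
    · have hpos : 0 < σ.card := Finset.card_pos.2 ⟨y, hy⟩
      rintro (rfl | rfl)
      · refine ⟨⟨?_, hi, him, dom_mono v hD (Finset.erase_subset _ _) subset_rfl⟩,
          Or.inl ⟨rfl, y, by simp, hσ.symm⟩⟩
        simp only [Finset.card_erase_of_mem hy]; omega
      · refine ⟨⟨?_, Finset.mem_insert_of_mem hi, ?_,
          dom_mono v hD subset_rfl (Finset.subset_insert _ _)⟩, Or.inr ⟨rfl, c y, hcy, rfl⟩⟩
        · simp only [Finset.card_insert_of_notMem hcy]; omega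
        · simp only
          rw [himσ, Finset.erase_insert_of_ne hneq]
  obtain ⟨τ, D⟩ := d0
  obtain ⟨k1, k2, k3, k4⟩ := hd0
  simp only at k1 k2 k3 k4
  rcases hi0 with ⟨h1, x, hx, h2⟩ | ⟨h1, j, hj, h2⟩
  · simp only at h1 h2 hx
    subst h1
    have hcx : c x ≠ i0 := by
      intro h
      apply hnc
      rw [h2, Finset.image_insert, k3, h, Finset.insert_erase k2]
    by_cases hcC : c x ∈ C
    · have : c x ∈ τ.image c := by rw [k3]; simp [hcx, hcC]
      obtain ⟨y, hy, hyx⟩ := Finset.mem_image.1 this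
      have hxy : x ≠ y := fun h => hx (h ▸ hy)
      have hinj : Set.InjOn c τ := by
        apply Finset.injOn_of_card_image_eq
        rw [k3, Finset.card_erase_of_mem k2]; omega
      have hyσ : y ∈ σ := by rw [h2]; exact Finset.mem_insert_of_mem hy
      have himσ : σ.image c = C.erase i0 := by
        rw [h2, Finset.image_insert, k3]; apply Finset.insert_eq_of_mem; simp [hcx, hcC]
      have hCpos : 0 < C.card := Finset.card_pos.2 ⟨_, k2⟩
      refine ⟨(τ, C), (σ.erase y, C), ?_, fun d => ⟨?_, ?_⟩⟩
      · intro h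
        have := (Prod.ext_iff.1 h).1
        simp only at this
        rw [this] at hy
        simp at hy
      · obtain ⟨τ', D'⟩ := d
        rintro ⟨⟨l1, l2, l3, l4⟩, ⟨g1, x', hx', g2⟩ | ⟨g1, j, hj, g2⟩⟩
        · simp only at g1 g2 hx' l1 l2 l3
          subst g1
          have hτ' : τ' = σ.erase x' := by rw [g2, Finset.erase_insert hx']
          have hx'σ : x' ∈ σ := by rw [g2]; simp
          by_cases e1 : x' = x
          · left; rw [hτ', e1, h2, Finset.erase_insert hx]
          by_cases e2 : x' = y
          · right; rw [hτ', e2]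
          exfalso
          have hx'τ : x' ∈ τ := by
            rw [h2] at hx'σ
            exact (Finset.mem_insert.1 hx'σ).resolve_left e1
          have : c x' ∈ τ'.image c := by
            rw [l3, ← k3]; exact Finset.mem_image_of_mem _ hx'τ
          obtain ⟨z, hz, ez⟩ := Finset.mem_image.1 this
          have hzx : z ≠ x' := fun h => hx' (h ▸ hz)
          have hzσ : z ∈ σ := by rw [g2]; exact Finset.mem_insert_of_mem hz
          rw [h2] at hzσ
          rcases Finset.mem_insert.1 hzσ with h | h
          · rw [h, ← hyx] at ez
            exact e2 (hinj hx'τ hy ez.symm)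
          · exact hzx (hinj h hx'τ ez)
        · exfalso
          simp only at g1 g2 hj l1 l2 l3
          subst g1
          have hji : j ≠ i0 := fun h => hj (h ▸ k2)
          have : j ∈ σ.image c := by rw [l3, g2]; simp [hji]
          rw [himσ] at this
          exact hj (Finset.mem_of_mem_erase this)
      · rintro (rfl | rfl)
        · exact ⟨⟨k1, k2, k3, k4⟩, Or.inl ⟨rfl, x, hx, h2⟩⟩
        · refine ⟨⟨?_, k2, ?_, dom_mono v hD (Finset.erase_subset _ _) subset_rfl⟩,
            Or.inl ⟨rfl, y, by simp, (Finset.insert_erase hyσ).symm⟩⟩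
          · simp only [Finset.card_erase_of_mem hyσ]; omega
          · simp only
            rw [← himσ]
            apply subset_antisymm (Finset.image_subset_image (Finset.erase_subset _ _))
            intro k hk
            obtain ⟨z, hz, rfl⟩ := Finset.mem_image.1 hk
            by_cases hzy : z = y
            · refine Finset.mem_image.2 ⟨x, ?_, by rw [hzy, hyx]⟩
              simp [hxy, h2]
            · exact Finset.mem_image_of_mem _ (by simp [hzy, hz])
    · refine caseFresh x (by rw [h2]; simp) hcC k2 ?_
      rw [h2, Finset.erase_insert hx, k3]
  · simp only at h1 h2 hj
    subst h1
    have hji : j ≠ i0 := by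
      rintro rfl
      apply hnc
      rw [k3, h2, Finset.erase_insert hj]
    have hi0C : i0 ∈ C := by
      rw [h2] at k2
      exact (Finset.mem_insert.1 k2).resolve_left hji.symm
    have : j ∈ σ.image c := by rw [k3, h2]; simp [hji]
    obtain ⟨y, hy, rfl⟩ := Finset.mem_image.1 this
    have hinj : Set.InjOn c σ := by
      apply Finset.injOn_of_card_image_eq
      rw [k3, Finset.card_erase_of_mem k2]; omega
    refine caseFresh y hy hj hi0C ?_
    have e : σ.image c = insert (c y) ((σ.erase y).image c) := by
      rw [← Finset.image_insert, Finset.insert_erase hy]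
    have hn : c y ∉ (σ.erase y).image c := by
      intro h
      obtain ⟨z, hz, ez⟩ := Finset.mem_image.1 h
      rw [Finset.mem_erase] at hz
      exact hz.1 (hinj hz.2 hy ez)
    rw [k3, h2, Finset.erase_insert_of_ne hji] at e
    have hn2 : c y ∉ C.erase i0 := fun h => hj (Finset.mem_of_mem_erase h)
    rw [← Finset.erase_insert hn, ← e, Finset.erase_insert hn2]

open Classical in
theorem scarf [Fintype T] [Fintype I] [Nonempty T] (hv : ∀ i, Function.Injective (v i)) (c : T → I) :
    ∃ σ C, Dom v σ C ∧ σ.image c = C := by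
  by_contra hcon
  push Not at hcon
  obtain ⟨t0⟩ := ‹Nonempty T›
  set i0 := c t0
  let Rm : Finset (Finset T × Finset I) :=
    Finset.univ.filter (fun r => Dom v r.1 r.2 ∧ r.1.card = r.2.card)
  let Ds : Finset (Finset T × Finset I) := Finset.univ.filter (fun d => Dr v c i0 d)
  have hsum := Finset.sum_card_bipartiteAbove_eq_sum_card_bipartiteBelow (s := Ds) (t := Rm) Inc
  have hrooms : Even (∑ r ∈ Rm, (Finset.bipartiteBelow Inc Ds r).card) := by
    apply Finset.even_sum
    intro r hr
    obtain ⟨hr1, hr2⟩ := (Finset.mem_filter.1 hr).2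
    rcases (Finset.bipartiteBelow Inc Ds r).eq_empty_or_nonempty with h | ⟨d0, hd0⟩
    · rw [h]; simp
    · rw [Finset.mem_bipartiteBelow] at hd0
      obtain ⟨d1, d2, hne, h⟩ := room_two v c i0 r.1 r.2 hr1 hr2 (hcon _ _ hr1) d0
        (Finset.mem_filter.1 hd0.1).2 hd0.2
      have : Finset.bipartiteBelow Inc Ds r = {d1, d2} := by
        ext d
        rw [Finset.mem_bipartiteBelow]
        simp only [Finset.mem_insert, Finset.mem_singleton]
        rw [← h d]
        simp [Ds]
      rw [this, Finset.card_pair hne]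
      exact even_two
  have hd0 : ((∅ : Finset T), ({i0} : Finset I)) ∈ Ds := by
    refine Finset.mem_filter.2 ⟨Finset.mem_univ _, by simp, by simp, by simp, ?_⟩
    intro x
    exact ⟨i0, by simp, by simp⟩
  rw [← hsum, ← Finset.add_sum_erase _ _ hd0] at hrooms
  have hone : (Finset.bipartiteAbove Inc Rm ((∅ : Finset T), ({i0} : Finset I))).card = 1 := by
    obtain ⟨x, -, hx⟩ := Finset.exists_max_image Finset.univ (v i0) ⟨t0, Finset.mem_univ _⟩
    rw [Finset.card_eq_one]
    refine ⟨({x}, {i0}), ?_⟩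
    ext ⟨σ, C⟩
    rw [Finset.mem_bipartiteAbove, Finset.mem_singleton]
    constructor
    · rintro ⟨h, ⟨h1, z, -, h2⟩ | ⟨h1, j, hj, h2⟩⟩
      · simp only at h1 h2
        subst h1 h2
        have hd := (Finset.mem_filter.1 h).2.1
        obtain ⟨i, hi, hle⟩ := hd x
        simp only [Finset.mem_singleton] at hi
        subst hi
        have := hv _ (le_antisymm (hx z (Finset.mem_univ _)) (hle z (by simp)))
        rw [this]; simp
      · simp only at h1 h2 hj
        subst h1
        have hd := (Finset.mem_filter.1 h).2.2
        simp only [Finset.card_empty] at hd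
        have : C = ∅ := Finset.card_eq_zero.1 hd.symm
        subst this
        obtain ⟨i, hi, -⟩ := (Finset.mem_filter.1 h).2.1 t0
        simp at hi
    · intro h
      rw [Prod.ext_iff] at h
      obtain ⟨rfl, rfl⟩ := h
      refine ⟨Finset.mem_filter.2 ⟨Finset.mem_univ _, ?_, by simp⟩, Or.inl ⟨rfl, x, by simp, by simp⟩⟩
      intro z
      exact ⟨i0, by simp, by simpa using hx z (Finset.mem_univ _)⟩
  have hrest : Even (∑ d ∈ Ds.erase ((∅ : Finset T), ({i0} : Finset I)),
      (Finset.bipartiteAbove Inc Rm d).card) := by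
    apply Finset.even_sum
    intro d hd
    obtain ⟨hd1, hd2⟩ := Finset.mem_erase.1 hd
    obtain ⟨τ, D⟩ := d
    obtain ⟨k1, k2, k3, k4⟩ := (Finset.mem_filter.1 hd2).2
    simp only at k1 k2 k3 k4
    have hne : τ.Nonempty := by
      rw [Finset.nonempty_iff_ne_empty]
      rintro rfl
      apply hd1
      simp only [Finset.image_empty] at k3
      have : D = {i0} := by rw [← Finset.insert_erase k2, ← k3]; simp
      rw [this]
    obtain ⟨r1, r2, hr, h⟩ := door_two v hv τ D k4 hne k1
    have : Finset.bipartiteAbove Inc Rm (τ, D) = {r1, r2} := by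
      ext r
      rw [Finset.mem_bipartiteAbove]
      simp only [Finset.mem_insert, Finset.mem_singleton]
      rw [← h r]
      constructor
      · rintro ⟨h1, h2⟩
        exact ⟨(Finset.mem_filter.1 h1).2.1, h2⟩
      · rintro ⟨h1, h2⟩
        refine ⟨Finset.mem_filter.2 ⟨Finset.mem_univ _, h1, ?_⟩, h2⟩
        rcases h2 with ⟨g1, x, hx, g2⟩ | ⟨g1, j, hj, g2⟩
        · simp only at g1 g2 hx
          rw [g1, g2, Finset.card_insert_of_notMem hx, k1]
        · simp only at g1 g2 hj
          rw [g2, Finset.card_insert_of_notMem hj] at k1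
          rw [g1]; omega
    rw [this, Finset.card_pair hr]
    exact even_two
  rw [hone] at hrooms
  rw [Nat.even_add] at hrooms
  simp at hrooms
  exact (Nat.not_even_iff_odd.2 hrooms) hrest

end
end Scarf

namespace Scarf
open Filter Topology

theorem brouwer_approx {I : Type*} [Fintype I] [DecidableEq I] [Nonempty I]
    (Φ : (I → ℝ) → (I → ℝ)) (hm : Set.MapsTo Φ (stdSimplex ℝ I) (stdSimplex ℝ I))
    (M : ℕ) (hM : 0 < M) :
    ∃ (C : Finset I) (y0 : I → ℝ) (y : I → I → ℝ), y0 ∈ stdSimplex ℝ I ∧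
      (∀ i ∈ C, y i ∈ stdSimplex ℝ I ∧ y i i ≤ Φ (y i) i ∧
        ∀ k, |y i k - y0 k| ≤ (Fintype.card I : ℝ) / M) ∧
      ∀ i ∉ C, y0 i ≤ (Fintype.card I : ℝ) / M := by
  classical
  let T := {x : I → Fin (M + 1) // ∑ i, (x i : ℕ) = M}
  have hMR : (0 : ℝ) < M := by exact_mod_cast hM
  -- constructing points
  have mk : ∀ x : I → ℕ, ∑ i, x i = M → ∃ t : T, ∀ i, (t.1 i : ℕ) = x i := by
    intro x hx
    have hle : ∀ i, x i < M + 1 := fun i => by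
      have := Finset.single_le_sum (f := x) (fun j _ => Nat.zero_le _) (Finset.mem_univ i)
      omega
    exact ⟨⟨fun i => ⟨x i, hle i⟩, by simpa using hx⟩, fun i => rfl⟩
  haveI : Nonempty T := by
    obtain ⟨i⟩ := ‹Nonempty I›
    obtain ⟨t, -⟩ := mk (fun j => if j = i then M else 0) (by simp)
    exact ⟨t⟩
  let p : T → I → ℝ := fun t i => ((t.1 i : ℕ) : ℝ) / M
  have hp : ∀ t, p t ∈ stdSimplex ℝ I := by
    intro t
    refine ⟨fun i => by positivity, ?_⟩
    simp only [p]
    rw [← Finset.sum_div, ← Nat.cast_sum, t.2]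
    field_simp
  have hcol : ∀ t, ∃ i, p t i ≤ Φ (p t) i := by
    intro t
    by_contra h
    push Not at h
    have h1 := Finset.sum_lt_sum_of_nonempty Finset.univ_nonempty (fun i _ => h i)
    rw [(hp t).2, (hm (hp t)).2] at h1
    exact lt_irrefl _ h1
  choose c hc using hcol
  let e := Fintype.equivFin T
  let v : I → T → ℕ := fun i t => (t.1 i : ℕ) * Fintype.card T + (e t : ℕ)
  have hvle : ∀ i x y, v i x ≤ v i y → (x.1 i : ℕ) ≤ y.1 i := by
    intro i x y h
    by_contra hlt
    push Not at hlt
    have h1 := (e y).2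
    have h2 : ((y.1 i : ℕ) + 1) * Fintype.card T ≤ (x.1 i : ℕ) * Fintype.card T :=
      Nat.mul_le_mul_right _ hlt
    simp only [v] at h
    rw [add_mul] at h2
    omega
  have hv : ∀ i, Function.Injective (v i) := by
    intro i x y h
    have h1 : (x.1 i : ℕ) = y.1 i := le_antisymm (hvle i x y h.le) (hvle i y x h.ge)
    have h2 : (e x : ℕ) = e y := by
      simp only [v, h1] at h
      omega
    exact e.injective (Fin.ext h2)
  obtain ⟨σ, C, hD, hC⟩ := scarf v hv c
  have hCne : C.Nonempty := by
    obtain ⟨i, hi, -⟩ := hD (Classical.arbitrary T)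
    exact ⟨i, hi⟩
  have hσne : σ.Nonempty := by
    rw [← hC] at hCne
    exact Finset.image_nonempty.1 hCne
  have hmin := fun i => Finset.exists_min_image σ (fun t => (t.1 i : ℕ)) hσne
  choose mt hmt hmt2 using hmin
  have hkey : M < ∑ i ∈ C, (((mt i).1 i : ℕ) + 1) := by
    by_contra hle
    push Not at hle
    obtain ⟨i1, hi1⟩ := hCne
    obtain ⟨t, ht⟩ := mk (fun i => (if i ∈ C then ((mt i).1 i : ℕ) + 1 else 0) +
      (if i = i1 then M - ∑ i ∈ C, (((mt i).1 i : ℕ) + 1) else 0)) (by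
        rw [Finset.sum_add_distrib]
        simp only [Finset.sum_ite_mem, Finset.univ_inter, Finset.sum_ite_eq', Finset.mem_univ, if_true]
        omega)
    obtain ⟨i, hi, h⟩ := hD t
    have := hvle _ _ _ (h (mt i) (hmt i))
    rw [ht i, if_pos hi] at this
    omega
  have hdist : ∀ y ∈ σ, (∀ i ∈ C, (y.1 i : ℕ) ≤ (mt i).1 i + Fintype.card I) ∧
      (∀ i ∉ C, (y.1 i : ℕ) ≤ Fintype.card I) := by
    intro y hy
    have hs : ∑ i ∈ C, (y.1 i : ℕ) + ∑ i ∈ Cᶜ, (y.1 i : ℕ) = M := by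
      rw [Finset.sum_add_sum_compl, y.2]
    have hs2 : ∑ i ∈ C, (y.1 i : ℕ) =
        ∑ i ∈ C, ((mt i).1 i : ℕ) + ∑ i ∈ C, ((y.1 i : ℕ) - (mt i).1 i) := by
      rw [← Finset.sum_add_distrib]
      refine Finset.sum_congr rfl fun i _ => ?_
      have := hmt2 i y hy
      omega
    rw [Finset.sum_add_distrib] at hkey
    simp only [Finset.sum_const, smul_eq_mul, mul_one] at hkey
    have hcc := Finset.card_le_univ C
    constructor
    · intro i hi
      have := Finset.single_le_sum (f := fun i => (y.1 i : ℕ) - ((mt i).1 i : ℕ))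
        (fun j _ => Nat.zero_le _) hi
      omega
    · intro i hi
      have := Finset.single_le_sum (f := fun i => (y.1 i : ℕ))
        (fun j _ => Nat.zero_le _) (Finset.mem_compl.2 hi)
      omega
  obtain ⟨t0, ht0⟩ := hσne
  have hrep : ∀ i, ∃ t, i ∈ C → t ∈ σ ∧ c t = i := by
    intro i
    by_cases hi : i ∈ C
    · rw [← hC] at hi
      obtain ⟨t, h1, h2⟩ := Finset.mem_image.1 hi
      exact ⟨t, fun _ => ⟨h1, h2⟩⟩
    · exact ⟨t0, fun h => absurd h hi⟩
  choose ty hty using hrep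
  refine ⟨C, p t0, fun i => p (ty i), hp t0, fun i hi => ⟨hp _, ?_, fun k => ?_⟩, fun i hi => ?_⟩
  · have := hc (ty i)
    rwa [(hty i hi).2] at this
  · simp only [p]
    rw [← sub_div, abs_div, abs_of_pos hMR]
    apply div_le_div_of_nonneg_right _ hMR.le
    have h1 := hdist _ (hty i hi).1
    have h2 := hdist _ ht0
    have h3 := hmt2 k _ (hty i hi).1
    have h4 := hmt2 k _ ht0
    rw [abs_le]
    have : ((ty i).1 k : ℕ) ≤ (t0.1 k : ℕ) + Fintype.card I ∧
        (t0.1 k : ℕ) ≤ ((ty i).1 k : ℕ) + Fintype.card I := by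
      by_cases hk : k ∈ C
      · have := h1.1 k hk
        have := h2.1 k hk
        omega
      · have := h1.2 k hk
        have := h2.2 k hk
        omega
    obtain ⟨a1, a2⟩ := this
    have a1' : (((ty i).1 k : ℕ) : ℝ) ≤ ((t0.1 k : ℕ) : ℝ) + Fintype.card I := by exact_mod_cast a1
    have a2' : ((t0.1 k : ℕ) : ℝ) ≤ (((ty i).1 k : ℕ) : ℝ) + Fintype.card I := by exact_mod_cast a2
    constructor <;> linarith
  · simp only [p]
    apply div_le_div_of_nonneg_right _ hMR.le
    exact_mod_cast (hdist _ ht0).2 i hi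

theorem brouwer {I : Type*} [Fintype I] [DecidableEq I] [Nonempty I]
    (Φ : (I → ℝ) → (I → ℝ)) (hm : Set.MapsTo Φ (stdSimplex ℝ I) (stdSimplex ℝ I))
    (hcont : ContinuousOn Φ (stdSimplex ℝ I)) : ∃ z ∈ stdSimplex ℝ I, Φ z = z := by
  have H := fun n : ℕ => brouwer_approx Φ hm (n + 1) (Nat.succ_pos n)
  choose C y0 y hy0 hy hyC using H
  let U : Ultrafilter ℕ := hyperfilter ℕ
  have hU : (U : Filter ℕ) ≤ atTop := by
    rw [← Nat.cofinite_eq_atTop]; exact hyperfilter_le_cofinite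
  have hsmall : Tendsto (fun n : ℕ => (Fintype.card I : ℝ) / ((n + 1 : ℕ) : ℝ)) U (𝓝 0) := by
    refine Tendsto.mono_left ?_ hU
    have := (tendsto_const_div_atTop_nhds_zero_nat (Fintype.card I : ℝ)).comp (tendsto_add_atTop_nat 1)
    exact this
  obtain ⟨z, hz, hzU⟩ := (isCompact_stdSimplex ℝ I).ultrafilter_le_nhds' (U.map y0)
    (by rw [Ultrafilter.mem_map]; exact Filter.univ_mem' hy0)
  have hz' : Tendsto y0 U (𝓝 z) := hzU
  refine ⟨z, hz, ?_⟩
  have hge : ∀ i, z i ≤ Φ z i := by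
    intro i
    rcases U.eventually_or.1 (Eventually.of_forall (fun n => em (i ∈ C n))) with h | h
    · have hyz : Tendsto (fun n => y n i) U (𝓝 z) := by
        rw [tendsto_pi_nhds]
        intro k
        have h1 := (tendsto_pi_nhds.1 hz') k
        have h2 : Tendsto (fun n => y n i k - y0 n k) U (𝓝 0) := by
          apply squeeze_zero_norm' _ hsmall
          filter_upwards [h] with n hn
          exact (hy n i hn).2.2 k
        simpa using h2.add h1
      have hyS : ∀ᶠ n in (U : Filter ℕ), y n i ∈ stdSimplex ℝ I := by
        filter_upwards [h] with n hn using (hy n i hn).1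
      have hΦ : Tendsto (fun n => Φ (y n i)) U (𝓝 (Φ z)) :=
        (hcont z hz).tendsto.comp (tendsto_nhdsWithin_iff.2 ⟨hyz, hyS⟩)
      refine le_of_tendsto_of_tendsto (tendsto_pi_nhds.1 hyz i) (tendsto_pi_nhds.1 hΦ i) ?_
      filter_upwards [h] with n hn using (hy n i hn).2.1
    · refine le_trans ?_ ((hm hz).1 i)
      refine le_of_tendsto_of_tendsto (tendsto_pi_nhds.1 hz' i) hsmall ?_
      filter_upwards [h] with n hn using hyC n i hn
  have hsum : ∑ i, z i = ∑ i, Φ z i := by rw [hz.2, (hm hz).2]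
  have := (Finset.sum_eq_sum_iff_of_le (fun i _ => hge i)).1 hsum
  ext i
  exact (this i (Finset.mem_univ _)).symm

/-- Approximate fixed points for maps defined on the open simplex. -/
theorem approx_open {I : Type*} [Fintype I] [DecidableEq I] [Nonempty I]
    (S : Set (I → ℝ)) (hS : S = {τ | (∀ a, 0 < τ a) ∧ ∑ a, τ a = 1})
    (Φ : (I → ℝ) → (I → ℝ)) (hm : Set.MapsTo Φ S (stdSimplex ℝ I))
    (hcont : ContinuousOn Φ S) : ∃ p : ℕ → I → ℝ, (∀ n, p n ∈ S) ∧
      Tendsto (fun n => Φ (p n) - p n) atTop (𝓝 0) := by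
  have hN : (0 : ℝ) < Fintype.card I := by exact_mod_cast Fintype.card_pos
  have main : ∀ n : ℕ, ∃ q ∈ S, ∀ i, |Φ q i - q i| ≤ 1 / ((n : ℝ) + 1) := by
    intro n
    set ε : ℝ := 1 / ((n : ℝ) + 2) with hε
    have hε0 : 0 < ε := by positivity
    have hε1 : ε < 1 := by
      rw [hε, div_lt_one (by positivity)]
      have : (0 : ℝ) ≤ n := by positivity
      linarith
    let q : (I → ℝ) → (I → ℝ) := fun x i => (1 - ε) * x i + ε / Fintype.card I
    have hq : Set.MapsTo q (stdSimplex ℝ I) S := by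
      intro x hx
      rw [hS]
      refine ⟨fun i => ?_, ?_⟩
      · have := mul_nonneg (by linarith : 0 ≤ 1 - ε) (hx.1 i)
        have : 0 < ε / Fintype.card I := by positivity
        simp only [q]; linarith
      · simp only [q]
        rw [Finset.sum_add_distrib, ← Finset.mul_sum, hx.2]
        simp
        field_simp
        ring
    have hqc : Continuous q := by fun_prop
    obtain ⟨z, hz, hfix⟩ := brouwer (Φ ∘ q) (hm.comp hq) (hcont.comp hqc.continuousOn hq)
    refine ⟨q z, hq hz, fun i => ?_⟩
    have h1 : Φ (q z) i = z i := congrFun hfix i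
    rw [h1]
    simp only [q]
    have h2 := hz.1 i
    have h3 : z i ≤ 1 := by
      rw [← hz.2]; exact Finset.single_le_sum (fun j _ => hz.1 j) (Finset.mem_univ i)
    have h4 : 1 / (Fintype.card I : ℝ) ≤ 1 := by
      rw [div_le_one hN]; exact_mod_cast Fintype.card_pos
    have h5 : 0 < 1 / (Fintype.card I : ℝ) := by positivity
    have h6 : z i - ((1 - ε) * z i + ε / Fintype.card I) = ε * (z i - 1 / Fintype.card I) := by ring
    rw [h6, abs_mul, abs_of_pos hε0]
    have h7 : |z i - 1 / (Fintype.card I : ℝ)| ≤ 1 := by rw [abs_le]; constructor <;> linarith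
    calc ε * _ ≤ ε * 1 := by gcongr
      _ ≤ 1 / ((n : ℝ) + 1) := by
        rw [mul_one, hε]
        apply one_div_le_one_div_of_le (by positivity) (by linarith)
  choose p hp hp2 using main
  refine ⟨p, hp, ?_⟩
  rw [tendsto_pi_nhds]
  intro i
  exact squeeze_zero_norm (fun n => hp2 n i) tendsto_one_div_add_atTop_nhds_zero_nat

end Scarf

namespace FF

section comb
variable {A : Type*} [Fintype A] [DecidableEq A]

/-- Sum of the lengths of the letters placed before `a`. -/
def cum {M : Type*} [AddCommMonoid M] (p : A → ℕ) (l : A → M) (a : A) : M :=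
  ∑ x, if p x < p a then l x else 0

/-- `p` is a bijection onto `{1,…,d}`. -/
def Val (p : A → ℕ) : Prop := Function.Injective p ∧ ∀ a, 1 ≤ p a ∧ p a ≤ Fintype.card A

theorem Val.image {p : A → ℕ} (h : Val p) :
    Finset.univ.image p = Finset.Icc 1 (Fintype.card A) := by
  apply Finset.eq_of_subset_of_card_le
  · intro k hk
    obtain ⟨a, -, rfl⟩ := Finset.mem_image.1 hk
    exact Finset.mem_Icc.2 (h.2 a)
  · rw [Finset.card_image_of_injective _ h.1]; simp

theorem Val.surj {p : A → ℕ} (h : Val p) {k : ℕ} (h1 : 1 ≤ k) (h2 : k ≤ Fintype.card A) :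
    ∃ a, p a = k := by
  have : k ∈ Finset.univ.image p := by rw [h.image]; exact Finset.mem_Icc.2 ⟨h1, h2⟩
  obtain ⟨a, -, e⟩ := Finset.mem_image.1 this
  exact ⟨a, e⟩

theorem val_iff {p : A → ℕ} : Set.BijOn p Set.univ (Set.Ico 1 (Fintype.card A + 1)) ↔ Val p := by
  constructor
  · rintro ⟨h1, h2, -⟩
    refine ⟨fun a b e => h2 (Set.mem_univ _) (Set.mem_univ _) e, fun a => ?_⟩
    have := h1 (Set.mem_univ a)
    rw [Set.mem_Ico] at this
    omega
  · intro h
    refine ⟨fun a _ => ?_, h.1.injOn, fun k hk => ?_⟩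
    · have := h.2 a
      rw [Set.mem_Ico]; omega
    · rw [Set.mem_Ico] at hk
      obtain ⟨a, ha⟩ := h.surj hk.1 (by omega)
      exact ⟨a, Set.mem_univ _, ha⟩

theorem cum_add {M : Type*} [AddCommMonoid M] {p : A → ℕ} (h : Function.Injective p) (l : A → M)
    (a : A) : cum p l a + l a = ∑ x, if p x ≤ p a then l x else 0 := by
  have : l a = ∑ x, if x = a then l x else 0 := by simp
  rw [this, cum, ← Finset.sum_add_distrib]
  refine Finset.sum_congr rfl fun x _ => ?_
  by_cases hx : x = a
  · subst hx; simp
  · have : p x ≠ p a := fun e => hx (h e)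
    by_cases h1 : p x < p a
    · simp [hx, h1, h1.le]
    · have : ¬ p x ≤ p a := by omega
      simp [hx, h1, this]

theorem cum_last {M : Type*} [AddCommMonoid M] {p : A → ℕ} (h : Val p) (l : A → M)
    {a : A} (ha : p a = Fintype.card A) : cum p l a + l a = ∑ x, l x := by
  rw [cum_add h.1]
  refine Finset.sum_congr rfl fun x _ => ?_
  rw [if_pos (by rw [ha]; exact (h.2 x).2)]

theorem cum_first {M : Type*} [AddCommMonoid M] {p : A → ℕ} (h : Val p) (l : A → M)
    {a : A} (ha : p a = 1) : cum p l a = 0 := by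
  refine Finset.sum_eq_zero fun x _ => ?_
  have := (h.2 x).1
  rw [if_neg (by omega)]

theorem cum_succ {M : Type*} [AddCommMonoid M] {p : A → ℕ} (h : Val p) (l : A → M)
    {a b : A} (hab : p b = p a + 1) : cum p l b = cum p l a + l a := by
  rw [cum_add h.1, cum]
  refine Finset.sum_congr rfl fun x _ => ?_
  congr 1
  rw [hab, Nat.lt_succ_iff]

theorem cum_add_le {p : A → ℕ} (h : Val p) {l : A → ℝ} (hl : ∀ a, 0 ≤ l a)
    {a b : A} (hab : p a < p b) : cum p l a + l a ≤ cum p l b := by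
  rw [cum_add h.1, cum]
  refine Finset.sum_le_sum fun x _ => ?_
  split_ifs with h1 h2 h2
  · exact le_rfl
  · omega
  · exact hl x
  · exact le_rfl

theorem cum_nonneg {p : A → ℕ} {l : A → ℝ} (hl : ∀ a, 0 ≤ l a) (a : A) : 0 ≤ cum p l a :=
  Finset.sum_nonneg fun x _ => by split_ifs; exacts [hl x, le_rfl]

theorem cum_add_le_sum {p : A → ℕ} (h : Val p) {l : A → ℝ} (hl : ∀ a, 0 ≤ l a) (a : A) :
    cum p l a + l a ≤ ∑ x, l x := by
  rw [cum_add h.1]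
  refine Finset.sum_le_sum fun x _ => ?_
  split_ifs with h1
  · exact le_rfl
  · exact hl x

theorem cum_partition {p : A → ℕ} (h : Val p) {l : A → ℝ} (hne : Nonempty A)
    {x : ℝ} (h0 : 0 ≤ x) (h1 : x < ∑ a, l a) : ∃ a, x ∈ Set.Ico (cum p l a) (cum p l a + l a) := by
  classical
  have hd : 1 ≤ Fintype.card A := Fintype.card_pos
  obtain ⟨a1, ha1⟩ := h.surj le_rfl hd
  obtain ⟨a, ha, hmax⟩ := Finset.exists_max_image (Finset.univ.filter (fun a => cum p l a ≤ x)) p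
    ⟨a1, by simp [cum_first h l ha1, h0]⟩
  have ha' : cum p l a ≤ x := (Finset.mem_filter.1 ha).2
  refine ⟨a, ha', ?_⟩
  by_contra hlt
  push Not at hlt
  by_cases hlast : p a = Fintype.card A
  · rw [cum_last h l hlast] at hlt; linarith
  · have := (h.2 a).2
    obtain ⟨b, hb⟩ := h.surj (k := p a + 1) (by omega) (by omega)
    have h2 := hmax b (by
      refine Finset.mem_filter.2 ⟨Finset.mem_univ _, ?_⟩
      rw [cum_succ h l hb]; exact hlt)
    omega

theorem cum_disj {p : A → ℕ} (h : Val p) {l : A → ℝ} (hl : ∀ a, 0 ≤ l a) {x : ℝ} {a b : A}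
    (ha : x ∈ Set.Ico (cum p l a) (cum p l a + l a))
    (hb : x ∈ Set.Ico (cum p l b) (cum p l b + l b)) : a = b := by
  by_contra hab
  have : p a ≠ p b := fun e => hab (h.1 e)
  rcases lt_or_gt_of_ne this with h1 | h1
  · have := cum_add_le h hl h1
    linarith [ha.2, hb.1]
  · have := cum_add_le h hl h1
    linarith [ha.1, hb.2]

theorem cum_cast (p : A → ℕ) (l : A → ℕ) (a : A) :
    cum p (fun x => (l x : ℝ)) a = ((cum p l a : ℕ) : ℝ) := by
  simp [cum]

/-- telescoping -/
theorem cum_tele {p : A → ℕ} (h : Val p) (l : A → ℕ) (X : ℕ → ℝ) (h0 : X 0 = 0) (a : A) :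
    cum p (fun x => X (cum p l x + l x) - X (cum p l x)) a = X (cum p l a) := by
  obtain ⟨k, hk⟩ : ∃ k, p a = k := ⟨_, rfl⟩
  induction k generalizing a with
  | zero => have := (h.2 a).1; omega
  | succ k ih =>
    by_cases hk0 : k = 0
    · rw [cum_first h _ (by omega), cum_first h _ (by omega), h0]
    · have := (h.2 a).2
      obtain ⟨b, hb⟩ := h.surj (k := k) (by omega) (by omega)
      rw [cum_succ h _ (a := b) (by omega), ih b hb, cum_succ h l (a := b) (b := a) (by omega)]
      ring

theorem sum_tele {p : A → ℕ} (h : Val p) (hne : Nonempty A) (l : A → ℕ) (X : ℕ → ℝ)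
    (h0 : X 0 = 0) : ∑ x, (X (cum p l x + l x) - X (cum p l x)) = X (∑ x, l x) := by
  have hd : 1 ≤ Fintype.card A := Fintype.card_pos
  obtain ⟨a, ha⟩ := h.surj hd le_rfl
  rw [← cum_last h _ ha, cum_tele h l X h0, ← cum_last h l ha]
  ring

theorem eq_of_cum_eq {p : A → ℕ} (h : Val p) {l l' : A → ℝ} (hc : ∀ a, cum p l a = cum p l' a)
    (hs : ∑ a, l a = ∑ a, l' a) : l = l' := by
  ext a
  by_cases hlast : p a = Fintype.card A
  · have h1 := cum_last h l hlast
    have h2 := cum_last h l' hlast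
    have := hc a
    linarith
  · have := (h.2 a).2
    obtain ⟨b, hb⟩ := h.surj (k := p a + 1) (by omega) (by omega)
    have h1 := cum_succ h l hb
    have h2 := cum_succ h l' hb
    have := hc a
    have := hc b
    linarith

/-- Rauzy move on the bottom positions. -/
def ctop (pb : A → ℕ) (w l : A) (x : A) : ℕ :=
  if x = l then pb w + 1 else if pb w < pb x then pb x + 1 else pb x

theorem ctop_val {pb : A → ℕ} (h : Val pb) {w l : A} (hl : pb l = Fintype.card A) (hwl : w ≠ l) :
    Val (ctop pb w l) := by
  have hlt : ∀ x, x ≠ l → pb x < Fintype.card A := fun x hx =>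
    lt_of_le_of_ne (h.2 x).2 (fun e => hx (h.1 (e.trans hl.symm)))
  refine ⟨fun x y hxy => ?_, fun x => ?_⟩
  · simp only [ctop] at hxy
    apply h.1
    by_cases hx : x = l <;> by_cases hy : y = l
    · rw [hx, hy]
    · rw [if_pos hx, if_neg hy] at hxy; split_ifs at hxy <;> omega
    · rw [if_neg hx, if_pos hy] at hxy; split_ifs at hxy <;> omega
    · rw [if_neg hx, if_neg hy] at hxy; split_ifs at hxy <;> omega
  · have h1 := h.2 x
    have h2 := hlt w hwl
    simp only [ctop]
    split_ifs with hx hy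
    · omega
    · have := hlt x hx; omega
    · omega

theorem cum_ctop {pb : A → ℕ} (h : Val pb) {w l : A} (hl : pb l = Fintype.card A) (hwl : w ≠ l)
    {lb lb' : A → ℝ} (h1 : ∀ x, x ≠ w → x ≠ l → lb' x = lb x) (h2 : lb' w + lb' l = lb w) :
    (∀ a, a ≠ l → cum (ctop pb w l) lb' a = cum pb lb a) ∧
      cum (ctop pb w l) lb' l = cum pb lb w + lb' w := by
  have hlt : ∀ x, x ≠ l → pb x < Fintype.card A := fun x hx =>
    lt_of_le_of_ne (h.2 x).2 (fun e => hx (h.1 (e.trans hl.symm)))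
  have hinj : ∀ x y, pb x = pb y → x = y := fun x y e => h.1 e
  constructor
  · intro a ha
    have hal := hlt a ha
    by_cases haw : pb w < pb a
    · have key : ∀ x, (if ctop pb w l x < ctop pb w l a then lb' x else 0) =
          (if pb x < pb a then lb x else 0) + ((if x = l then lb' l else 0) -
            (if x = w then lb' l else 0)) := by
        intro x
        by_cases hxl : x = l
        · subst hxl
          simp only [ctop, if_true, if_neg ha, if_pos haw, if_neg hwl.symm]
          rw [if_pos (by omega), if_neg (by omega)]; ring
        by_cases hxw : x = w
        · subst hxw
          simp only [ctop, if_neg hxl, if_neg ha, if_pos haw, lt_irrefl, if_false, if_true]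
          rw [if_pos (by omega)]; linarith
        · simp only [ctop, if_neg hxl, if_neg ha, if_pos haw, if_neg hxw, h1 x hxw hxl]
          have : (if pb w < pb x then pb x + 1 else pb x) < pb a + 1 ↔ pb x < pb a := by
            split_ifs with hh
            · omega
            · have : pb x ≠ pb w := fun e => hxw (hinj _ _ e)
              omega
          simp only [this]; ring
      rw [cum, cum, Finset.sum_congr rfl (fun x _ => key x), Finset.sum_add_distrib,
        Finset.sum_sub_distrib]
      simp
    · refine Finset.sum_congr rfl fun x _ => ?_
      simp only [ctop, if_neg ha, if_neg haw]
      by_cases hxl : x = l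
      · subst hxl
        rw [if_pos rfl, if_neg (by omega), if_neg (by omega)]
      · by_cases hxw : x = w
        · subst hxw
          rw [if_neg hxl, if_neg (lt_irrefl _), if_neg haw, if_neg haw]
        · rw [if_neg hxl, h1 x hxw hxl]
          congr 1
          split_ifs with hh
          · apply propext; omega
          · rfl
  · have key : ∀ x, (if ctop pb w l x < ctop pb w l l then lb' x else 0) =
        (if pb x < pb w then lb x else 0) + (if x = w then lb' w else 0) := by
      intro x
      by_cases hxl : x = l
      · subst hxl
        have := hlt w hwl
        rw [if_neg (lt_irrefl _), if_neg (by omega), if_neg hwl.symm]; simp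
      by_cases hxw : x = w
      · subst hxw
        simp only [ctop, if_neg hxl, if_true, lt_irrefl, if_false]
        rw [if_pos (by omega)]; simp
      · simp only [ctop, if_neg hxl, if_true, if_neg hxw, h1 x hxw hxl]
        have : (if pb w < pb x then pb x + 1 else pb x) < pb w + 1 ↔ pb x < pb w := by
          have : pb x ≠ pb w := fun e => hxw (hinj _ _ e)
          split_ifs with hh <;> omega
        simp only [this]; ring
    rw [cum, Finset.sum_congr rfl (fun x _ => key x), Finset.sum_add_distrib]
    simp [cum]

end comb
end FF

set_option linter.unusedSectionVars false

namespace FF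

/-- Relational version of a generalized interval exchange: the branches are given by graphs. -/
structure RS (A : Type*) where
  pt : A → ℕ
  pb : A → ℕ
  lt : A → ℝ
  lb : A → ℝ
  R : A → ℝ → ℝ → Prop

/-- The inverse map. -/
def RS.dual {A : Type*} (s : RS A) : RS A := ⟨s.pb, s.pt, s.lb, s.lt, fun a x y => s.R a y x⟩

theorem RS.dual_dual {A : Type*} (s : RS A) : s.dual.dual = s := rfl

section rs
variable {A : Type*} [Fintype A] [DecidableEq A]

def RS.ut (s : RS A) (a : A) : ℝ := cum s.pt s.lt a
def RS.ub (s : RS A) (a : A) : ℝ := cum s.pb s.lb a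

structure Ok (s : RS A) : Prop where
  vt : Val s.pt
  vb : Val s.pb
  plt : ∀ a, 0 < s.lt a
  plb : ∀ a, 0 < s.lb a
  sum : ∑ a, s.lt a = ∑ a, s.lb a
  mem : ∀ {a x y}, s.R a x y → (s.ut a ≤ x ∧ x < s.ut a + s.lt a) ∧
    (s.ub a ≤ y ∧ y < s.ub a + s.lb a)
  tot : ∀ {a x}, s.ut a ≤ x → x < s.ut a + s.lt a → ∃ y, s.R a x y
  sur : ∀ {a y}, s.ub a ≤ y → y < s.ub a + s.lb a → ∃ x, s.R a x y
  mono : ∀ {a x y x' y'}, s.R a x y → s.R a x' y' → (x < x' ↔ y < y')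

theorem Ok.dual {s : RS A} (h : Ok s) : Ok s.dual where
  vt := h.vb
  vb := h.vt
  plt := h.plb
  plb := h.plt
  sum := h.sum.symm
  mem := fun r => ⟨(h.mem r).2, (h.mem r).1⟩
  tot := fun h1 h2 => h.sur h1 h2
  sur := fun h1 h2 => h.tot h1 h2
  mono := fun r r' => (h.mono r r').symm

theorem Ok.le {s : RS A} (h : Ok s) {a x y x' y'} (r : s.R a x y) (r' : s.R a x' y') :
    x ≤ x' ↔ y ≤ y' := by
  have := h.mono r' r
  rw [← not_lt, ← not_lt, this]

theorem Ok.eq {s : RS A} (h : Ok s) {a x y x' y'} (r : s.R a x y) (r' : s.R a x' y') :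
    x = x' ↔ y = y' := by
  rw [le_antisymm_iff, le_antisymm_iff, h.le r r', h.le r' r]

theorem Ok.start {s : RS A} (h : Ok s) (a : A) : s.R a (s.ut a) (s.ub a) := by
  obtain ⟨y, hy⟩ := h.tot (a := a) le_rfl (by linarith [h.plt a])
  obtain ⟨x, hx⟩ := h.sur (a := a) le_rfl (by linarith [h.plb a])
  have h1 := (h.mem hx).1.1
  have h2 := (h.mem hy).2.1
  have h3 := (h.le hy hx).1 h1
  have : y = s.ub a := le_antisymm h3 h2
  rwa [this] at hy

/-- The top Rauzy move applies. -/
structure TopC (s : RS A) (w l : A) : Prop where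
  hw : s.pt w = Fintype.card A
  hl : s.pb l = Fintype.card A
  ne : w ≠ l
  lt : s.ut w < s.ub l

noncomputable def RS.y0 (s : RS A) (w l : A) : ℝ := Classical.epsilon (fun y => s.R w (s.ub l) y)

/-- The top Rauzy move. -/
noncomputable def RS.top (s : RS A) (w l : A) : RS A where
  pt := s.pt
  pb := ctop s.pb w l
  lt := Function.update s.lt w (s.lt w - s.lb l)
  lb := Function.update (Function.update s.lb w (s.y0 w l - s.ub w)) l
    (s.ub w + s.lb w - s.y0 w l)
  R := fun a x y => if a = l then ∃ z, s.R l x z ∧ s.R w z y else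
    if a = w then s.R w x y ∧ x < s.ub l else s.R a x y

noncomputable def RS.step (s : RS A) (b : Bool) (w l : A) : RS A :=
  if b then s.top w l else (s.dual.top w l).dual

def StepC (s : RS A) (b : Bool) (w l : A) : Prop :=
  if b then TopC s w l else TopC s.dual w l

theorem TopC.last_t {s : RS A} (h : Ok s) {w l : A} (c : TopC s w l) :
    s.ut w + s.lt w = ∑ a, s.lt a := cum_last h.vt _ c.hw

theorem TopC.last_b {s : RS A} (h : Ok s) {w l : A} (c : TopC s w l) :
    s.ub l + s.lb l = ∑ a, s.lt a := by rw [h.sum]; exact cum_last h.vb _ c.hl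

theorem TopC.y0_R {s : RS A} (h : Ok s) {w l : A} (c : TopC s w l) :
    s.R w (s.ub l) (s.y0 w l) := by
  have : ∃ y, s.R w (s.ub l) y := h.tot c.lt.le (by
    rw [c.last_t h, ← c.last_b h]; linarith [h.plb l])
  exact Classical.epsilon_spec this

theorem TopC.y0_lt {s : RS A} (h : Ok s) {w l : A} (c : TopC s w l) :
    s.ub w < s.y0 w l := (h.mono (h.start w) (c.y0_R h)).1 c.lt

theorem TopC.lt_y0 {s : RS A} (h : Ok s) {w l : A} (c : TopC s w l) :
    s.y0 w l < s.ub w + s.lb w := (h.mem (c.y0_R h)).2.2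

section topfacts
variable (s : RS A) (w l : A)
theorem top_lt_w : (s.top w l).lt w = s.lt w - s.lb l := by simp [RS.top]
theorem top_lt_ne {a : A} (ha : a ≠ w) : (s.top w l).lt a = s.lt a := by simp [RS.top, ha]
theorem top_lb_w (hwl : w ≠ l) : (s.top w l).lb w = s.y0 w l - s.ub w := by simp [RS.top, hwl]
theorem top_lb_l : (s.top w l).lb l = s.ub w + s.lb w - s.y0 w l := by simp [RS.top]
theorem top_lb_ne {a : A} (ha : a ≠ w) (hl : a ≠ l) : (s.top w l).lb a = s.lb a := by
  simp [RS.top, ha, hl]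
theorem top_R_l {x y : ℝ} : (s.top w l).R l x y ↔ ∃ z, s.R l x z ∧ s.R w z y := by simp [RS.top]
theorem top_R_w (hwl : w ≠ l) {x y : ℝ} : (s.top w l).R w x y ↔ s.R w x y ∧ x < s.ub l := by
  simp [RS.top, hwl]
theorem top_R_ne {a : A} (ha : a ≠ w) (hl : a ≠ l) {x y : ℝ} :
    (s.top w l).R a x y ↔ s.R a x y := by
  simp [RS.top, ha, hl]
end topfacts

theorem top_ub {s : RS A} (h : Ok s) {w l : A} (c : TopC s w l) :
    (∀ a, a ≠ l → (s.top w l).ub a = s.ub a) ∧ (s.top w l).ub l = s.y0 w l := by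
  have := cum_ctop h.vb c.hl c.ne (lb := s.lb) (lb' := (s.top w l).lb)
    (fun x h1 h2 => top_lb_ne s w l h1 h2) (by rw [top_lb_w s w l c.ne, top_lb_l]; ring)
  refine ⟨this.1, this.2.trans ?_⟩
  rw [top_lb_w s w l c.ne]; change s.ub w + _ = _; ring

theorem top_ut {s : RS A} (h : Ok s) {w l : A} (c : TopC s w l) (a : A) :
    (s.top w l).ut a = s.ut a := by
  refine Finset.sum_congr rfl fun x _ => ?_
  change (if s.pt x < s.pt a then _ else _) = _
  have := (h.vt.2 a).2
  have := c.hw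
  by_cases hx : x = w
  · subst hx
    rw [if_neg (by omega), if_neg (by omega)]
  · rw [top_lt_ne s w l hx]

theorem top_len {s : RS A} (h : Ok s) {w l : A} (c : TopC s w l) :
    ∑ a, (s.top w l).lt a = s.ub l := by
  have h1 : (s.top w l).ut w + (s.top w l).lt w = ∑ a, (s.top w l).lt a := cum_last h.vt _ c.hw
  rw [← h1, top_ut h c, top_lt_w]
  have h2 := c.last_t h
  have h3 := c.last_b h
  linarith

theorem sum_upd {f g : A → ℝ} {w l : A} (hwl : w ≠ l) (h1 : ∀ x, x ≠ w → x ≠ l → f x = g x) :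
    ∑ x, f x = ∑ x, g x + (f w - g w) + (f l - g l) := by
  have : ∀ x, f x = g x + ((if x = w then f w - g w else 0) + (if x = l then f l - g l else 0)) := by
    intro x
    by_cases hw : x = w
    · subst hw; simp [hwl]
    by_cases hl : x = l
    · subst hl; simp [hw]
    · simp [hw, hl, h1 x hw hl]
  rw [Finset.sum_congr rfl (fun x _ => this x), Finset.sum_add_distrib, Finset.sum_add_distrib]
  simp [add_assoc]

theorem Ok.top {s : RS A} (h : Ok s) {w l : A} (c : TopC s w l) : Ok (s.top w l) := by
  have e1 := c.last_t h
  have e2 := c.last_b h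
  have e3 := c.y0_R h
  have e4 := c.y0_lt h
  have e5 := c.lt_y0 h
  have c4 := c.lt
  obtain ⟨u1, u2⟩ := top_ub h c
  have ut := top_ut h c
  have mulw := (top_lt_w s w l)
  refine ⟨h.vt, ctop_val h.vb c.hl c.ne, ?_, ?_, ?_, ?_, ?_, ?_, ?_⟩
  · intro a
    by_cases ha : a = w
    · subst ha; rw [top_lt_w]; linarith
    · rw [top_lt_ne s w l ha]; exact h.plt a
  · intro a
    by_cases ha : a = w
    · subst ha; rw [top_lb_w s _ l c.ne]; linarith
    by_cases hl : a = l
    · subst hl; rw [top_lb_l]; linarith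
    · rw [top_lb_ne s w l ha hl]; exact h.plb a
  · rw [top_len h c, sum_upd c.ne (g := s.lb) (fun x h1 h2 => top_lb_ne s w l h1 h2),
      top_lb_w s _ l c.ne, top_lb_l, ← h.sum]; linarith
  · intro a x y r
    rw [ut]
    by_cases hl : a = l
    · subst hl
      obtain ⟨z, r1, r2⟩ := (top_R_l s w a).1 r
      rw [u2, top_lt_ne s w a c.ne.symm, top_lb_l]
      refine ⟨(h.mem r1).1, ?_, ?_⟩
      · exact (h.le e3 r2).1 (h.mem r1).2.1
      · have := (h.mem r2).2.2; linarith
    rw [u1 a hl]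
    by_cases ha : a = w
    · subst ha
      obtain ⟨r1, r2⟩ := (top_R_w s a l c.ne).1 r
      rw [top_lt_w, top_lb_w s a l c.ne]
      have h1 := (h.mem r1)
      have h2 := (h.mono r1 e3).1 r2
      refine ⟨⟨h1.1.1, by linarith⟩, h1.2.1, by linarith⟩
    · rw [top_R_ne s w l ha hl] at r
      rw [top_lt_ne s w l ha, top_lb_ne s w l ha hl]
      exact h.mem r
  · intro a x hx1 hx2
    rw [ut] at hx1 hx2
    by_cases hl : a = l
    · subst hl
      rw [top_lt_ne s w a c.ne.symm] at hx2
      obtain ⟨z, hz⟩ := h.tot hx1 hx2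
      have hz' := (h.mem hz).2
      obtain ⟨y, hy⟩ := h.tot (a := w) (x := z) (by linarith) (by linarith)
      exact ⟨y, (top_R_l s w a).2 ⟨z, hz, hy⟩⟩
    by_cases ha : a = w
    · subst ha
      rw [top_lt_w] at hx2
      obtain ⟨y, hy⟩ := h.tot (a := a) (x := x) hx1 (by linarith [h.plb l])
      exact ⟨y, (top_R_w s a l c.ne).2 ⟨hy, by linarith⟩⟩
    · rw [top_lt_ne s w l ha] at hx2
      obtain ⟨y, hy⟩ := h.tot hx1 hx2
      exact ⟨y, (top_R_ne s w l ha hl).2 hy⟩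
  · intro a y hy1 hy2
    by_cases hl : a = l
    · subst hl
      rw [u2] at hy1 hy2
      rw [top_lb_l] at hy2
      obtain ⟨z, hz⟩ := h.sur (a := w) (y := y) (by linarith) (by linarith)
      have hz1 := (h.le e3 hz).2 hy1
      have hz2 := (h.mem hz).1.2
      obtain ⟨x, hx⟩ := h.sur (a := a) (y := z) hz1 (by linarith)
      exact ⟨x, (top_R_l s w a).2 ⟨z, hx, hz⟩⟩
    rw [u1 a hl] at hy1 hy2
    by_cases ha : a = w
    · subst ha
      rw [top_lb_w s a l c.ne] at hy2
      obtain ⟨x, hx⟩ := h.sur (a := a) (y := y) hy1 (by linarith)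
      exact ⟨x, (top_R_w s a l c.ne).2 ⟨hx, (h.mono hx e3).2 (by linarith)⟩⟩
    · rw [top_lb_ne s w l ha hl] at hy2
      obtain ⟨x, hx⟩ := h.sur hy1 hy2
      exact ⟨x, (top_R_ne s w l ha hl).2 hx⟩
  · intro a x y x' y' r r'
    by_cases hl : a = l
    · subst hl
      obtain ⟨z, r1, r2⟩ := (top_R_l s w a).1 r
      obtain ⟨z', r1', r2'⟩ := (top_R_l s w a).1 r'
      rw [h.mono r1 r1', h.mono r2 r2']
    by_cases ha : a = w
    · subst ha
      exact h.mono ((top_R_w s a l c.ne).1 r).1 ((top_R_w s a l c.ne).1 r').1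
    · rw [top_R_ne s w l ha hl] at r r'
      exact h.mono r r'

theorem Ok.step {s : RS A} (h : Ok s) {b : Bool} {w l : A} (c : StepC s b w l) :
    Ok (s.step b w l) := by
  cases b
  · exact (h.dual.top c).dual
  · exact h.top c

/-- Induction principle for self-dual predicates. -/
theorem step_ind (P : RS A → Prop) (hd : ∀ s, P s → P s.dual)
    (ht : ∀ s w l, Ok s → TopC s w l → P s → P (s.top w l))
    {s : RS A} (h : Ok s) {b : Bool} {w l : A} (c : StepC s b w l) (p : P s) :
    P (s.step b w l) := by
  cases b
  · exact hd _ (ht _ w l h.dual c (hd _ p))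
  · exact ht _ w l h c p

/-- Conversion from a `GState`. -/
noncomputable def ofG (g : GState A) : RS A :=
  ⟨g.pit, g.pib, g.lt, g.lb, fun a x y => x ∈ g.Itv a ∧ y = g.f x⟩

noncomputable def toG (s : RS A) : GState A :=
  ⟨s.pt, s.pb, s.lt, s.lb, fun x => Classical.epsilon (fun y => ∃ a, s.R a x y)⟩

theorem ut_ofG (g : GState A) (a : A) : (ofG g).ut a = g.ut a := by
  rw [GState.ut, Finset.sum_filter]; rfl

theorem ub_ofG (g : GState A) (a : A) : (ofG g).ub a = g.ub a := by
  rw [GState.ub, Finset.sum_filter]; rfl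

theorem ofG_ok {g : GState A} (h : g.IsGIET) : Ok (ofG g) := by
  obtain ⟨h1, h2, h3, h4, h5, h6⟩ := h
  refine ⟨val_iff.1 h1, val_iff.1 h2, h3, h4, h5, ?_, ?_, ?_, ?_⟩
  · rintro a x y ⟨hx, rfl⟩
    rw [ut_ofG, ub_ofG]
    exact ⟨hx, (h6 a).1.mapsTo hx⟩
  · intro a x hx1 hx2
    rw [ut_ofG] at hx1 hx2
    exact ⟨_, ⟨hx1, hx2⟩, rfl⟩
  · intro a y hy1 hy2
    rw [ub_ofG] at hy1 hy2
    obtain ⟨x, hx, e⟩ := (h6 a).1.surjOn ⟨hy1, hy2⟩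
    exact ⟨x, hx, e.symm⟩
  · rintro a x y x' y' ⟨hx, rfl⟩ ⟨hx', rfl⟩
    exact ((h6 a).2.1.lt_iff_lt hx hx').symm

theorem ofG_toG {s : RS A} (h : Ok s) : ofG (toG s) = s := by
  have key : ∀ {a x y}, s.R a x y → (toG s).f x = y := by
    intro a x y r
    have : ∃ y, ∃ a, s.R a x y := ⟨y, a, r⟩
    obtain ⟨b, hb⟩ := Classical.epsilon_spec this
    have hab : a = b := cum_disj h.vt (fun a => (h.plt a).le) (h.mem r).1 (h.mem hb).1
    subst hab
    exact (h.eq hb r).1 rfl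
  have hR : (ofG (toG s)).R = s.R := by
    ext a x y
    have hI : (toG s).Itv a = Set.Ico (s.ut a) (s.ut a + s.lt a) := by
      rw [GState.Itv, ← ut_ofG]; rfl
    change (x ∈ (toG s).Itv a ∧ y = (toG s).f x) ↔ _
    rw [hI]
    constructor
    · rintro ⟨h1, rfl⟩
      obtain ⟨y, hy⟩ := h.tot h1.1 h1.2
      rwa [key hy]
    · intro r
      exact ⟨(h.mem r).1, (key r).symm⟩
  change RS.mk _ _ _ _ (ofG (toG s)).R = _
  rw [hR]
  rfl

theorem isGIET_of_ok {g : GState A} (h : Ok (ofG g)) : g.IsGIET := by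
  refine ⟨val_iff.2 h.vt, val_iff.2 h.vb, h.plt, h.plb, h.sum, fun a => ?_⟩
  have hR : ∀ x ∈ g.Itv a, (ofG g).R a x (g.f x) := fun x hx => ⟨hx, rfl⟩
  have hb : Set.BijOn g.f (g.Itv a) (g.Ibv a) := by
    refine ⟨fun x hx => ?_, fun x hx x' hx' e => ?_, fun y hy => ?_⟩
    · have := (h.mem (hR x hx)).2
      rw [ub_ofG] at this
      exact this
    · exact (h.eq (hR x hx) (hR x' hx')).2 e
    · obtain ⟨x, hx, e⟩ := h.sur (a := a) (y := y) (by rw [ub_ofG]; exact hy.1)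
        (by rw [ub_ofG]; exact hy.2)
      exact ⟨x, hx, e.symm⟩
  have hm : StrictMonoOn g.f (g.Itv a) := fun x hx x' hx' hlt => (h.mono (hR x hx) (hR x' hx')).1 hlt
  refine ⟨hb, hm, ?_⟩
  have o1 : (g.Itv a).OrdConnected := Set.ordConnected_Ico
  have o2 : (g.f '' (g.Itv a)).OrdConnected := by rw [hb.image_eq]; exact Set.ordConnected_Ico
  rw [continuousOn_iff_continuous_domRestrict]
  have : (g.Itv a).domRestrict g.f = Subtype.val ∘ (hm.orderIso g.f (g.Itv a)) := by
    ext x; rfl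
  rw [this]
  exact continuous_subtype_val.comp (OrderIso.continuous _)

theorem rauzyStep_of {g g' : GState A} {b : Bool} {w l : A} (h : Ok (ofG g))
    (c : StepC (ofG g) b w l) (e : ofG g' = (ofG g).step b w l) : g.RauzyStep g' w l := by
  have h' : Ok (ofG g') := by rw [e]; exact h.step c
  have hne : Nonempty A := ⟨w⟩
  have uniq : ∀ {a x y}, (ofG g).R a x y → g.f x = y := fun r => r.2.symm
  have uniq' : ∀ {a x y}, (ofG g').R a x y → g'.f x = y := fun r => r.2.symm
  refine ⟨isGIET_of_ok h', ?_, ?_⟩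
  · intro x hx
    obtain ⟨a, ha⟩ := cum_partition h'.vt hne hx.1 hx.2
    obtain ⟨y, hy⟩ := h'.tot ha.1 ha.2
    rw [uniq' hy]
    have hxlen := hx.2
    have hlen : g'.len = ∑ a, (ofG g').lt a := rfl
    cases b
    · -- bottom
      replace e : ofG g' = ((ofG g).dual.top w l).dual := e
      replace c : TopC (ofG g).dual w l := c
      have hL : g'.len = (ofG g).ut l := by
        rw [hlen, h'.sum, e]; exact top_len h.dual c
      rw [hL]
      rw [e] at hy
      change ((ofG g).dual.top w l).R a y x at hy
      by_cases hl : a = l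
      · subst hl
        obtain ⟨z, r1, r2⟩ := (top_R_l _ _ _).1 hy
        change (ofG g).R a z y at r1
        change (ofG g).R w x z at r2
        rw [uniq r2, uniq r1, if_pos (h.mem r1).1.1]
      by_cases haw : a = w
      · subst haw
        obtain ⟨r1, r2⟩ := (top_R_w _ _ _ c.ne).1 hy
        change (ofG g).R a x y at r1
        change y < (ofG g).ut l at r2
        rw [uniq r1, if_neg (not_le.2 r2)]
      · rw [top_R_ne _ _ _ haw hl] at hy
        change (ofG g).R a x y at hy
        rw [uniq hy, if_neg]
        have h1 := (h.mem hy).2.2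
        have h2 : (ofG g).ub a + (ofG g).lb a ≤ (ofG g).ub w := cum_add_le h.vb (fun a => (h.plb a).le)
          (by
            have h3 : (ofG g).pb w = _ := c.hw
            rw [h3]
            exact lt_of_le_of_ne (h.vb.2 a).2 (fun e => haw (h.vb.1 (e.trans h3.symm))))
        have h3 : (ofG g).ub w < (ofG g).ut l := c.lt
        linarith
    · -- top
      replace e : ofG g' = (ofG g).top w l := e
      replace c : TopC (ofG g) w l := c
      have hL : g'.len = (ofG g).ub l := by
        rw [hlen, e]; exact top_len h c
      rw [hL]
      rw [e] at hy
      by_cases hl : a = l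
      · subst hl
        obtain ⟨z, r1, r2⟩ := (top_R_l _ _ _).1 hy
        rw [uniq r1, uniq r2, if_pos (h.mem r1).2.1]
      have hr : (ofG g).R a x y := by
        by_cases haw : a = w
        · subst haw
          exact ((top_R_w _ _ _ c.ne).1 hy).1
        · exact (top_R_ne _ _ _ haw hl).1 hy
      rw [uniq hr, if_neg]
      have h1 := (h.mem hr).2.2
      have h2 : (ofG g).ub a + (ofG g).lb a ≤ (ofG g).ub l := cum_add_le h.vb (fun a => (h.plb a).le)
        (by
          rw [c.hl]
          exact lt_of_le_of_ne (h.vb.2 a).2 (fun e => hl (h.vb.1 (e.trans c.hl.symm))))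
      linarith
  · have hlen : g'.len = ∑ a, (ofG g').lt a := rfl
    cases b
    · replace e : ofG g' = ((ofG g).dual.top w l).dual := e
      replace c : TopC (ofG g).dual w l := c
      have hpt : g'.pit = ctop g.pit w l := congrArg RS.pt e
      have hpb : g'.pib = g.pib := congrArg RS.pb e
      have hlb : g'.lb = ((ofG g).dual.top w l).lt := congrArg RS.lb e
      refine ⟨l, w, c.hl, c.hw, Or.inr ⟨?_, rfl, rfl, ?_, hpb, ?_, ?_, ?_, ?_, ?_⟩⟩
      · rw [← ut_ofG, ← ub_ofG]; exact c.lt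
      · rw [hlen, h'.sum, e, ← ut_ofG]; exact top_len h.dual c
      · intro x hx
        rw [hpt, ctop, if_neg, if_neg (by omega)]
        rintro rfl
        have h1 : g.pit x = _ := c.hl
        have h2 : g.pit w ≤ _ := (h.vt.2 w).2
        exact c.ne (h.vt.1 (by change g.pit w = g.pit x; omega))
      · rw [hpt, ctop, if_pos rfl]
      · intro x h1 h2
        rw [hpt, ctop, if_neg h1, if_pos h2]
      · intro x hx
        rw [hlb, top_lt_ne _ _ _ hx]; rfl
      · rw [hlb, top_lt_w]; rfl
    · replace e : ofG g' = (ofG g).top w l := e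
      replace c : TopC (ofG g) w l := c
      have hpt : g'.pib = ctop g.pib w l := congrArg RS.pb e
      have hpb : g'.pit = g.pit := congrArg RS.pt e
      have hlb : g'.lt = ((ofG g).top w l).lt := congrArg RS.lt e
      refine ⟨w, l, c.hw, c.hl, Or.inl ⟨?_, rfl, rfl, ?_, hpb, ?_, ?_, ?_, ?_, ?_⟩⟩
      · rw [← ut_ofG, ← ub_ofG]; exact c.lt
      · rw [hlen, e, ← ub_ofG]; exact top_len h c
      · intro x hx
        rw [hpt, ctop, if_neg, if_neg (by omega)]
        rintro rfl
        have h1 : g.pib x = _ := c.hl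
        have h2 : g.pib w ≤ _ := (h.vb.2 w).2
        exact c.ne (h.vb.1 (by change g.pib w = g.pib x; omega))
      · rw [hpt, ctop, if_pos rfl]
      · intro x h1 h2
        rw [hpt, ctop, if_neg h1, if_pos h2]
      · intro x hx
        rw [hlb, top_lt_ne _ _ _ hx]; rfl
      · rw [hlb, top_lt_w]; rfl

end rs
end FF

set_option linter.unusedSectionVars false

namespace FF

section shadow
variable {A : Type*} [Fintype A] [DecidableEq A]

structure Shadow (s s' : RS A) (φ : ℝ → ℝ) (X : Set ℝ) : Prop where
  pt : s'.pt = s.pt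
  pb : s'.pb = s.pb
  ut : ∀ a, s.ut a ∈ X ∧ φ (s.ut a) = s'.ut a
  ub : ∀ a, s.ub a ∈ X ∧ φ (s.ub a) = s'.ub a
  inv : ∀ {a x y}, s.R a x y → (x ∈ X ↔ y ∈ X)
  map : ∀ {a x y}, s.R a x y → x ∈ X → s'.R a (φ x) (φ y)
  mono : StrictMonoOn φ X

theorem Shadow.dual {s s' : RS A} {φ : ℝ → ℝ} {X : Set ℝ} (h : Shadow s s' φ X) :
    Shadow s.dual s'.dual φ X where
  pt := h.pb
  pb := h.pt
  ut := h.ub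
  ub := h.ut
  inv := fun r => (h.inv r).symm
  map := fun r hx => h.map r ((h.inv r).2 hx)
  mono := h.mono

theorem Shadow.topC {s s' : RS A} {φ : ℝ → ℝ} {X : Set ℝ} (h : Shadow s s' φ X) {w l : A}
    (c : TopC s w l) : TopC s' w l where
  hw := by rw [h.pt]; exact c.hw
  hl := by rw [h.pb]; exact c.hl
  ne := c.ne
  lt := by
    rw [← (h.ut w).2, ← (h.ub l).2]
    exact h.mono (h.ut w).1 (h.ub l).1 c.lt

theorem Shadow.top {s s' : RS A} {φ : ℝ → ℝ} {X : Set ℝ} (h : Shadow s s' φ X) {w l : A}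
    (ok : Ok s) (ok' : Ok s') (c : TopC s w l) : Shadow (s.top w l) (s'.top w l) φ X := by
  have c' := h.topC c
  have ut1 := top_ut ok c
  have ut2 := top_ut ok' c'
  obtain ⟨v1, v2⟩ := top_ub ok c
  obtain ⟨v1', v2'⟩ := top_ub ok' c'
  have e := c.y0_R ok
  have e' := c'.y0_R ok'
  have hy0 : s.y0 w l ∈ X := (h.inv e).1 (h.ub l).1
  have hy0' : φ (s.y0 w l) = s'.y0 w l := by
    have := h.map e (h.ub l).1
    rw [(h.ub l).2] at this
    exact (ok'.eq this e').1 rfl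
  refine ⟨h.pt, by simp only [RS.top]; rw [h.pb], ?_, ?_, ?_, ?_, h.mono⟩
  · intro a; rw [ut1, ut2]; exact h.ut a
  · intro a
    by_cases ha : a = l
    · subst ha; rw [v2, v2']; exact ⟨hy0, hy0'⟩
    · rw [v1 a ha, v1' a ha]; exact h.ub a
  · intro a x y r
    by_cases hl : a = l
    · subst hl
      obtain ⟨z, r1, r2⟩ := (top_R_l _ _ _).1 r
      rw [h.inv r1, h.inv r2]
    by_cases ha : a = w
    · subst ha
      exact h.inv ((top_R_w _ _ _ c.ne).1 r).1
    · exact h.inv ((top_R_ne _ _ _ ha hl).1 r)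
  · intro a x y r hx
    by_cases hl : a = l
    · subst hl
      obtain ⟨z, r1, r2⟩ := (top_R_l _ _ _).1 r
      exact (top_R_l _ _ _).2 ⟨φ z, h.map r1 hx, h.map r2 ((h.inv r1).1 hx)⟩
    by_cases ha : a = w
    · subst ha
      obtain ⟨r1, r2⟩ := (top_R_w _ _ _ c.ne).1 r
      refine (top_R_w _ _ _ c.ne).2 ⟨h.map r1 hx, ?_⟩
      rw [← (h.ub l).2]
      exact h.mono hx (h.ub l).1 r2
    · exact (top_R_ne _ _ _ ha hl).2 (h.map ((top_R_ne _ _ _ ha hl).1 r) hx)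

theorem Shadow.stepC {s s' : RS A} {φ : ℝ → ℝ} {X : Set ℝ} (h : Shadow s s' φ X) {b : Bool}
    {w l : A} (c : StepC s b w l) : StepC s' b w l := by
  cases b
  · exact h.dual.topC c
  · exact h.topC c

theorem Shadow.step {s s' : RS A} {φ : ℝ → ℝ} {X : Set ℝ} (h : Shadow s s' φ X) {b : Bool}
    {w l : A} (ok : Ok s) (ok' : Ok s') (c : StepC s b w l) :
    Shadow (s.step b w l) (s'.step b w l) φ X := by
  cases b
  · exact (h.dual.top ok.dual ok'.dual c).dual
  · exact h.top ok ok' c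

/-- `s` follows the path from time `k` on for `n` steps. -/
def Follow (b : ℕ → Bool) (w l : ℕ → A) : ℕ → RS A → ℕ → Prop
  | _, _, 0 => True
  | k, s, n + 1 => StepC s (b k) (w k) (l k) ∧ Follow b w l (k + 1) (s.step (b k) (w k) (l k)) n

noncomputable def run (b : ℕ → Bool) (w l : ℕ → A) (s : RS A) : ℕ → RS A
  | 0 => s
  | k + 1 => (run b w l s k).step (b k) (w k) (l k)

theorem Shadow.follow {b : ℕ → Bool} {w l : ℕ → A} {φ : ℝ → ℝ} {X : Set ℝ} {n : ℕ} :
    ∀ {k : ℕ} {s s' : RS A} (_ : Shadow s s' φ X) (_ : Ok s) (_ : Ok s')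
    (_ : Follow b w l k s n), Follow b w l k s' n := by
  induction n with
  | zero => intros; trivial
  | succ n ih =>
    rintro k s s' h ok ok' ⟨c, f⟩
    exact ⟨h.stepC c, ih (h.step ok ok' c) (ok.step c) (ok'.step (h.stepC c)) f⟩

theorem follow_run {b : ℕ → Bool} {w l : ℕ → A} {s : RS A} {n : ℕ} :
    ∀ {k : ℕ}, Follow b w l k (run b w l s k) n → ∀ j, k ≤ j → j < k + n →
      StepC (run b w l s j) (b j) (w j) (l j) := by
  induction n with
  | zero => intro k _ j h1 h2; omega
  | succ n ih =>
    rintro k ⟨c, f⟩ j h1 h2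
    rcases h1.eq_or_lt with rfl | h1
    · exact c
    · exact ih (k := k + 1) f j h1 (by omega)

theorem run_ok {b : ℕ → Bool} {w l : ℕ → A} {s : RS A} (h : Ok s) {k : ℕ}
    (c : ∀ j < k, StepC (run b w l s j) (b j) (w j) (l j)) : Ok (run b w l s k) := by
  induction k with
  | zero => exact h
  | succ k ih => exact (ih fun j hj => c j (by omega)).step (c k (by omega))

/-- Interval exchange with given lengths. -/
def iet (pt pb : A → ℕ) (lam : A → ℝ) : RS A :=
  ⟨pt, pb, lam, lam, fun a x y => (cum pt lam a ≤ x ∧ x < cum pt lam a + lam a) ∧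
    y = x - cum pt lam a + cum pb lam a⟩

theorem iet_dual (pt pb : A → ℕ) (lam : A → ℝ) : (iet pt pb lam).dual = iet pb pt lam := by
  have : (iet pt pb lam).dual.R = (iet pb pt lam).R := by
    ext a y x
    simp only [RS.dual, iet]
    constructor
    · rintro ⟨⟨h1, h2⟩, rfl⟩
      exact ⟨⟨by linarith, by linarith⟩, by ring⟩
    · rintro ⟨⟨h1, h2⟩, rfl⟩
      exact ⟨⟨by linarith, by linarith⟩, by ring⟩
  change RS.mk _ _ _ _ (iet pt pb lam).dual.R = _
  rw [this]; rfl

theorem iet_ok {pt pb : A → ℕ} {lam : A → ℝ} (h1 : Val pt) (h2 : Val pb) (hp : ∀ a, 0 < lam a) :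
    Ok (iet pt pb lam) where
  vt := h1
  vb := h2
  plt := hp
  plb := hp
  sum := rfl
  mem := by
    rintro a x y ⟨⟨h1, h2⟩, rfl⟩
    simp only [RS.ut, RS.ub, iet]
    exact ⟨⟨h1, h2⟩, by linarith, by linarith⟩
  tot := fun h1 h2 => ⟨_, ⟨h1, h2⟩, rfl⟩
  sur := by
    intro a y h1 h2
    simp only [RS.ub, iet] at h1 h2
    refine ⟨y - cum pb lam a + cum pt lam a, ⟨by linarith, by linarith⟩, by ring⟩
  mono := by
    rintro a x y x' y' ⟨-, rfl⟩ ⟨-, rfl⟩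
    constructor <;> intro h <;> linarith

theorem iet_topC {pt pb : A → ℕ} {lam : A → ℝ} (h1 : Val pt) (h2 : Val pb) {w l : A}
    (hw : pt w = Fintype.card A) (hl : pb l = Fintype.card A) (hwl : w ≠ l)
    (hlam : lam l < lam w) : TopC (iet pt pb lam) w l := by
  refine ⟨hw, hl, hwl, ?_⟩
  have e1 := cum_last h1 lam hw
  have e2 := cum_last h2 lam hl
  change cum pt lam w < cum pb lam l
  linarith

theorem iet_top {pt pb : A → ℕ} {lam : A → ℝ} (h1 : Val pt) (h2 : Val pb) (hp : ∀ a, 0 < lam a)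
    {w l : A} (c : TopC (iet pt pb lam) w l) :
    (iet pt pb lam).top w l = iet pt (ctop pb w l) (Function.update lam w (lam w - lam l)) := by
  have ok := iet_ok h1 h2 hp
  have e1 : cum pt lam w + lam w = _ := cum_last h1 lam c.hw
  have e2 : cum pb lam l + lam l = _ := cum_last h2 lam c.hl
  have hy := (c.y0_R ok).2
  change RS.y0 _ w l = cum pb lam l - cum pt lam w + cum pb lam w at hy
  have hlb : ((iet pt pb lam).top w l).lb = Function.update lam w (lam w - lam l) := by
    ext a
    by_cases ha : a = w
    · subst ha
      rw [top_lb_w _ _ _ c.ne, hy, Function.update_self]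
      change _ - cum pb lam a = _
      linarith
    rw [Function.update_of_ne ha]
    by_cases hl : a = l
    · subst hl
      rw [top_lb_l, hy]
      change cum pb lam w + lam w - _ = _
      linarith
    · rw [top_lb_ne _ _ _ ha hl]; rfl
  have hut : ∀ a, cum pt (Function.update lam w (lam w - lam l)) a = cum pt lam a := top_ut ok c
  obtain ⟨hub1, hub2⟩ := top_ub ok c
  simp only [RS.ub] at hub1 hub2
  rw [hlb] at hub1 hub2
  have hub1' : ∀ a, a ≠ l → cum (ctop pb w l) (Function.update lam w (lam w - lam l)) a =
    cum pb lam a := hub1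
  have hub2' : cum (ctop pb w l) (Function.update lam w (lam w - lam l)) l =
    cum pb lam l - cum pt lam w + cum pb lam w := hub2.trans hy
  have hlt : ∀ a, a ≠ l → pb a < pb l := fun a ha => by
    have h3 : pb l = _ := c.hl
    rw [h3]
    exact lt_of_le_of_ne (h2.2 a).2 (fun e => ha (h2.1 (e.trans h3.symm)))
  have hR : ((iet pt pb lam).top w l).R =
      (iet pt (ctop pb w l) (Function.update lam w (lam w - lam l))).R := by
    ext a x y
    simp only [iet]
    rw [hut]
    by_cases hl : a = l
    · subst hl
      rw [top_R_l, hub2', Function.update_of_ne c.ne.symm]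
      simp only
      have c4 : cum pt lam w < cum pb lam a := c.lt
      constructor
      · rintro ⟨z, ⟨h3, rfl⟩, h4, rfl⟩
        exact ⟨h3, by ring⟩
      · rintro ⟨h3, rfl⟩
        refine ⟨_, ⟨h3, rfl⟩, ⟨by linarith, by linarith⟩, by ring⟩
    by_cases ha : a = w
    · subst ha
      rw [top_R_w _ _ _ c.ne, hub1' _ hl, Function.update_self]
      simp only [RS.ub]
      constructor
      · rintro ⟨⟨h3, rfl⟩, h4⟩
        exact ⟨⟨h3.1, by linarith⟩, rfl⟩
      · rintro ⟨h3, rfl⟩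
        exact ⟨⟨⟨h3.1, by linarith [hp l]⟩, rfl⟩, by linarith⟩
    · rw [top_R_ne _ _ _ ha hl, hub1' _ hl, Function.update_of_ne ha]
  change RS.mk _ _ _ ((iet pt pb lam).top w l).lb ((iet pt pb lam).top w l).R = _
  rw [hR, hlb]
  rfl

/-- Natural points stay natural. -/
def Intg (s : RS A) : Prop := ∀ a x y, s.R a x y →
  (x ∈ Set.range (Nat.cast : ℕ → ℝ) ↔ y ∈ Set.range (Nat.cast : ℕ → ℝ))

/-- Transitivity on natural points. -/
def Trans (s : RS A) : Prop := ∀ m n : ℕ, (m : ℝ) < ∑ a, s.lt a → (n : ℝ) < ∑ a, s.lt a →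
  Relation.ReflTransGen (fun x y : ℕ => ∃ a, s.R a x y) m n

theorem Trans.dual {s : RS A} (ok : Ok s) (h : Trans s) : Trans s.dual := by
  intro m n hm hn
  have hm' : (m : ℝ) < ∑ a, s.lt a := by rw [ok.sum]; exact hm
  have hn' : (n : ℝ) < ∑ a, s.lt a := by rw [ok.sum]; exact hn
  have := h n m hn' hm'
  exact Relation.ReflTransGen.swap _ _ this

theorem Intg.dual {s : RS A} (h : Intg s) : Intg s.dual := fun a x y r => (h a y x r).symm

theorem trans_of_top {s : RS A} (ok : Ok s) {w l : A} (c : TopC s w l) (hi : Intg s)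
    (h : Trans (s.top w l)) : Trans s := by
  have hL := top_len ok c
  have e1 := c.last_t ok
  have e2 := c.last_b ok
  have c4 := c.lt
  have hsub : ∀ m n : ℕ, (∃ a, (s.top w l).R a m n) →
      Relation.ReflTransGen (fun x y : ℕ => ∃ a, s.R a x y) m n := by
    rintro m n ⟨a, r⟩
    by_cases hl : a = l
    · subst hl
      obtain ⟨z, r1, r2⟩ := (top_R_l _ _ _).1 r
      obtain ⟨k, rfl⟩ := (hi _ _ _ r1).1 ⟨m, rfl⟩
      exact (Relation.ReflTransGen.single ⟨a, r1⟩).tail ⟨w, r2⟩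
    by_cases ha : a = w
    · subst ha
      exact Relation.ReflTransGen.single ⟨a, ((top_R_w _ _ _ c.ne).1 r).1⟩
    · exact Relation.ReflTransGen.single ⟨a, (top_R_ne _ _ _ ha hl).1 r⟩
  have hbase : ∀ m n : ℕ, (m : ℝ) < s.ub l → (n : ℝ) < s.ub l →
      Relation.ReflTransGen (fun x y : ℕ => ∃ a, s.R a x y) m n := by
    intro m n hm hn
    have := h m n (by rw [hL]; exact hm) (by rw [hL]; exact hn)
    clear hm hn
    induction this with
    | refl => exact .refl
    | tail _ h2 ih => exact ih.trans (hsub _ _ h2)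
  have hout : ∀ m : ℕ, (m : ℝ) < ∑ a, s.lt a → ∃ m' : ℕ, (m' : ℝ) < s.ub l ∧
      Relation.ReflTransGen (fun x y : ℕ => ∃ a, s.R a x y) m m' := by
    intro m hm
    by_cases hlt : (m : ℝ) < s.ub l
    · exact ⟨m, hlt, .refl⟩
    push Not at hlt
    obtain ⟨y, hy⟩ := ok.tot (a := w) (x := m) (by linarith) (by linarith)
    obtain ⟨k, rfl⟩ := (hi _ _ _ hy).1 ⟨m, rfl⟩
    refine ⟨k, ?_, .single ⟨w, hy⟩⟩
    have h1 := (ok.mem hy).2.2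
    have h2 : s.ub w + s.lb w ≤ s.ub l := cum_add_le ok.vb (fun a => (ok.plb a).le)
      (by rw [c.hl]; exact lt_of_le_of_ne (ok.vb.2 w).2 (fun e => c.ne (ok.vb.1 (e.trans c.hl.symm))))
    linarith
  have hin : ∀ n : ℕ, (n : ℝ) < ∑ a, s.lt a → ∃ n' : ℕ, (n' : ℝ) < s.ub l ∧
      Relation.ReflTransGen (fun x y : ℕ => ∃ a, s.R a x y) n' n := by
    intro n hn
    by_cases hlt : (n : ℝ) < s.ub l
    · exact ⟨n, hlt, .refl⟩
    push Not at hlt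
    obtain ⟨x, hx⟩ := ok.sur (a := l) (y := n) (by linarith) (by linarith)
    obtain ⟨k, rfl⟩ := (hi _ _ _ hx).2 ⟨n, rfl⟩
    refine ⟨k, ?_, .single ⟨l, hx⟩⟩
    have h1 := (ok.mem hx).1.2
    have h2 : s.ut l + s.lt l ≤ s.ut w := cum_add_le ok.vt (fun a => (ok.plt a).le)
      (by rw [c.hw]; exact lt_of_le_of_ne (ok.vt.2 l).2 (fun e => c.ne.symm (ok.vt.1 (e.trans c.hw.symm))))
    linarith
  intro m n hm hn
  obtain ⟨m', h1, h2⟩ := hout m hm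
  obtain ⟨n', h3, h4⟩ := hin n hn
  exact h2.trans ((hbase m' n' h1 h3).trans h4)

theorem iet_intg {pt pb : A → ℕ} (lam : A → ℕ) :
    Intg (iet pt pb (fun a => (lam a : ℝ))) := by
  have key : ∀ pt pb : A → ℕ, ∀ a x y, (iet pt pb (fun a => (lam a : ℝ))).R a x y →
      x ∈ Set.range (Nat.cast : ℕ → ℝ) → y ∈ Set.range (Nat.cast : ℕ → ℝ) := by
    rintro pt pb a _ y ⟨⟨h1, h2⟩, rfl⟩ ⟨m, rfl⟩
    rw [cum_cast] at h1 h2 ⊢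
    rw [cum_cast]
    have h1' : cum pt lam a ≤ m := by exact_mod_cast h1
    refine ⟨m - cum pt lam a + cum pb lam a, ?_⟩
    push_cast [h1']; rfl
  intro a x y r
  refine ⟨key _ _ _ _ _ r, ?_⟩
  refine key pb pt a y x ?_
  rw [← iet_dual]; exact r

/-- Combinatorial Rauzy move. -/
def CStep (b : Bool) (P Q : (A → ℕ) × (A → ℕ)) (w l : A) : Prop :=
  w ≠ l ∧ if b then P.1 w = Fintype.card A ∧ P.2 l = Fintype.card A ∧ Q = (P.1, ctop P.2 w l)
  else P.2 w = Fintype.card A ∧ P.1 l = Fintype.card A ∧ Q = (ctop P.1 w l, P.2)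

theorem back_top {pt pb : A → ℕ} (h1 : Val pt) (h2 : Val pb) {w l : A}
    (hw : pt w = Fintype.card A) (hl : pb l = Fintype.card A) (hwl : w ≠ l)
    {mu : A → ℕ} (hmu : ∀ a, 0 < mu a) : ∃ lam : A → ℕ, (∀ a, 0 < lam a) ∧
      TopC (iet pt pb (fun a => (lam a : ℝ))) w l ∧
      (iet pt pb (fun a => (lam a : ℝ))).top w l = iet pt (ctop pb w l) (fun a => (mu a : ℝ)) := by
  refine ⟨Function.update mu w (mu w + mu l), ?_, ?_⟩
  · intro a
    by_cases ha : a = w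
    · subst ha; simp [hmu a]
    · simp [ha, hmu a]
  have hp : ∀ a, (0 : ℝ) < ((Function.update mu w (mu w + mu l) a : ℕ) : ℝ) := by
    intro a
    by_cases ha : a = w
    · subst ha
      rw [Function.update_self]; exact_mod_cast Nat.add_pos_left (hmu a) _
    · rw [Function.update_of_ne ha]; exact_mod_cast hmu a
  have c : TopC (iet pt pb (fun a => ((Function.update mu w (mu w + mu l) a : ℕ) : ℝ))) w l := by
    apply iet_topC h1 h2 hw hl hwl
    rw [Function.update_self, Function.update_of_ne hwl.symm]
    have := hmu w
    push_cast
    have : (0 : ℝ) < mu w := by exact_mod_cast this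
    linarith
  refine ⟨c, ?_⟩
  rw [iet_top h1 h2 hp c]
  congr 1
  ext a
  by_cases ha : a = w
  · subst ha
    rw [Function.update_self, Function.update_self, Function.update_of_ne hwl.symm]
    push_cast; ring
  · rw [Function.update_of_ne ha, Function.update_of_ne ha]

theorem CStep.val {b : Bool} {P Q : (A → ℕ) × (A → ℕ)} {w l : A} (h : CStep b P Q w l)
    (h1 : Val P.1) (h2 : Val P.2) : Val Q.1 ∧ Val Q.2 := by
  cases b
  · obtain ⟨hne, h3, h4, rfl⟩ := h
    exact ⟨ctop_val h1 h4 hne, h2⟩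
  · obtain ⟨hne, h3, h4, rfl⟩ := h
    exact ⟨h1, ctop_val h2 h4 hne⟩

theorem back_step {b : Bool} {P Q : (A → ℕ) × (A → ℕ)} {w l : A} (h : CStep b P Q w l)
    (h1 : Val P.1) (h2 : Val P.2) {mu : A → ℕ} (hmu : ∀ a, 0 < mu a)
    (ht : Trans (iet Q.1 Q.2 (fun a => (mu a : ℝ)))) :
    ∃ lam : A → ℕ, (∀ a, 0 < lam a) ∧
      StepC (iet P.1 P.2 (fun a => (lam a : ℝ))) b w l ∧
      (iet P.1 P.2 (fun a => (lam a : ℝ))).step b w l = iet Q.1 Q.2 (fun a => (mu a : ℝ)) ∧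
      Trans (iet P.1 P.2 (fun a => (lam a : ℝ))) := by
  cases b
  · obtain ⟨hne, h3, h4, rfl⟩ := h
    obtain ⟨lam, hp, c, e⟩ := back_top h2 h1 h3 h4 hne hmu
    have hp' : ∀ a, (0 : ℝ) < lam a := fun a => by exact_mod_cast hp a
    have hq' : ∀ a, (0 : ℝ) < mu a := fun a => by exact_mod_cast hmu a
    refine ⟨lam, hp, ?_, ?_, ?_⟩
    · change TopC (RS.dual _) w l
      rw [iet_dual]; exact c
    · change (RS.top (RS.dual _) w l).dual = _
      rw [iet_dual, e, iet_dual]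
    · rw [← iet_dual]
      refine Trans.dual (iet_ok h2 h1 hp') (trans_of_top (iet_ok h2 h1 hp') c (iet_intg lam) ?_)
      rw [e, ← iet_dual]
      exact ht.dual (iet_ok (ctop_val h1 h4 hne) h2 hq')
  · obtain ⟨hne, h3, h4, rfl⟩ := h
    obtain ⟨lam, hp, c, e⟩ := back_top h1 h2 h3 h4 hne hmu
    have hp' : ∀ a, (0 : ℝ) < lam a := fun a => by exact_mod_cast hp a
    refine ⟨lam, hp, c, e, ?_⟩
    refine trans_of_top (iet_ok h1 h2 hp') c (iet_intg lam) ?_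
    rw [e]; exact ht

theorem cum_one {p : A → ℕ} (h : Val p) (a : A) : cum p (fun _ => 1) a = p a - 1 := by
  obtain ⟨k, hk⟩ : ∃ k, p a = k := ⟨_, rfl⟩
  induction k generalizing a with
  | zero => have := (h.2 a).1; omega
  | succ k ih =>
    by_cases hk0 : k = 0
    · rw [cum_first h _ (by omega)]; omega
    · have := (h.2 a).2
      obtain ⟨b, hb⟩ := h.surj (k := k) (by omega) (by omega)
      rw [cum_succ h _ (a := b) (by omega), ih b hb]
      omega

theorem cyclic_trans {pt pb : A → ℕ} (h1 : Val pt) (h2 : Val pb) (hc : GState.CyclicDatum pt pb) :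
    Trans (iet pt pb (fun _ => ((1 : ℕ) : ℝ))) := by
  obtain ⟨g, hg, htr⟩ := hc
  have edge : ∀ a, (iet pt pb (fun _ => ((1 : ℕ) : ℝ))).R a ((pt a - 1 : ℕ) : ℝ)
      ((pt (g a) - 1 : ℕ) : ℝ) := by
    intro a
    simp only [iet]
    rw [cum_cast pt (fun _ => 1), cum_cast pb (fun _ => 1), cum_one h1, cum_one h2, hg]
    refine ⟨⟨le_rfl, ?_⟩, by ring⟩
    push_cast; linarith
  intro m n hm hn
  have hs : ∑ a : A, (iet pt pb (fun _ => ((1 : ℕ) : ℝ))).lt a = Fintype.card A := by simp [iet]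
  rw [hs] at hm hn
  have hm' : m < Fintype.card A := by exact_mod_cast hm
  have hn' : n < Fintype.card A := by exact_mod_cast hn
  obtain ⟨a, ha⟩ := h1.surj (k := m + 1) (by omega) (by omega)
  obtain ⟨b, hb⟩ := h1.surj (k := n + 1) (by omega) (by omega)
  obtain ⟨k, hk⟩ := htr a b
  have : ∀ k, Relation.ReflTransGen (fun x y : ℕ => ∃ a, (iet pt pb (fun _ => ((1 : ℕ) : ℝ))).R a x y)
      (pt a - 1) (pt (g^[k] a) - 1) := by
    intro k
    induction k with
    | zero => exact .refl
    | succ k ih =>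
      refine ih.tail ⟨g^[k] a, ?_⟩
      rw [Function.iterate_succ_apply']
      exact edge _
  have h3 := this k
  rw [hk, ha, hb] at h3
  exact h3

def CRel (P Q : (A → ℕ) × (A → ℕ)) : Prop := ∃ b w l, CStep b P Q w l

theorem CRel.swap {P Q : (A → ℕ) × (A → ℕ)} (h : CRel P Q) : CRel P.swap Q.swap := by
  obtain ⟨b, w, l, h⟩ := h
  refine ⟨!b, w, l, ?_⟩
  cases b
  · obtain ⟨hne, h3, h4, rfl⟩ := h
    exact ⟨hne, h3, h4, rfl⟩
  · obtain ⟨hne, h3, h4, rfl⟩ := h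
    exact ⟨hne, h3, h4, rfl⟩

theorem rtg_swap {P Q : (A → ℕ) × (A → ℕ)} (h : Relation.ReflTransGen CRel P Q) :
    Relation.ReflTransGen CRel P.swap Q.swap :=
  Relation.ReflTransGen.lift Prod.swap (fun _ _ h => CRel.swap h) _ _ h

theorem mod_step {M n : ℕ} (hM : 0 < M) : (n + 1) % M = if n % M + 1 = M then 0 else n % M + 1 := by
  have h1 := Nat.mod_lt n hM
  have h2 : (n + 1) % M = (n % M + 1) % M := by rw [Nat.mod_add_mod]
  rw [h2]
  split_ifs with h
  · rw [h, Nat.mod_self]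
  · exact Nat.mod_eq_of_lt (by omega)

theorem return_top {pt pb : A → ℕ} (h2 : Val pb) {w l : A}
    (hw : pt w = Fintype.card A) (hl : pb l = Fintype.card A) (hwl : w ≠ l) :
    Relation.ReflTransGen CRel (pt, ctop pb w l) (pt, pb) := by
  have hwd : pb w < Fintype.card A := by
    have := (h2.2 w).2
    have : pb w ≠ pb l := fun e => hwl (h2.1 e)
    omega
  obtain ⟨M, hM⟩ : ∃ M, Fintype.card A = pb w + M := ⟨_, (Nat.add_sub_cancel' hwd.le).symm⟩
  have hMp : 0 < M := by omega
  let rot : ℕ → A → ℕ := fun k x =>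
    if pb x ≤ pb w then pb x else pb w + 1 + ((pb x - pb w - 1 + k) % M)
  have hrw : ∀ k, rot k w = pb w := fun k => by simp [rot]
  have hstep : ∀ k l', rot k l' = Fintype.card A → rot (k + 1) = ctop (rot k) w l' := by
    intro k l' hl'
    ext x
    have hl2 : ¬ pb l' ≤ pb w := by
      intro h
      simp only [rot, if_pos h] at hl'
      omega
    simp only [rot, if_neg hl2] at hl'
    simp only [ctop, hrw]
    by_cases hx : x = l'
    · subst hx
      simp only [rot, if_neg hl2, if_true]
      rw [← Nat.add_assoc, mod_step hMp, if_pos (by omega)]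
    · rw [if_neg hx]
      by_cases hxw : pb x ≤ pb w
      · simp only [rot, if_pos hxw]
        rw [if_neg (by omega)]
      · simp only [rot, if_neg hxw]
        rw [if_pos (by omega), ← Nat.add_assoc, mod_step hMp]
        split_ifs with h
        · exfalso
          have h3 : (pb x - pb w - 1 + k) % M = (pb l' - pb w - 1 + k) % M := by omega
          have h4 : (pb x - pb w - 1) ≡ (pb l' - pb w - 1) [MOD M] := Nat.ModEq.add_right_cancel' k h3
          have h5 := (h2.2 x).2
          have h6 := (h2.2 l').2
          have h7 := Nat.ModEq.eq_of_lt_of_lt h4 (by omega) (by omega)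
          exact hx (h2.1 (by omega))
        · omega
  have hval : ∀ k, Val (rot k) := by
    intro k
    induction k with
    | zero =>
      have : rot 0 = pb := by
        ext x
        simp only [rot]
        split_ifs with h
        · rfl
        · have := (h2.2 x).2
          rw [Nat.mod_eq_of_lt (by omega)]; omega
      rw [this]; exact h2
    | succ k ih =>
      obtain ⟨l', hl'⟩ := ih.surj (k := Fintype.card A) (by omega) le_rfl
      rw [hstep k l' hl']
      refine ctop_val ih hl' ?_
      rintro rfl
      rw [hrw] at hl'; omega
  have hrel : ∀ k, CRel (pt, rot k) (pt, rot (k + 1)) := by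
    intro k
    obtain ⟨l', hl'⟩ := (hval k).surj (k := Fintype.card A) (by omega) le_rfl
    refine ⟨true, w, l', ?_, hw, hl', ?_⟩
    · rintro rfl
      rw [hrw] at hl'; omega
    · simp only; rw [hstep k l' hl']
  have h0 : rot 0 = pb := by
    ext x
    simp only [rot]
    split_ifs with h
    · rfl
    · have := (h2.2 x).2
      rw [Nat.mod_eq_of_lt (by omega)]; omega
  have hMM : rot M = pb := by
    ext x
    simp only [rot]
    split_ifs with h
    · rfl
    · have := (h2.2 x).2
      rw [Nat.add_mod_right, Nat.mod_eq_of_lt (by omega)]; omega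
  have h1 : rot 1 = ctop pb w l := by
    have := hstep 0 l (by rw [h0]; exact hl)
    rw [h0] at this; exact this
  have hall : ∀ k, Relation.ReflTransGen CRel (pt, rot 1) (pt, rot (k + 1)) := by
    intro k
    induction k with
    | zero => exact .refl
    | succ k ih => exact ih.tail (hrel (k + 1))
  have := hall (M - 1)
  rw [h1, Nat.sub_add_cancel hMp, hMM] at this
  exact this

theorem CRel.back {P Q : (A → ℕ) × (A → ℕ)} (h : CRel P Q) (h1 : Val P.1) (h2 : Val P.2) :
    Relation.ReflTransGen CRel Q P := by
  obtain ⟨b, w, l, h⟩ := h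
  cases b
  · obtain ⟨hne, h3, h4, rfl⟩ := h
    have := return_top (pt := P.2) h1 h3 h4 hne
    exact rtg_swap this
  · obtain ⟨hne, h3, h4, rfl⟩ := h
    exact return_top h2 h3 h4 hne

theorem crel_of_combStep {P Q : (A → ℕ) × (A → ℕ)} (h1 : Val P.1) (h2 : Val P.2)
    (h : GState.CombStep (Fintype.card A) P Q) : CRel P Q := by
  obtain ⟨p1, p2⟩ := P
  obtain ⟨q1, q2⟩ := Q
  simp only at h1 h2
  rcases h with ⟨at_, ab, e1, e2, e3, e4, e5, e6⟩ | ⟨at_, ab, e1, e2, e3, e4, e5, e6⟩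
  · have hne : at_ ≠ ab := by
      rintro rfl
      have := e4 at_ le_rfl
      simp only at e5 this; omega
    refine ⟨true, at_, ab, hne, e1, e2, ?_⟩
    simp only at e3 e4 e5 e6 ⊢
    rw [e3]; congr 1
    ext x
    rw [ctop]
    split_ifs with h3 h4
    · rw [h3]; exact e5
    · exact e6 x h3 h4
    · exact e4 x (by omega)
  · have hne : ab ≠ at_ := by
      rintro rfl
      have := e4 ab le_rfl
      simp only at e5 this; omega
    refine ⟨false, ab, at_, hne, e2, e1, ?_⟩
    simp only at e3 e4 e5 e6 ⊢
    rw [e3]; congr 1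
    ext x
    rw [ctop]
    split_ifs with h3 h4
    · rw [h3]; exact e5
    · exact e6 x h3 h4
    · exact e4 x (by omega)

end shadow
end FF

set_option linter.unusedSectionVars false

namespace FF

section path
variable {A : Type*} [Fintype A] [DecidableEq A]

theorem cstep_of_rauzyStep {g g' : GState A} {w l : A} (h : g.RauzyStep g' w l) :
    ∃ b, CStep b (g.pit, g.pib) (g'.pit, g'.pib) w l := by
  obtain ⟨-, -, at_, ab, h1, h2, h | h⟩ := h
  · obtain ⟨-, rfl, rfl, -, e1, e2, e3, e4, -, -⟩ := h
    have hne : w ≠ l := by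
      rintro rfl
      have := e2 w le_rfl
      omega
    refine ⟨true, hne, h1, h2, ?_⟩
    rw [e1]; congr 1
    ext x
    rw [ctop]
    split_ifs with h3 h4
    · rw [h3]; exact e3
    · exact e4 x h3 h4
    · exact e2 x (by simp only at h4; omega)
  · obtain ⟨-, rfl, rfl, -, e1, e2, e3, e4, -, -⟩ := h
    have hne : w ≠ l := by
      rintro rfl
      have := e2 w le_rfl
      omega
    refine ⟨false, hne, h2, h1, ?_⟩
    rw [e1]; congr 1
    ext x
    rw [ctop]
    split_ifs with h3 h4
    · rw [h3]; exact e3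
    · exact e4 x h3 h4
    · exact e2 x (by simp only at h4; omega)

theorem winner_change {b b' : Bool} {P Q Q' : (A → ℕ) × (A → ℕ)} {w l w' l' : A}
    (h1 : Val P.1) (h2 : Val P.2) (h : CStep b P Q w l) (h' : CStep b' Q Q' w' l')
    (hne : w' ≠ w) : l' = w := by
  cases b <;> cases b' <;> obtain ⟨-, e1, e2, rfl⟩ := h <;> obtain ⟨-, f1, f2, -⟩ := h'
  · exact absurd (h2.1 (f1.trans e1.symm)) hne
  · exact h2.1 (f2.trans e1.symm)
  · exact h1.1 (f2.trans e1.symm)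
  · exact absurd (h1.1 (f1.trans e1.symm)) hne

theorem rtg_val {P Q : (A → ℕ) × (A → ℕ)} (h : Relation.ReflTransGen CRel P Q)
    (h1 : Val P.1 ∧ Val P.2) : Val Q.1 ∧ Val Q.2 := by
  induction h with
  | refl => exact h1
  | tail _ h2 ih =>
    obtain ⟨b, w, l, h⟩ := h2
    exact h.val ih.1 ih.2

theorem rtg_comb {P Q : (A → ℕ) × (A → ℕ)}
    (h : Relation.ReflTransGen (GState.CombStep (Fintype.card A)) P Q)
    (h1 : Val P.1 ∧ Val P.2) : Relation.ReflTransGen CRel P Q := by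
  induction h with
  | refl => exact .refl
  | tail _ h2 ih =>
    have := rtg_val ih h1
    exact ih.tail (crel_of_combStep this.1 this.2 h2)

theorem good_back {P Q : (A → ℕ) × (A → ℕ)} (h : Relation.ReflTransGen CRel P Q)
    (h1 : Val P.1 ∧ Val P.2)
    (hg : ∃ lam : A → ℕ, (∀ a, 0 < lam a) ∧ Trans (iet Q.1 Q.2 (fun a => (lam a : ℝ)))) :
    ∃ lam : A → ℕ, (∀ a, 0 < lam a) ∧ Trans (iet P.1 P.2 (fun a => (lam a : ℝ))) := by
  induction h with
  | refl => exact hg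
  | tail h0 h2 ih =>
    apply ih
    have := rtg_val h0 h1
    obtain ⟨b, w, l, h⟩ := h2
    obtain ⟨lam, hp, ht⟩ := hg
    obtain ⟨mu, hm, -, -, ht'⟩ := back_step h this.1 this.2 hp ht
    exact ⟨mu, hm, ht'⟩

theorem path_main {P0 : (A → ℕ) × (A → ℕ)} (hv : Val P0.1 ∧ Val P0.2)
    (hcyc : ∃ P : (A → ℕ) × (A → ℕ),
      Relation.ReflTransGen (GState.CombStep (Fintype.card A)) P0 P ∧
      GState.CyclicDatum P.1 P.2)
    {b : ℕ → Bool} {w l : ℕ → A} {D : ℕ → (A → ℕ) × (A → ℕ)} (hD : D 0 = P0)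
    (hs : ∀ k, CStep (b k) (D k) (D (k + 1)) (w k) (l k)) (n : ℕ) :
    ∃ lam : A → ℕ, (∀ a, 0 < lam a) ∧ Trans (iet P0.1 P0.2 (fun a => (lam a : ℝ))) ∧
      Follow b w l 0 (iet P0.1 P0.2 (fun a => (lam a : ℝ))) n := by
  have hval : ∀ k, Val (D k).1 ∧ Val (D k).2 := by
    intro k
    induction k with
    | zero => rw [hD]; exact hv
    | succ k ih => exact (hs k).val ih.1 ih.2
  have hret : ∀ k, Relation.ReflTransGen CRel (D k) P0 := by
    intro k
    induction k with
    | zero => rw [hD]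
    | succ k ih => exact (CRel.back ⟨_, _, _, hs k⟩ (hval k).1 (hval k).2).trans ih
  obtain ⟨P, hP, hc⟩ := hcyc
  have hP' := rtg_comb hP hv
  have hPv := rtg_val hP' hv
  have hgood : ∀ k, ∃ lam : A → ℕ, (∀ a, 0 < lam a) ∧
      Trans (iet (D k).1 (D k).2 (fun a => (lam a : ℝ))) := fun k =>
    good_back ((hret k).trans hP') (hval k)
      ⟨fun _ => 1, fun _ => Nat.one_pos, cyclic_trans hPv.1 hPv.2 hc⟩
  have main : ∀ n k, ∃ lam : A → ℕ, (∀ a, 0 < lam a) ∧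
      Trans (iet (D k).1 (D k).2 (fun a => (lam a : ℝ))) ∧
      Follow b w l k (iet (D k).1 (D k).2 (fun a => (lam a : ℝ))) n := by
    intro n
    induction n with
    | zero =>
      intro k
      obtain ⟨lam, h1, h2⟩ := hgood k
      exact ⟨lam, h1, h2, trivial⟩
    | succ n ih =>
      intro k
      obtain ⟨mu, h1, h2, h3⟩ := ih (k + 1)
      obtain ⟨lam, h4, h5, h6, h7⟩ := back_step (hs k) (hval k).1 (hval k).2 h1 h2
      refine ⟨lam, h4, h7, h5, ?_⟩
      rw [h6]; exact h3
  have := main n 0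
  rw [hD] at this
  exact this

end path
end FF

set_option linter.unusedSectionVars false

namespace FF
open Filter Topology

theorem branch_closure {f : ℝ → ℝ} {u la v mu : ℝ} (hla : 0 < la) (hmu : 0 < mu)
    (hb : Set.BijOn f (Set.Ico u (u + la)) (Set.Ico v (v + mu)))
    (hm : StrictMonoOn f (Set.Ico u (u + la))) (hc : ContinuousOn f (Set.Ico u (u + la)))
    {p : ℝ × ℝ} : p ∈ closure {p : ℝ × ℝ | p.1 ∈ Set.Ico u (u + la) ∧ p.2 = f p.1} ↔
      (p.1 ∈ Set.Ico u (u + la) ∧ p.2 = f p.1) ∨ p = (u + la, v + mu) := by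
  constructor
  · intro hp
    obtain ⟨q, hq, hlim⟩ := mem_closure_iff_seq_limit.1 hp
    have l1 : Tendsto (fun n => (q n).1) atTop (𝓝 p.1) := (continuous_fst.tendsto p).comp hlim
    have l2 : Tendsto (fun n => (q n).2) atTop (𝓝 p.2) := (continuous_snd.tendsto p).comp hlim
    have b1 : u ≤ p.1 := ge_of_tendsto' l1 fun n => (hq n).1.1
    have b2 : p.1 ≤ u + la := le_of_tendsto' l1 fun n => (hq n).1.2.le
    rcases b2.lt_or_eq with b2 | b2
    · left
      refine ⟨⟨b1, b2⟩, ?_⟩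
      have h1 := hc p.1 ⟨b1, b2⟩
      have h2 : Tendsto (fun n => (q n).1) atTop (𝓝[Set.Ico u (u + la)] p.1) :=
        tendsto_nhdsWithin_iff.2 ⟨l1, Eventually.of_forall fun n => (hq n).1⟩
      have h3 := h1.tendsto.comp h2
      refine tendsto_nhds_unique l2 (h3.congr fun n => ?_)
      exact (hq n).2.symm
    · right
      have h3 : p.2 ≤ v + mu := le_of_tendsto' l2 fun n => by
        rw [(hq n).2]; exact (hb.mapsTo (hq n).1).2.le
      have h4 : v + mu ≤ p.2 := by
        refine le_of_forall_lt fun y hy => ?_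
        obtain ⟨y', hy1, hy2⟩ := exists_between (show max y v < v + mu by
          rw [max_lt_iff]; exact ⟨hy, by linarith⟩)
        obtain ⟨x, hx, e⟩ := hb.surjOn ⟨(le_max_right y v).trans hy1.le, hy2⟩
        have hev : ∀ᶠ n in atTop, x < (q n).1 := l1.eventually (lt_mem_nhds (by rw [b2]; exact hx.2))
        have : y' ≤ p.2 := ge_of_tendsto l2 (hev.mono fun n hn => by
          rw [(hq n).2, ← e]; exact (hm hx (hq n).1 hn).le)
        exact ((le_max_left y v).trans_lt hy1).trans_le this
      exact Prod.ext b2 (le_antisymm h3 h4)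
  · rintro (h | rfl)
    · exact subset_closure h
    · rw [Metric.mem_closure_iff]
      intro ε hε
      have m1 : 0 < min ε mu := lt_min hε hmu
      have m2 : 0 < min ε la := lt_min hε hla
      have m3 := min_le_left ε mu
      have m4 := min_le_right ε mu
      have m5 := min_le_left ε la
      have m6 := min_le_right ε la
      obtain ⟨x2, hx2, e⟩ := hb.surjOn (show v + mu - min ε mu / 2 ∈ Set.Ico v (v + mu) from
        ⟨by linarith, by linarith⟩)
      have hx1 : u + la - min ε la / 2 ∈ Set.Ico u (u + la) := ⟨by linarith, by linarith⟩
      have hx : max (u + la - min ε la / 2) x2 ∈ Set.Ico u (u + la) :=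
        ⟨hx1.1.trans (le_max_left _ _), max_lt hx1.2 hx2.2⟩
      refine ⟨(max (u + la - min ε la / 2) x2, f (max (u + la - min ε la / 2) x2)), ⟨hx, rfl⟩, ?_⟩
      have k1 := hm.monotoneOn hx2 hx (le_max_right _ _)
      rw [e] at k1
      have k2 := (hb.mapsTo hx).2
      have k3 := le_max_left (u + la - min ε la / 2) x2
      have k4 := hx.2
      rw [Prod.dist_eq, max_lt_iff, Real.dist_eq, Real.dist_eq, abs_lt, abs_lt]
      refine ⟨⟨by linarith, by linarith⟩, by linarith, by linarith⟩

/-- Good limit branches. -/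
structure Nice (K : Set (ℝ × ℝ)) : Prop where
  ne : K.Nonempty
  cl : IsClosed K
  bd : Bornology.IsBounded K
  inj : ∀ p ∈ K, ∀ q ∈ K, (p.1 = q.1 ↔ p.2 = q.2)

theorem nice_branch {f : ℝ → ℝ} {u la v mu : ℝ} (hla : 0 < la) (hmu : 0 < mu)
    (hb : Set.BijOn f (Set.Ico u (u + la)) (Set.Ico v (v + mu)))
    (hm : StrictMonoOn f (Set.Ico u (u + la))) (hc : ContinuousOn f (Set.Ico u (u + la))) :
    Nice (closure {p : ℝ × ℝ | p.1 ∈ Set.Ico u (u + la) ∧ p.2 = f p.1}) := by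
  have key := fun p => branch_closure hla hmu hb hm hc (p := p)
  refine ⟨⟨_, (key _).2 (Or.inr rfl)⟩, isClosed_closure, ?_, ?_⟩
  · refine Bornology.IsBounded.closure ?_
    refine ((Metric.isBounded_Icc u (u + la)).prod (Metric.isBounded_Icc v (v + mu))).subset ?_
    rintro p ⟨h1, h2⟩
    refine ⟨⟨h1.1, h1.2.le⟩, ?_⟩
    rw [h2]
    exact ⟨(hb.mapsTo h1).1, (hb.mapsTo h1).2.le⟩
  · intro p hp q hq
    rcases (key p).1 hp with ⟨h1, h2⟩ | rfl <;> rcases (key q).1 hq with ⟨h3, h4⟩ | rfl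
    · rw [h2, h4]
      exact (hb.injOn.eq_iff h1 h3).symm
    · have h5 := h1.2
      have h6 := (hb.mapsTo h1).2
      rw [h2]
      exact iff_of_false h5.ne h6.ne
    · have h5 := h3.2
      have h6 := (hb.mapsTo h3).2
      rw [h4]
      exact iff_of_false h5.ne' h6.ne'
    · simp

theorem Nice.singleton (p : ℝ × ℝ) : Nice {p} := by
  refine ⟨⟨p, rfl⟩, isClosed_singleton, Bornology.isBounded_singleton, ?_⟩
  rintro _ rfl _ rfl
  simp

section fam
variable {A : Type*} [Fintype A] [DecidableEq A]

structure Fam (pit pib : A → ℕ) (S : (A → ℝ) → RS A) (G : (A → ℝ) → A → Set (ℝ × ℝ)) : Prop where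
  ok : ∀ τ ∈ GState.openSimplex A, Ok (S τ)
  pt : ∀ τ ∈ GState.openSimplex A, (S τ).pt = pit
  pb : ∀ τ ∈ GState.openSimplex A, (S τ).pb = pib
  lb : ∀ τ ∈ GState.openSimplex A, (S τ).lb = τ
  len : ∀ τ ∈ GState.openSimplex A, ∑ a, (S τ).lt a = 1
  mem : ∀ τ ∈ GState.openSimplex A, ∀ {a x y}, (S τ).R a x y → (x, y) ∈ G τ a
  mem_end : ∀ τ ∈ GState.openSimplex A, ∀ a,
    ((S τ).ut a + (S τ).lt a, (S τ).ub a + (S τ).lb a) ∈ G τ a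
  inj : ∀ τ ∈ GState.closedSimplex A, ∀ a, ∀ p ∈ G τ a, ∀ q ∈ G τ a, (p.1 = q.1 ↔ p.2 = q.2)
  lim : ∀ {ι : Type} (U : Ultrafilter ι) (τ : ι → A → ℝ) (τ0 : A → ℝ) (a : A) (p : ι → ℝ × ℝ)
    (p0 : ℝ × ℝ), (∀ᶠ i in (U : Filter ι), τ i ∈ GState.openSimplex A) →
    τ0 ∈ GState.closedSimplex A →
    Tendsto τ U (𝓝 τ0) → (∀ᶠ i in (U : Filter ι), p i ∈ G (τ i) a) → Tendsto p U (𝓝 p0) →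
    p0 ∈ G τ0 a

theorem fam_of_fullFamily {pit pib : A → ℕ} (hb : Val pib) {F : (A → ℝ) → GState A}
    (h : GState.FullFamily pit pib F) : ∃ G, Fam pit pib (fun τ => ofG (F τ)) G := by
  obtain ⟨h1, h2, -, Fh, h3, h4, h5⟩ := h
  have hsub : GState.openSimplex A ⊆ GState.closedSimplex A :=
    fun τ hτ => ⟨fun a => (hτ.1 a).le, hτ.2⟩
  have hbr : ∀ τ ∈ GState.openSimplex A, ∀ a, 0 < (F τ).lt a ∧ 0 < (F τ).lb a ∧
      Set.BijOn (F τ).f ((F τ).Itv a) ((F τ).Ibv a) ∧ StrictMonoOn (F τ).f ((F τ).Itv a) ∧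
      ContinuousOn (F τ).f ((F τ).Itv a) := fun τ hτ a => by
    obtain ⟨⟨-, -, p1, p2, -, p3⟩, -⟩ := h1 τ hτ
    exact ⟨p1 a, p2 a, p3 a⟩
  have hnice : ∀ τ ∈ GState.closedSimplex A, ∀ a, Nice (Fh τ a) := by
    intro τ hτ a
    by_cases ho : τ ∈ GState.openSimplex A
    · rw [h3 τ ho]
      obtain ⟨p1, p2, p3, p4, p5⟩ := hbr τ ho a
      exact nice_branch p1 p2 p3 p4 p5
    · obtain ⟨s, A', -, -, -, -, q1, -, -, q2, q3, q4⟩ := h5 τ ⟨hτ, ho⟩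
      by_cases ha : a ∈ A'
      · rw [q3 a ha]
        exact nice_branch (q1 a ha).1 (q1 a ha).2 (q2 a ha).1 (q2 a ha).2.1 (q2 a ha).2.2
      · obtain ⟨p, hp, -⟩ := q4 a ha
        rw [hp]; exact Nice.singleton p
  refine ⟨Fh, ⟨?_, ?_, ?_, ?_, ?_, ?_, ?_, ?_, ?_⟩⟩
  · exact fun τ hτ => ofG_ok (h1 τ hτ).1
  · exact fun τ hτ => (h1 τ hτ).2.1
  · exact fun τ hτ => (h1 τ hτ).2.2.1
  · intro τ hτ
    refine eq_of_cum_eq hb (fun a => ?_) ?_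
    · have e := h2 τ hτ a
      rw [← ub_ofG, Finset.sum_filter] at e
      have e2 : (ofG (F τ)).pb = pib := (h1 τ hτ).2.2.1
      rw [RS.ub, e2] at e
      exact e
    · rw [hτ.2, ← (ofG_ok (h1 τ hτ).1).sum]
      exact (h1 τ hτ).2.2.2
  · exact fun τ hτ => (h1 τ hτ).2.2.2
  · intro τ hτ a x y r
    rw [h3 τ hτ]
    exact subset_closure r
  · intro τ hτ a
    rw [h3 τ hτ]
    obtain ⟨p1, p2, p3, p4, p5⟩ := hbr τ hτ a
    refine (branch_closure p1 p2 p3 p4 p5).2 (Or.inr ?_)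
    rw [ut_ofG, ub_ofG]; rfl
  · intro τ hτ a p hp q hq
    exact (hnice τ hτ a).inj p hp q hq
  · intro ι U τ τ0 a p p0 hev hτ0 hlim hp hplim
    have n0 := hnice τ0 hτ0 a
    rw [n0.cl.mem_iff_infDist_zero n0.ne]
    have hd : Tendsto (fun i => Metric.infDist (p i) (Fh τ0 a)) U (𝓝 0) := by
      rw [Metric.tendsto_nhds]
      intro ε hε
      obtain ⟨δ, hδ, hh⟩ := h4 τ0 hτ0 ε hε
      filter_upwards [hev, hp, Metric.tendsto_nhds.1 hlim δ hδ] with i e1 e2 e3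
      have n1 := hnice (τ i) (hsub e1) a
      have k1 := hh (τ i) (hsub e1) (by rw [dist_comm]; exact e3)
      have k2 : Metric.hausdorffDist (Fh τ0 a) (Fh (τ i) a) ≤
          ∑ a, Metric.hausdorffDist (Fh τ0 a) (Fh (τ i) a) :=
        Finset.single_le_sum (f := fun a => Metric.hausdorffDist (Fh τ0 a) (Fh (τ i) a))
          (fun a _ => Metric.hausdorffDist_nonneg) (Finset.mem_univ a)
      have k3 : Metric.infDist (p i) (Fh τ0 a) ≤ Metric.hausdorffDist (Fh (τ i) a) (Fh τ0 a) :=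
        Metric.infDist_le_hausdorffDist_of_mem e2
          (Metric.hausdorffEDist_ne_top_of_nonempty_of_bounded n1.ne n0.ne n1.bd n0.bd)
      rw [Metric.hausdorffDist_comm] at k3
      rw [Real.dist_eq, sub_zero, abs_of_nonneg Metric.infDist_nonneg]
      linarith
    have hc : Tendsto (fun i => Metric.infDist (p i) (Fh τ0 a)) U (𝓝 (Metric.infDist p0 (Fh τ0 a))) :=
      ((Metric.continuous_infDist_pt (Fh τ0 a)).tendsto p0).comp hplim
    exact tendsto_nhds_unique hc hd

end fam
end FF

set_option linter.unusedSectionVars false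

namespace FF
open Filter Topology

/-- Partial sums. -/
def Xf {N : ℕ} (v : Fin N → ℝ) (n : ℕ) : ℝ := ∑ i : Fin N, if i.val < n then v i else 0

theorem Xf_zero {N : ℕ} (v : Fin N → ℝ) : Xf v 0 = 0 := by simp [Xf]

theorem Xf_succ {N : ℕ} (v : Fin N → ℝ) {n : ℕ} (h : n < N) : Xf v (n + 1) = Xf v n + v ⟨n, h⟩ := by
  have h1 : v ⟨n, h⟩ = ∑ i : Fin N, if i = ⟨n, h⟩ then v i else 0 := by simp
  rw [h1, Xf, Xf, ← Finset.sum_add_distrib]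
  refine Finset.sum_congr rfl fun i _ => ?_
  by_cases hi : i = ⟨n, h⟩
  · subst hi; simp
  · have : i.val ≠ n := fun e => hi (Fin.ext e)
    by_cases h2 : i.val < n
    · rw [if_pos h2, if_pos (by omega), if_neg hi]; ring
    · rw [if_neg h2, if_neg (by omega), if_neg hi]; ring

theorem Xf_full {N : ℕ} (v : Fin N → ℝ) : Xf v N = ∑ i, v i := by
  refine Finset.sum_congr rfl fun i _ => ?_
  rw [if_pos i.2]

theorem Xf_mono {N : ℕ} {v : Fin N → ℝ} (hv : ∀ i, 0 ≤ v i) {m n : ℕ} (h : m ≤ n) :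
    Xf v m ≤ Xf v n := by
  refine Finset.sum_le_sum fun i _ => ?_
  split_ifs with h1 h2 h2
  · exact le_rfl
  · omega
  · exact hv i
  · exact le_rfl

theorem Xf_strict {N : ℕ} {v : Fin N → ℝ} (hv : ∀ i, 0 < v i) {m n : ℕ} (h : m < n) (hn : n ≤ N) :
    Xf v m < Xf v n := by
  have h1 := Xf_succ v (show m < N by omega)
  have h2 : Xf v (m + 1) ≤ Xf v n := Xf_mono (fun i => (hv i).le) h
  linarith [hv ⟨m, by omega⟩]

theorem Xf_cont {N : ℕ} (n : ℕ) : Continuous fun v : Fin N → ℝ => Xf v n := by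
  unfold Xf
  refine continuous_finsetSum _ fun i _ => ?_
  split_ifs
  · exact continuous_apply i
  · exact continuous_const

theorem Xf_diff {N : ℕ} (Y : ℕ → ℝ) {m : ℕ} (hm : m ≤ N) :
    Xf (fun i : Fin N => Y (i.val + 1) - Y i.val) m = Y m - Y 0 := by
  induction m with
  | zero => rw [Xf_zero]; ring
  | succ m ih => rw [Xf_succ _ (show m < N by omega), ih (by omega)]; ring

theorem ultra_lim {ι : Type*} (U : Ultrafilter ι) {f : ι → ℝ} {c d : ℝ}
    (h : ∀ᶠ i in (U : Filter ι), f i ∈ Set.Icc c d) :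
    ∃ y ∈ Set.Icc c d, Tendsto f U (𝓝 y) := by
  have := (isCompact_Icc (a := c) (b := d)).ultrafilter_le_nhds' (U.map f) h
  exact this

section fixed
variable {A : Type*} [Fintype A] [DecidableEq A]

theorem cumN_add_le_sum {p : A → ℕ} (h : Val p) (lam : A → ℕ) (a : A) :
    cum p lam a + lam a ≤ ∑ x, lam x := by
  have := cum_add_le_sum h (l := fun a => (lam a : ℝ)) (fun a => Nat.cast_nonneg _) a
  rw [cum_cast] at this
  exact_mod_cast this

theorem cumN_partition {p : A → ℕ} (h : Val p) (hne : Nonempty A) (lam : A → ℕ) {m : ℕ}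
    (hm : m < ∑ x, lam x) : ∃ a, cum p lam a ≤ m ∧ m < cum p lam a + lam a := by
  obtain ⟨a, h1, h2⟩ := cum_partition h (l := fun a => (lam a : ℝ)) hne (x := m)
    (Nat.cast_nonneg _) (by exact_mod_cast hm)
  rw [cum_cast] at h1 h2
  exact ⟨a, by exact_mod_cast h1, by exact_mod_cast h2⟩

theorem cumN_disj {p : A → ℕ} (h : Val p) (lam : A → ℕ) {m : ℕ} {a b : A}
    (ha : cum p lam a ≤ m ∧ m < cum p lam a + lam a)
    (hb : cum p lam b ≤ m ∧ m < cum p lam b + lam b) : a = b := by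
  refine cum_disj h (l := fun a => (lam a : ℝ)) (fun a => Nat.cast_nonneg _) (x := m) ?_ ?_
  · rw [cum_cast]; exact ⟨by exact_mod_cast ha.1, by exact_mod_cast ha.2⟩
  · rw [cum_cast]; exact ⟨by exact_mod_cast hb.1, by exact_mod_cast hb.2⟩

/-- Lengths of the bottom intervals determined by the points. -/
def Tau (pib lam : A → ℕ) {N : ℕ} (v : Fin N → ℝ) (a : A) : ℝ :=
  Xf v (cum pib lam a + lam a) - Xf v (cum pib lam a)

theorem Tau_cont (pib lam : A → ℕ) {N : ℕ} : Continuous fun v : Fin N → ℝ => Tau pib lam v :=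
  continuous_pi fun a => (Xf_cont _).sub (Xf_cont _)

theorem Tau_sum {pib lam : A → ℕ} (hb : Val pib) (hne : Nonempty A) {N : ℕ}
    (hN : ∑ a, lam a = N) (v : Fin N → ℝ) : ∑ a, Tau pib lam v a = ∑ i, v i := by
  have := sum_tele hb hne lam (Xf v) (Xf_zero v)
  rw [hN, Xf_full] at this
  exact this

theorem Tau_open {pib lam : A → ℕ} (hb : Val pib) (hne : Nonempty A) (hlam : ∀ a, 0 < lam a) {N : ℕ}
    (hN : ∑ a, lam a = N) {v : Fin N → ℝ} (hv : ∀ i, 0 < v i) (hs : ∑ i, v i = 1) :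
    Tau pib lam v ∈ GState.openSimplex A := by
  refine ⟨fun a => ?_, (Tau_sum hb hne hN v).trans hs⟩
  have h1 := cumN_add_le_sum hb lam a
  have := Xf_strict hv (m := cum pib lam a) (n := cum pib lam a + lam a)
    (by have := hlam a; omega) (by omega)
  simp only [Tau]; linarith

theorem Tau_closed {pib lam : A → ℕ} (hb : Val pib) (hne : Nonempty A) {N : ℕ}
    (hN : ∑ a, lam a = N) {v : Fin N → ℝ} (hv : ∀ i, 0 ≤ v i) (hs : ∑ i, v i = 1) :
    Tau pib lam v ∈ GState.closedSimplex A := by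
  refine ⟨fun a => ?_, (Tau_sum hb hne hN v).trans hs⟩
  have := Xf_mono hv (m := cum pib lam a) (n := cum pib lam a + lam a) (by omega)
  simp only [Tau]; linarith

theorem fam_ub {pit pib : A → ℕ} {S : (A → ℝ) → RS A} {G : (A → ℝ) → A → Set (ℝ × ℝ)}
    (fam : Fam pit pib S G) (hb : Val pib) {lam : A → ℕ} {N : ℕ} {v : Fin N → ℝ}
    (ho : Tau pib lam v ∈ GState.openSimplex A) (a : A) :
    (S (Tau pib lam v)).ub a = Xf v (cum pib lam a) ∧
    (S (Tau pib lam v)).ub a + (S (Tau pib lam v)).lb a = Xf v (cum pib lam a + lam a) := by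
  have h1 : (S (Tau pib lam v)).ub a = Xf v (cum pib lam a) := by
    rw [RS.ub, fam.pb _ ho, fam.lb _ ho]
    exact cum_tele hb lam (Xf v) (Xf_zero v) a
  refine ⟨h1, ?_⟩
  rw [h1, fam.lb _ ho, Tau]; ring

theorem Y_exists {pit pib : A → ℕ} {S : (A → ℝ) → RS A} {G : (A → ℝ) → A → Set (ℝ × ℝ)}
    (fam : Fam pit pib S G) (ht : Val pit) (hb : Val pib) (hne : Nonempty A) {lam : A → ℕ}
    (hlam : ∀ a, 0 < lam a) {N : ℕ} (hN : ∑ a, lam a = N) {letter : ℕ → A}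
    (hlet : ∀ m < N, cum pit lam (letter m) ≤ m ∧ m < cum pit lam (letter m) + lam (letter m))
    {sg : ℕ → ℕ} (hsg : ∀ m, sg m = m - cum pit lam (letter m) + cum pib lam (letter m))
    {v : Fin N → ℝ} (hv : ∀ i, 0 < v i) (hs : ∑ i, v i = 1) :
    ∃ Y : ℕ → ℝ, Y 0 = 0 ∧ Y N = 1 ∧
      (∀ m < N, (S (Tau pib lam v)).R (letter m) (Y m) (Xf v (sg m))) ∧
      (∀ m < N, Y m < Y (m + 1)) ∧
      (∀ m < N, (Y (m + 1), Xf v (sg m + 1)) ∈ G (Tau pib lam v) (letter m)) ∧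
      (∀ a, Y (cum pit lam a) = (S (Tau pib lam v)).ut a) := by
  have ho := Tau_open hb hne hlam hN hv hs
  have ok := fam.ok _ ho
  have hub := fam_ub fam hb ho (lam := lam)
  have hNp : 0 < N := by
    obtain ⟨a⟩ := hne
    have := cumN_add_le_sum ht lam a
    have := hlam a
    omega
  set s := S (Tau pib lam v) with hsdef
  have hex : ∀ m, ∃ y, m < N → s.R (letter m) y (Xf v (sg m)) := by
    intro m
    by_cases hm : m < N
    · have h1 := hlet m hm
      have h2 := cumN_add_le_sum hb lam (letter m)
      obtain ⟨y, hy⟩ := ok.sur (a := letter m) (y := Xf v (sg m))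
        (by rw [(hub _).1, hsg]; exact Xf_mono (fun i => (hv i).le) (by omega))
        (by rw [(hub _).2, hsg]; exact Xf_strict hv (by omega) (by omega))
      exact ⟨y, fun _ => hy⟩
    · exact ⟨0, fun h => absurd h hm⟩
  choose Y0 hY0 using hex
  let Y : ℕ → ℝ := fun m => if m < N then Y0 m else 1
  have hYR : ∀ m < N, s.R (letter m) (Y m) (Xf v (sg m)) := fun m hm => by
    simp only [Y, if_pos hm]; exact hY0 m hm
  have hYut : ∀ a, Y (cum pit lam a) = s.ut a := by
    intro a
    have h1 := cumN_add_le_sum ht lam a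
    have h2 := hlam a
    have hm : cum pit lam a < N := by omega
    have h3 : letter (cum pit lam a) = a := cumN_disj ht lam (hlet _ hm) ⟨le_rfl, by omega⟩
    have h4 := hYR _ hm
    rw [hsg, h3, Nat.sub_self, Nat.zero_add, ← (hub a).1] at h4
    exact (ok.eq h4 (ok.start a)).2 rfl
  have hYN : Y N = 1 := by simp [Y]
  have hY00 : Y 0 = 0 := by
    obtain ⟨a, ha⟩ := ht.surj le_rfl (Fintype.card_pos (α := A))
    have h1 := hYut a
    rw [cum_first ht lam ha] at h1
    rw [h1, RS.ut, fam.pt _ ho]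
    exact cum_first ht _ ha
  have hnext : ∀ m < N, (m + 1 < N ∧ letter (m + 1) = letter m ∧ sg (m + 1) = sg m + 1) ∨
      (Y (m + 1) = s.ut (letter m) + s.lt (letter m) ∧
        sg m + 1 = cum pib lam (letter m) + lam (letter m)) := by
    intro m hm
    have h1 := hlet m hm
    have h2 := cumN_add_le_sum ht lam (letter m)
    by_cases h3 : m + 1 < cum pit lam (letter m) + lam (letter m)
    · left
      have h4 : letter (m + 1) = letter m :=
        cumN_disj ht lam (hlet (m + 1) (by omega)) ⟨by omega, h3⟩
      refine ⟨by omega, h4, ?_⟩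
      rw [hsg, hsg, h4]; omega
    · right
      refine ⟨?_, by rw [hsg]; omega⟩
      have h4 : m + 1 = cum pit lam (letter m) + lam (letter m) := by omega
      by_cases hlast : pit (letter m) = Fintype.card A
      · have h5 := cum_last ht lam hlast
        have h6 : m + 1 = N := by omega
        rw [h6, hYN]
        have h7 : s.ut (letter m) + s.lt (letter m) = _ :=
          cum_last ok.vt s.lt (by rw [hsdef, fam.pt _ ho]; exact hlast)
        rw [h7, hsdef, fam.len _ ho]
      · have h5 := (ht.2 (letter m)).2
        obtain ⟨b, hb'⟩ := ht.surj (k := pit (letter m) + 1) (by omega) (by omega)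
        have h6 := cum_succ ht lam hb'
        have h7 : s.ut b = s.ut (letter m) + s.lt (letter m) :=
          cum_succ ok.vt s.lt (by rw [hsdef, fam.pt _ ho]; exact hb')
        rw [h4, ← h6, hYut, h7]
  refine ⟨Y, hY00, hYN, hYR, ?_, ?_, hYut⟩
  · intro m hm
    rcases hnext m hm with ⟨h1, h2, h3⟩ | ⟨h1, h2⟩
    · have h4 := hYR _ h1
      rw [h2, h3] at h4
      refine (ok.mono (hYR m hm) h4).2 ?_
      have h5 := hlet _ h1
      have h6 := cumN_add_le_sum hb lam (letter (m + 1))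
      have h7 := hsg (m + 1)
      exact Xf_strict hv (by omega) (by omega)
    · rw [h1]; exact (ok.mem (hYR m hm)).1.2
  · intro m hm
    rcases hnext m hm with ⟨h1, h2, h3⟩ | ⟨h1, h2⟩
    · have h4 := hYR _ h1
      rw [h2, h3] at h4
      exact fam.mem _ ho h4
    · rw [h1, h2, ← (hub _).2]
      exact fam.mem_end _ ho _

theorem fixed_point {pit pib : A → ℕ} {S : (A → ℝ) → RS A} {G : (A → ℝ) → A → Set (ℝ × ℝ)}
    (fam : Fam pit pib S G) (ht : Val pit) (hb : Val pib) (hne : Nonempty A) {lam : A → ℕ}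
    (hlam : ∀ a, 0 < lam a) (htr : Trans (iet pit pib (fun a => (lam a : ℝ)))) :
    ∃ τ ∈ GState.openSimplex A, ∃ φ X, Shadow (iet pit pib (fun a => (lam a : ℝ))) (S τ) φ X := by
  obtain ⟨N, hN⟩ : ∃ N, ∑ a, lam a = N := ⟨_, rfl⟩
  have hNp : 0 < N := by
    obtain ⟨a⟩ := hne
    have := cumN_add_le_sum ht lam a
    have := hlam a
    omega
  obtain ⟨letter, hlet⟩ : ∃ letter : ℕ → A, ∀ m < N,
      cum pit lam (letter m) ≤ m ∧ m < cum pit lam (letter m) + lam (letter m) := by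
    have : ∀ m, ∃ a, m < N → cum pit lam a ≤ m ∧ m < cum pit lam a + lam a := by
      intro m
      by_cases hm : m < N
      · obtain ⟨a, ha⟩ := cumN_partition ht hne lam (m := m) (by omega)
        exact ⟨a, fun _ => ha⟩
      · exact ⟨hne.some, fun h => absurd h hm⟩
    choose f hf using this
    exact ⟨f, hf⟩
  obtain ⟨sg, hsg⟩ : ∃ sg : ℕ → ℕ, ∀ m, sg m = m - cum pit lam (letter m) + cum pib lam (letter m) :=
    ⟨_, fun _ => rfl⟩
  have hsgN : ∀ m < N, sg m < N := by
    intro m hm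
    have h1 := hlet m hm
    have h2 := cumN_add_le_sum hb lam (letter m)
    rw [hsg]; omega
  have : Nonempty (Fin N) := ⟨⟨0, hNp⟩⟩
  let Sx : Set (Fin N → ℝ) := {v | (∀ i, 0 < v i) ∧ ∑ i, v i = 1}
  have hex : ∀ v : Fin N → ℝ, ∃ Y : ℕ → ℝ, v ∈ Sx → Y 0 = 0 ∧ Y N = 1 ∧
      (∀ m < N, (S (Tau pib lam v)).R (letter m) (Y m) (Xf v (sg m))) ∧
      (∀ m < N, Y m < Y (m + 1)) ∧
      (∀ m < N, (Y (m + 1), Xf v (sg m + 1)) ∈ G (Tau pib lam v) (letter m)) ∧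
      (∀ a, Y (cum pit lam a) = (S (Tau pib lam v)).ut a) := by
    intro v
    by_cases hv : v ∈ Sx
    · obtain ⟨Y, hY⟩ := Y_exists fam ht hb hne hlam hN hlet hsg hv.1 hv.2
      exact ⟨Y, fun _ => hY⟩
    · exact ⟨fun _ => 0, fun h => absurd h hv⟩
  choose Y hY using hex
  have ho : ∀ v ∈ Sx, Tau pib lam v ∈ GState.openSimplex A := fun v hv =>
    Tau_open hb hne hlam hN hv.1 hv.2
  have hYb : ∀ v ∈ Sx, ∀ m ≤ N, Y v m ∈ Set.Icc (0 : ℝ) 1 := by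
    intro v hv m hm
    obtain ⟨y0, yN, yR, ymono, -, -⟩ := hY v hv
    have e1 : ∀ m ≤ N, 0 ≤ Y v m := by
      intro m
      induction m with
      | zero => intro _; rw [y0]
      | succ m ih => intro h; exact (ih (by omega)).trans (ymono m (by omega)).le
    have e2 : ∀ k m, m + k = N → Y v m ≤ 1 := by
      intro k
      induction k with
      | zero => intro m h; rw [show m = N by omega, yN]
      | succ k ih => intro m h; exact (ymono m (by omega)).le.trans (ih (m + 1) (by omega))
    exact ⟨e1 m hm, e2 (N - m) m (by omega)⟩
  let Phi : (Fin N → ℝ) → (Fin N → ℝ) := fun v i => Y v (i.val + 1) - Y v i.val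
  have hmaps : Set.MapsTo Phi Sx (stdSimplex ℝ (Fin N)) := by
    intro v hv
    obtain ⟨y0, yN, yR, ymono, -, -⟩ := hY v hv
    refine ⟨fun i => ?_, ?_⟩
    · have := ymono i.val i.2
      simp only [Phi]; linarith
    · rw [← Xf_full]
      have := Xf_diff (N := N) (Y v) le_rfl
      rw [y0, yN, sub_zero] at this
      exact this
  have hYcont : ∀ m ≤ N, ∀ v ∈ Sx, ∀ g : Ultrafilter (Fin N → ℝ), (g : Filter (Fin N → ℝ)) ≤ 𝓝[Sx] v →
      Tendsto (fun v => Y v m) g (𝓝 (Y v m)) := by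
    intro m hm v hv g hg
    have hgS : ∀ᶠ u in (g : Filter (Fin N → ℝ)), u ∈ Sx := hg self_mem_nhdsWithin
    have hgv : Tendsto (fun u : Fin N → ℝ => u) g (𝓝 v) := hg.trans nhdsWithin_le_nhds
    rcases hm.eq_or_lt with rfl | hm
    · refine tendsto_const_nhds.congr' ?_
      filter_upwards [hgS] with u hu
      rw [(hY u hu).2.1, (hY v hv).2.1]
    · obtain ⟨y, -, hy⟩ := ultra_lim g (f := fun v => Y v m) (c := 0) (d := 1)
        (hgS.mono fun u hu => hYb u hu m hm.le)
      have h1 : (y, Xf v (sg m)) ∈ G (Tau pib lam v) (letter m) := by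
        refine fam.lim g (fun u => Tau pib lam u) (Tau pib lam v) (letter m)
          (fun u => (Y u m, Xf u (sg m))) _ (hgS.mono fun u hu => ho u hu)
          (Tau_closed hb hne hN (fun i => (hv.1 i).le) hv.2)
          (((Tau_cont pib lam).tendsto v).comp hgv) (hgS.mono fun u hu => ?_)
          (hy.prodMk_nhds (((Xf_cont (sg m)).tendsto v).comp hgv))
        exact fam.mem _ (ho u hu) ((hY u hu).2.2.1 m hm)
      have h2 : (Y v m, Xf v (sg m)) ∈ G (Tau pib lam v) (letter m) :=
        fam.mem _ (ho v hv) ((hY v hv).2.2.1 m hm)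
      have h3 : y = Y v m := (fam.inj _ (Tau_closed hb hne hN (fun i => (hv.1 i).le) hv.2)
        (letter m) _ h1 _ h2).2 rfl
      rw [h3] at hy; exact hy
  have hcont : ContinuousOn Phi Sx := by
    intro v hv
    rw [ContinuousWithinAt, tendsto_iff_ultrafilter]
    intro g hg
    rw [tendsto_pi_nhds]
    intro i
    exact (hYcont _ i.2 v hv g hg).sub (hYcont _ i.2.le v hv g hg)
  obtain ⟨p, hpS, hplim⟩ := Scarf.approx_open Sx rfl Phi hmaps hcont
  -- limit
  obtain ⟨v, hv, hlim⟩ : ∃ v ∈ stdSimplex ℝ (Fin N), Tendsto p (hyperfilter ℕ) (𝓝 v) := by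
    refine (isCompact_stdSimplex ℝ (Fin N)).ultrafilter_le_nhds' ((hyperfilter ℕ).map p) ?_
    have hall : ∀ n, p n ∈ stdSimplex ℝ (Fin N) := fun n => ⟨fun i => ((hpS n).1 i).le, (hpS n).2⟩
    exact Filter.mem_map.2 (Filter.Eventually.of_forall hall)
  have hPhi : Tendsto (fun n => Phi (p n)) (hyperfilter ℕ) (𝓝 v) := by
    have h1 := (hplim.mono_left Nat.hyperfilter_le_atTop).add hlim
    simpa using h1
  have hYlim : ∀ m ≤ N, Tendsto (fun n => Y (p n) m) (hyperfilter ℕ) (𝓝 (Xf v m)) := by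
    intro m hm
    have h1 := ((Xf_cont m).tendsto v).comp hPhi
    refine h1.congr fun n => ?_
    have h2 := Xf_diff (N := N) (Y (p n)) hm
    rw [(hY _ (hpS n)).1, sub_zero] at h2
    exact h2
  have hXlim : ∀ m, Tendsto (fun n => Xf (p n) m) (hyperfilter ℕ) (𝓝 (Xf v m)) :=
    fun m => ((Xf_cont m).tendsto v).comp hlim
  have htaulim : Tendsto (fun n => Tau pib lam (p n)) (hyperfilter ℕ) (𝓝 (Tau pib lam v)) :=
    ((Tau_cont pib lam).tendsto v).comp hlim
  have hcl : Tau pib lam v ∈ GState.closedSimplex A := Tau_closed hb hne hN hv.1 hv.2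
  have hg1 : ∀ m < N, (Xf v m, Xf v (sg m)) ∈ G (Tau pib lam v) (letter m) := by
    intro m hm
    refine fam.lim (hyperfilter ℕ) (fun n => Tau pib lam (p n)) _ _
      (fun n => (Y (p n) m, Xf (p n) (sg m))) _ (Eventually.of_forall fun n => ho _ (hpS n)) hcl
      htaulim (Eventually.of_forall fun n => ?_) ((hYlim m hm.le).prodMk_nhds (hXlim _))
    exact fam.mem _ (ho _ (hpS n)) ((hY _ (hpS n)).2.2.1 m hm)
  have hg2 : ∀ m < N, (Xf v (m + 1), Xf v (sg m + 1)) ∈ G (Tau pib lam v) (letter m) := by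
    intro m hm
    refine fam.lim (hyperfilter ℕ) (fun n => Tau pib lam (p n)) _ _
      (fun n => (Y (p n) (m + 1), Xf (p n) (sg m + 1))) _
      (Eventually.of_forall fun n => ho _ (hpS n)) hcl
      htaulim (Eventually.of_forall fun n => ?_) ((hYlim (m + 1) hm).prodMk_nhds (hXlim _))
    exact (hY _ (hpS n)).2.2.2.2.1 m hm
  have hz : ∀ m < N, (Xf v m = Xf v (m + 1) ↔ Xf v (sg m) = Xf v (sg m + 1)) := fun m hm =>
    fam.inj _ hcl _ _ (hg1 m hm) _ (hg2 m hm)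
  have hRel : ∀ m n : ℕ, (∃ a, (iet pit pib (fun a => (lam a : ℝ))).R a m n) → m < N ∧ n = sg m := by
    rintro m n ⟨a, ⟨h1, h2⟩, h3⟩
    rw [cum_cast] at h1 h2 h3
    rw [cum_cast] at h3
    have h1' : cum pit lam a ≤ m := by exact_mod_cast h1
    have h2'' : (m : ℝ) < (cum pit lam a : ℕ) + (lam a : ℝ) := h2
    have h2' : m < cum pit lam a + lam a := by exact_mod_cast h2''
    have h4 := cumN_add_le_sum ht lam a
    have hm : m < N := by omega
    have h5 : letter m = a := cumN_disj ht lam (hlet m hm) ⟨h1', h2'⟩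
    refine ⟨hm, ?_⟩
    rw [hsg, h5]
    have h6 : ((n + cum pit lam a : ℕ) : ℝ) = ((m + cum pib lam a : ℕ) : ℝ) := by
      push_cast; linarith
    have h7 : n + cum pit lam a = m + cum pib lam a := by exact_mod_cast h6
    omega
  have hpos : ∀ i, 0 < v i := by
    by_contra hcon
    push Not at hcon
    obtain ⟨i, hi⟩ := hcon
    have hi0 : v i = 0 := le_antisymm hi (hv.1 i)
    have hall : ∀ j : Fin N, v j = 0 := by
      intro j
      have hlen : ∑ a, (iet pit pib (fun a => (lam a : ℝ))).lt a = N := by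
        rw [← hN]; simp [iet]
      have h1 := htr i.val j.val (by rw [hlen]; exact_mod_cast i.2) (by rw [hlen]; exact_mod_cast j.2)
      have h2 : ∀ m n : ℕ, Relation.ReflTransGen
          (fun x y : ℕ => ∃ a, (iet pit pib (fun a => (lam a : ℝ))).R a x y) m n →
          Xf v m = Xf v (m + 1) → Xf v n = Xf v (n + 1) := by
        intro m n h hm
        induction h with
        | refl => exact hm
        | tail _ h3 ih =>
          obtain ⟨h4, rfl⟩ := hRel _ _ h3
          exact (hz _ h4).1 ih
      have h3 := h2 _ _ h1 (by rw [Xf_succ v i.2]; simp [hi0])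
      rw [Xf_succ v j.2] at h3
      linarith
    have := hv.2
    rw [Finset.sum_eq_zero fun j _ => hall j] at this
    exact zero_ne_one this
  have hvS : v ∈ Sx := ⟨hpos, hv.2⟩
  have hop := ho v hvS
  have hYX : ∀ m < N, Y v m = Xf v m := fun m hm =>
    (fam.inj _ hcl _ _ (fam.mem _ hop ((hY v hvS).2.2.1 m hm)) _ (hg1 m hm)).2 rfl
  have hub := fam_ub fam hb hop (lam := lam)
  have hUT : ∀ a, (iet pit pib (fun a => (lam a : ℝ))).ut a = (cum pit lam a : ℕ) :=
    fun a => cum_cast pit lam a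
  have hUB : ∀ a, (iet pit pib (fun a => (lam a : ℝ))).ub a = (cum pib lam a : ℕ) :=
    fun a => cum_cast pib lam a
  refine ⟨Tau pib lam v, hop, fun x => Xf v ⌊x⌋₊, {x | ∃ n : ℕ, n ≤ N ∧ (n : ℝ) = x}, ?_⟩
  have okI := iet_ok ht hb (lam := fun a => (lam a : ℝ)) (fun a => by exact_mod_cast hlam a)
  refine ⟨fam.pt _ hop, fam.pb _ hop, ?_, ?_, ?_, ?_, ?_⟩
  · intro a
    rw [hUT]
    have h1 := cumN_add_le_sum ht lam a
    have h2 := hlam a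
    refine ⟨⟨_, by omega, rfl⟩, ?_⟩
    simp only [Nat.floor_natCast]
    rw [← hYX _ (by omega)]
    exact (hY v hvS).2.2.2.2.2 a
  · intro a
    rw [hUB]
    have h1 := cumN_add_le_sum hb lam a
    refine ⟨⟨_, by omega, rfl⟩, ?_⟩
    simp only [Nat.floor_natCast]
    exact (hub a).1.symm
  · intro a x y r
    have h1 := iet_intg lam a x y r
    have h2 := okI.mem r
    have h3 := cumN_add_le_sum ht lam a
    have h4 := cumN_add_le_sum hb lam a
    rw [hUT, hUB] at h2
    simp only [iet] at h2
    constructor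
    · rintro ⟨m, hm, rfl⟩
      obtain ⟨n, rfl⟩ := h1.1 ⟨m, rfl⟩
      have h5 : n < cum pib lam a + lam a := by exact_mod_cast h2.2.2
      exact ⟨n, by omega, rfl⟩
    · rintro ⟨m, hm, rfl⟩
      obtain ⟨n, rfl⟩ := h1.2 ⟨m, rfl⟩
      have h5 : n < cum pit lam a + lam a := by exact_mod_cast h2.1.2
      exact ⟨n, by omega, rfl⟩
  · rintro a x y r ⟨m, hm, rfl⟩
    obtain ⟨n, rfl⟩ := (iet_intg lam a _ y r).1 ⟨m, rfl⟩
    obtain ⟨hmN, rfl⟩ := hRel m n ⟨a, r⟩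
    have h2 := okI.mem r
    rw [hUT] at h2
    simp only [iet] at h2
    have h5 : letter m = a := cumN_disj ht lam (hlet m hmN)
      ⟨by exact_mod_cast h2.1.1, by exact_mod_cast h2.1.2⟩
    simp only [Nat.floor_natCast]
    rw [← hYX m hmN, ← h5]
    exact (hY v hvS).2.2.1 m hmN
  · rintro _ ⟨m, hm, rfl⟩ _ ⟨n, hn, rfl⟩ hlt
    simp only [Nat.floor_natCast]
    exact Xf_strict hpos (by exact_mod_cast hlt) hn

end fixed
end FF

set_option linter.unusedSectionVars false

namespace FF
open Filter Topology

section limits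
variable {A : Type*} [Fintype A] [DecidableEq A]

/-- Uniformly controlled sequences of maps. -/
structure Eq1 (U : Ultrafilter ℕ) (s : ℕ → RS A) : Prop where
  ok : ∀ᶠ r in (U : Filter ℕ), Ok (s r)
  eq : ∀ (a : A) (x y x' y' : ℕ → ℝ), (∀ᶠ r in (U : Filter ℕ), (s r).R a (x r) (y r)) →
    (∀ᶠ r in (U : Filter ℕ), (s r).R a (x' r) (y' r)) →
    (Tendsto (fun r => x' r - x r) U (𝓝 0) ↔ Tendsto (fun r => y' r - y r) U (𝓝 0))

theorem Eq1.dual {U : Ultrafilter ℕ} {s : ℕ → RS A} (h : Eq1 U s) : Eq1 U (fun r => (s r).dual) where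
  ok := h.ok.mono fun _ h => h.dual
  eq := fun a x y x' y' h1 h2 => (h.eq a y x y' x' h1 h2).symm

/-- The letter `a` degenerates. -/
def Zer (U : Ultrafilter ℕ) (s : ℕ → RS A) (a : A) : Prop :=
  Tendsto (fun r => (s r).lt a) U (𝓝 0)

theorem Eq1.zer_imp {U : Ultrafilter ℕ} {s : ℕ → RS A} (h : Eq1 U s) {a : A}
    (hz : Zer U s a) : Zer U (fun r => (s r).dual) a := by
  have h1 : ∀ᶠ r in (U : Filter ℕ), ∃ x, (s r).R a x ((s r).ub a + (s r).lb a / 2) :=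
    h.ok.mono fun r ok => ok.sur (by linarith [ok.plb a]) (by linarith [ok.plb a])
  obtain ⟨x, hx⟩ := h1.choice
  have h2 := (h.eq a _ _ x _ (h.ok.mono fun r ok => ok.start a) hx).1 (by
    refine tendsto_of_tendsto_of_tendsto_of_le_of_le' tendsto_const_nhds hz ?_ ?_
    · filter_upwards [h.ok, hx] with r ok hr
      have := (ok.mem hr).1.1
      linarith
    · filter_upwards [h.ok, hx] with r ok hr
      have := (ok.mem hr).1.2
      linarith)
  have h3 := h2.const_mul 2
  rw [mul_zero] at h3
  refine h3.congr fun r => ?_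
  change _ = (s r).lb a
  ring

theorem Eq1.zer_iff {U : Ultrafilter ℕ} {s : ℕ → RS A} (h : Eq1 U s) (a : A) :
    Zer U (fun r => (s r).dual) a ↔ Zer U s a := ⟨h.dual.zer_imp, h.zer_imp⟩

theorem Eq1.top {U : Ultrafilter ℕ} {s : ℕ → RS A} (h : Eq1 U s) {w l : A}
    (c : ∀ᶠ r in (U : Filter ℕ), TopC (s r) w l) : Eq1 U (fun r => (s r).top w l) := by
  have hwl : w ≠ l := c.exists.choose_spec.ne
  refine ⟨by filter_upwards [h.ok, c] with r ok c using ok.top c, ?_⟩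
  intro a x y x' y' h1 h2
  by_cases hl : a = l
  · subst hl
    obtain ⟨z, hz⟩ := (h1.mono fun r hr => (top_R_l _ _ _).1 hr).choice
    obtain ⟨z', hz'⟩ := (h2.mono fun r hr => (top_R_l _ _ _).1 hr).choice
    exact (h.eq a x z x' z' (hz.mono fun _ h => h.1) (hz'.mono fun _ h => h.1)).trans
      (h.eq w z y z' y' (hz.mono fun _ h => h.2) (hz'.mono fun _ h => h.2))
  by_cases hw : a = w
  · subst hw
    exact h.eq a x y x' y' (h1.mono fun r hr => ((top_R_w _ _ _ hwl).1 hr).1)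
      (h2.mono fun r hr => ((top_R_w _ _ _ hwl).1 hr).1)
  · exact h.eq a x y x' y' (h1.mono fun r hr => (top_R_ne _ _ _ hw hl).1 hr)
      (h2.mono fun r hr => (top_R_ne _ _ _ hw hl).1 hr)

structure ZRel (w l : A) (Z Z' : A → Prop) : Prop where
  ne : w ≠ l
  mono : ∀ a, Z a → Z' a
  back : ∀ a, a ≠ w → Z' a → Z a
  win : Z' w → Z l → Z w
  los : Z w → Z l

theorem Eq1.top_zrel {U : Ultrafilter ℕ} {s : ℕ → RS A} (h : Eq1 U s) {w l : A}
    (c : ∀ᶠ r in (U : Filter ℕ), TopC (s r) w l) :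
    ZRel w l (Zer U s) (Zer U (fun r => (s r).top w l)) := by
  have hwl : w ≠ l := c.exists.choose_spec.ne
  have hne : ∀ a, a ≠ w → (Zer U (fun r => (s r).top w l) a ↔ Zer U s a) := by
    intro a ha
    simp only [Zer, top_lt_ne _ _ _ ha]
  have hlos : Zer U s w → Zer U s l := by
    intro hz
    rw [← h.zer_iff]
    refine tendsto_of_tendsto_of_tendsto_of_le_of_le' tendsto_const_nhds hz ?_ ?_
    · filter_upwards [h.ok] with r ok using (ok.plb l).le
    · filter_upwards [h.ok, c] with r ok c
      have := c.last_b ok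
      have := c.last_t ok
      have := c.lt
      change (s r).lb l ≤ _
      linarith
  refine ⟨hwl, ?_, fun a ha => (hne a ha).1, ?_, hlos⟩
  · intro a hz
    by_cases ha : a = w
    · subst ha
      have h1 : Tendsto (fun r => (s r).lb l) U (𝓝 0) := (h.zer_iff l).2 (hlos hz)
      have h2 := Tendsto.sub hz h1
      rw [sub_zero] at h2
      refine h2.congr fun r => ?_
      rw [top_lt_w]
    · exact (hne a ha).2 hz
  · intro h1 h2
    have h3 : Tendsto (fun r => (s r).lb l) U (𝓝 0) := (h.zer_iff l).2 h2
    have h4 := Tendsto.add h1 h3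
    rw [add_zero] at h4
    refine h4.congr fun r => ?_
    simp only [top_lt_w]
    ring

theorem Eq1.step {U : Ultrafilter ℕ} {s : ℕ → RS A} (h : Eq1 U s) {b : Bool} {w l : A}
    (c : ∀ᶠ r in (U : Filter ℕ), StepC (s r) b w l) :
    Eq1 U (fun r => (s r).step b w l) ∧
    ZRel w l (Zer U s) (Zer U (fun r => (s r).step b w l)) := by
  cases b
  · have e1 := h.dual.top c
    refine ⟨e1.dual, ?_⟩
    have := h.dual.top_zrel c
    have h3 : Zer U (fun r => (s r).dual) = Zer U s := funext fun a => propext (h.zer_iff a)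
    have h4 : Zer U (fun r => ((s r).dual.top w l).dual) = Zer U (fun r => (s r).dual.top w l) :=
      funext fun a => propext (e1.zer_iff a)
    rw [h3, ← h4] at this
    exact this
  · exact ⟨h.top c, h.top_zrel c⟩

/-- Combinatorial core: no letter degenerates. -/
theorem no_zero {w l : ℕ → A} {Z : ℕ → A → Prop}
    (hk : ∀ a : A, ∀ N : ℕ, ∃ k : ℕ, N ≤ k ∧ w k = a)
    (hw : ∀ k, w (k + 1) ≠ w k → l (k + 1) = w k)
    (hz : ∀ k, ZRel (w k) (l k) (Z k) (Z (k + 1))) (h0 : ∃ a, ¬ Z 0 a) (k : ℕ) (a : A) :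
    ¬ Z k a := by
  intro hka
  have hne : ∀ k, ∃ a, ¬ Z k a := by
    intro k
    induction k with
    | zero => exact h0
    | succ k ih =>
      by_contra hcon
      push Not at hcon
      obtain ⟨a, ha⟩ := ih
      have h1 := (hz k).win (hcon _) ((hz k).back _ (hz k).ne.symm (hcon _))
      apply ha
      by_cases e : a = w k
      · rw [e]; exact h1
      · exact (hz k).back a e (hcon a)
  have hmono : Monotone (fun k => {a | Z k a}) := monotone_nat_of_le_succ fun k a => (hz k).mono a
  obtain ⟨n, hn⟩ := WellFoundedGT.monotone_chain_condition (⟨_, hmono⟩ : ℕ →o Set A)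
  have hn' : ∀ m, n ≤ m → ∀ a, (Z m a ↔ Z n a) := fun m hm a => by
    have : {a | Z n a} = {a | Z m a} := hn m hm
    exact (Set.ext_iff.1 this a).symm
  have hna : Z n a := by
    rcases le_total k n with h | h
    · exact hmono h hka
    · exact (hn' k h a).1 hka
  obtain ⟨b, hb⟩ := hne n
  obtain ⟨i, hi, ei⟩ := hk b n
  obtain ⟨j, hj, ej⟩ := hk a i
  have key : ∀ m, i ≤ m → ¬ Z n (w m) := by
    intro m hm
    induction m, hm using Nat.le_induction with
    | base => rw [ei]; exact hb
    | succ m hm ih =>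
      intro hcon
      have h1 : w (m + 1) ≠ w m := by
        intro e; rw [e] at hcon; exact ih hcon
      have h2 := (hz (m + 1)).los ((hn' _ (by omega) _).2 hcon)
      rw [hw m h1] at h2
      exact ih ((hn' _ (by omega) _).1 h2)
  apply key j hj
  rw [ej]; exact hna

/-- Convergence of maps. -/
structure Cv (U : Ultrafilter ℕ) (s : ℕ → RS A) (t : RS A) : Prop where
  ok : ∀ᶠ r in (U : Filter ℕ), Ok (s r)
  okt : Ok t
  pt : ∀ᶠ r in (U : Filter ℕ), (s r).pt = t.pt
  pb : ∀ᶠ r in (U : Filter ℕ), (s r).pb = t.pb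
  lt : ∀ a, Tendsto (fun r => (s r).lt a) U (𝓝 (t.lt a))
  lb : ∀ a, Tendsto (fun r => (s r).lb a) U (𝓝 (t.lb a))
  R : ∀ (a : A) (x y : ℕ → ℝ) (x0 y0 : ℝ), (∀ᶠ r in (U : Filter ℕ), (s r).R a (x r) (y r)) →
    t.R a x0 y0 → (Tendsto x U (𝓝 x0) ↔ Tendsto y U (𝓝 y0))

theorem Cv.dual {U : Ultrafilter ℕ} {s : ℕ → RS A} {t : RS A} (h : Cv U s t) :
    Cv U (fun r => (s r).dual) t.dual where
  ok := h.ok.mono fun _ h => h.dual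
  okt := h.okt.dual
  pt := h.pb
  pb := h.pt
  lt := h.lb
  lb := h.lt
  R := fun a x y x0 y0 h1 h2 => (h.R a y x y0 x0 h1 h2).symm

theorem tendsto_cum {U : Ultrafilter ℕ} {p : A → ℕ} {q : ℕ → A → ℕ} {l : A → ℝ} {m : ℕ → A → ℝ}
    (h1 : ∀ᶠ r in (U : Filter ℕ), q r = p) (h2 : ∀ a, Tendsto (fun r => m r a) U (𝓝 (l a)))
    (a : A) : Tendsto (fun r => cum (q r) (m r) a) U (𝓝 (cum p l a)) := by
  have h3 : Tendsto (fun r => cum p (m r) a) U (𝓝 (cum p l a)) := by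
    refine tendsto_finsetSum _ fun x _ => ?_
    by_cases h : p x < p a
    · simp only [h, if_true]; exact h2 x
    · simp only [h, if_false]; exact tendsto_const_nhds
  refine h3.congr' (h1.mono fun r hr => ?_)
  simp only [hr]

theorem Cv.ut {U : Ultrafilter ℕ} {s : ℕ → RS A} {t : RS A} (h : Cv U s t) (a : A) :
    Tendsto (fun r => (s r).ut a) U (𝓝 (t.ut a)) := tendsto_cum h.pt h.lt a

theorem Cv.ub {U : Ultrafilter ℕ} {s : ℕ → RS A} {t : RS A} (h : Cv U s t) (a : A) :
    Tendsto (fun r => (s r).ub a) U (𝓝 (t.ub a)) := tendsto_cum h.pb h.lb a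

theorem Cv.topC {U : Ultrafilter ℕ} {s : ℕ → RS A} {t : RS A} (h : Cv U s t) {w l : A}
    (c : ∀ᶠ r in (U : Filter ℕ), TopC (s r) w l)
    (hz : ¬ Zer U (fun r => (s r).top w l) w) : TopC t w l := by
  obtain ⟨r, c0, h1, h2⟩ := (c.and (h.pt.and h.pb)).exists
  have h3 : Tendsto (fun r => (s r).ub l - (s r).ut w) U (𝓝 (t.ub l - t.ut w)) :=
    (h.ub l).sub (h.ut w)
  refine ⟨h1 ▸ c0.hw, h2 ▸ c0.hl, c0.ne, ?_⟩
  have h4 : 0 ≤ t.ub l - t.ut w := ge_of_tendsto h3 (c.mono fun r c => by linarith [c.lt])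
  rcases h4.lt_or_eq with h4 | h4
  · linarith
  · exfalso
    apply hz
    rw [← h4] at h3
    refine h3.congr' ?_
    filter_upwards [c, h.ok] with r c ok
    have := c.last_b ok
    have := c.last_t ok
    rw [top_lt_w]
    linarith

theorem Cv.top {U : Ultrafilter ℕ} {s : ℕ → RS A} {t : RS A} (h : Cv U s t) {w l : A}
    (c : ∀ᶠ r in (U : Filter ℕ), TopC (s r) w l) (ct : TopC t w l) :
    Cv U (fun r => (s r).top w l) (t.top w l) := by
  have hwl : w ≠ l := ct.ne
  have hy : Tendsto (fun r => (s r).y0 w l) U (𝓝 (t.y0 w l)) := by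
    refine (h.R w _ _ _ _ ?_ (ct.y0_R h.okt)).1 (h.ub l)
    filter_upwards [h.ok, c] with r ok c using c.y0_R ok
  refine ⟨by filter_upwards [h.ok, c] with r ok c using ok.top c, h.okt.top ct, h.pt, ?_, ?_, ?_, ?_⟩
  · filter_upwards [h.pb] with r hr
    change ctop _ _ _ = ctop _ _ _
    rw [hr]
  · intro a
    by_cases ha : a = w
    · subst ha
      simp only [top_lt_w]
      exact (h.lt _).sub (h.lb _)
    · simp only [top_lt_ne _ _ _ ha]
      exact h.lt a
  · intro a
    by_cases hl : a = l
    · subst hl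
      simp only [top_lb_l]
      exact ((h.ub w).add (h.lb w)).sub hy
    by_cases ha : a = w
    · subst ha
      simp only [top_lb_w _ _ _ hwl]
      exact hy.sub (h.ub a)
    · simp only [top_lb_ne _ _ _ ha hl]
      exact h.lb a
  · intro a x y x0 y0 h1 h2
    by_cases hl : a = l
    · subst hl
      obtain ⟨z, hz⟩ := (h1.mono fun r hr => (top_R_l _ _ _).1 hr).choice
      obtain ⟨z0, hz1, hz2⟩ := (top_R_l _ _ _).1 h2
      exact (h.R a x z x0 z0 (hz.mono fun _ h => h.1) hz1).trans
        (h.R w z y z0 y0 (hz.mono fun _ h => h.2) hz2)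
    by_cases hw : a = w
    · subst hw
      exact h.R a x y x0 y0 (h1.mono fun r hr => ((top_R_w _ _ _ hwl).1 hr).1)
        ((top_R_w _ _ _ hwl).1 h2).1
    · exact h.R a x y x0 y0 (h1.mono fun r hr => (top_R_ne _ _ _ hw hl).1 hr)
        ((top_R_ne _ _ _ hw hl).1 h2)

theorem Cv.step {U : Ultrafilter ℕ} {s : ℕ → RS A} {t : RS A} (h : Cv U s t) (he : Eq1 U s)
    {b : Bool} {w l : A} (c : ∀ᶠ r in (U : Filter ℕ), StepC (s r) b w l)
    (hz : ¬ Zer U (fun r => (s r).step b w l) w) :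
    StepC t b w l ∧ Cv U (fun r => (s r).step b w l) (t.step b w l) := by
  cases b
  · have e1 := he.dual.top c
    have c1 : TopC t.dual w l := h.dual.topC c fun hcon => hz ((e1.zer_iff w).2 hcon)
    exact ⟨c1, (h.dual.top c c1).dual⟩
  · have c1 : TopC t w l := h.topC c hz
    exact ⟨c1, h.top c c1⟩

section base
variable {pit pib : A → ℕ} {S : (A → ℝ) → RS A} {G : (A → ℝ) → A → Set (ℝ × ℝ)}

theorem fam_bd (fam : Fam pit pib S G) {τ : A → ℝ} (hτ : τ ∈ GState.openSimplex A) {a : A} {x y : ℝ}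
    (h : (S τ).R a x y) : x ∈ Set.Icc (0 : ℝ) 1 ∧ y ∈ Set.Icc (0 : ℝ) 1 := by
  have ok := fam.ok τ hτ
  have h1 := ok.mem h
  have h2 := fam.len τ hτ
  have h3 : (S τ).ut a + (S τ).lt a ≤ ∑ x, (S τ).lt x := cum_add_le_sum ok.vt (fun a => (ok.plt a).le) a
  have h4 : (S τ).ub a + (S τ).lb a ≤ ∑ x, (S τ).lb x := cum_add_le_sum ok.vb (fun a => (ok.plb a).le) a
  have h5 : 0 ≤ (S τ).ut a := cum_nonneg (fun a => (ok.plt a).le) a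
  have h6 : 0 ≤ (S τ).ub a := cum_nonneg (fun a => (ok.plb a).le) a
  rw [← ok.sum] at h4
  exact ⟨⟨by linarith [h1.1.1], by linarith [h1.1.2]⟩, ⟨by linarith [h1.2.1], by linarith [h1.2.2]⟩⟩

theorem fam_pt (fam : Fam pit pib S G) {U : Ultrafilter ℕ} {τ : ℕ → A → ℝ}
    (hτ : ∀ r, τ r ∈ GState.openSimplex A) {τ0 : A → ℝ} (h0 : τ0 ∈ GState.closedSimplex A)
    (hl : Tendsto τ U (𝓝 τ0)) {a : A} {x y : ℕ → ℝ}
    (h : ∀ᶠ r in (U : Filter ℕ), (S (τ r)).R a (x r) (y r)) :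
    ∃ x0 y0, (x0, y0) ∈ G τ0 a ∧ Tendsto x U (𝓝 x0) ∧ Tendsto y U (𝓝 y0) := by
  obtain ⟨x0, -, hx⟩ := ultra_lim U (f := x) (c := 0) (d := 1)
    (h.mono fun r hr => (fam_bd fam (hτ r) hr).1)
  obtain ⟨y0, -, hy⟩ := ultra_lim U (f := y) (c := 0) (d := 1)
    (h.mono fun r hr => (fam_bd fam (hτ r) hr).2)
  refine ⟨x0, y0, ?_, hx, hy⟩
  exact fam.lim U τ τ0 a (fun r => (x r, y r)) (x0, y0) (Eventually.of_forall hτ) h0 hl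
    (h.mono fun r hr => fam.mem _ (hτ r) hr) (hx.prodMk_nhds hy)

theorem tendsto_iff_eq {U : Ultrafilter ℕ} {x : ℕ → ℝ} {x0 : ℝ} (h : Tendsto x U (𝓝 x0)) (z : ℝ) :
    Tendsto x U (𝓝 z) ↔ x0 = z :=
  ⟨fun h' => tendsto_nhds_unique h h', fun e => e ▸ h⟩

theorem fam_eq1 (fam : Fam pit pib S G) {U : Ultrafilter ℕ} {τ : ℕ → A → ℝ}
    (hτ : ∀ r, τ r ∈ GState.openSimplex A) {τ0 : A → ℝ} (h0 : τ0 ∈ GState.closedSimplex A)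
    (hl : Tendsto τ U (𝓝 τ0)) : Eq1 U (fun r => S (τ r)) := by
  refine ⟨Eventually.of_forall fun r => fam.ok _ (hτ r), ?_⟩
  intro a x y x' y' h1 h2
  obtain ⟨p, q, hm, hp, hq⟩ := fam_pt fam hτ h0 hl h1
  obtain ⟨p', q', hm', hp', hq'⟩ := fam_pt fam hτ h0 hl h2
  rw [tendsto_iff_eq (hp'.sub hp), tendsto_iff_eq (hq'.sub hq), sub_eq_zero, sub_eq_zero]
  exact fam.inj _ h0 a _ hm' _ hm

theorem fam_cv (fam : Fam pit pib S G) {U : Ultrafilter ℕ} {τ : ℕ → A → ℝ}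
    (hτ : ∀ r, τ r ∈ GState.openSimplex A) {τ0 : A → ℝ} (h0 : τ0 ∈ GState.openSimplex A)
    (hl : Tendsto τ U (𝓝 τ0)) : Cv U (fun r => S (τ r)) (S τ0) := by
  have h0' : τ0 ∈ GState.closedSimplex A := ⟨fun a => (h0.1 a).le, h0.2⟩
  have hlb : ∀ a, Tendsto (fun r => (S (τ r)).lb a) U (𝓝 ((S τ0).lb a)) := by
    intro a
    simp only [fam.lb _ (hτ _), fam.lb _ h0]
    exact (tendsto_pi_nhds.1 hl) a
  have hpb : ∀ r, (S (τ r)).pb = (S τ0).pb := fun r => by rw [fam.pb _ (hτ r), fam.pb _ h0]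
  have hR : ∀ (a : A) (x y : ℕ → ℝ) (x0 y0 : ℝ), (∀ᶠ r in (U : Filter ℕ), (S (τ r)).R a (x r) (y r)) →
    (S τ0).R a x0 y0 → (Tendsto x U (𝓝 x0) ↔ Tendsto y U (𝓝 y0)) := by
    intro a x y x0 y0 h1 h2
    obtain ⟨p, q, hm, hp, hq⟩ := fam_pt fam hτ h0' hl h1
    rw [tendsto_iff_eq hp, tendsto_iff_eq hq]
    exact fam.inj _ h0' a _ hm _ (fam.mem _ h0 h2)
  have hub : ∀ a, Tendsto (fun r => (S (τ r)).ub a) U (𝓝 ((S τ0).ub a)) :=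
    tendsto_cum (Eventually.of_forall hpb) hlb
  have hut : ∀ a, Tendsto (fun r => (S (τ r)).ut a) U (𝓝 ((S τ0).ut a)) := fun a =>
    (hR a _ _ _ _ (Eventually.of_forall fun r => (fam.ok _ (hτ r)).start a) ((fam.ok _ h0).start a)).2
      (hub a)
  refine ⟨Eventually.of_forall fun r => fam.ok _ (hτ r), fam.ok _ h0,
    Eventually.of_forall fun r => by rw [fam.pt _ (hτ r), fam.pt _ h0],
    Eventually.of_forall hpb, ?_, hlb, hR⟩
  intro a
  obtain ⟨L, -, hL⟩ := ultra_lim U (f := fun r => (S (τ r)).lt a) (c := 0) (d := 1)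
    (Eventually.of_forall fun r => ⟨((fam.ok _ (hτ r)).plt a).le, by
      rw [← fam.len _ (hτ r)]
      exact Finset.single_le_sum (f := (S (τ r)).lt)
        (fun a _ => ((fam.ok _ (hτ r)).plt a).le) (Finset.mem_univ a)⟩)
  have h1 := fam.lim U τ τ0 a
    (fun r => ((S (τ r)).ut a + (S (τ r)).lt a, (S (τ r)).ub a + (S (τ r)).lb a)) _
    (Eventually.of_forall hτ) h0' hl (Eventually.of_forall fun r => fam.mem_end _ (hτ r) a)
    (((hut a).add hL).prodMk_nhds ((hub a).add (hlb a)))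
  have h2 := (fam.inj _ h0' a _ h1 _ (fam.mem_end _ h0 a)).2 rfl
  have h3 : L = (S τ0).lt a := by simpa using h2
  rw [← h3]; exact hL

theorem limit_main (fam : Fam pit pib S G) {b : ℕ → Bool} {w l : ℕ → A}
    (hk : ∀ a : A, ∀ N : ℕ, ∃ k : ℕ, N ≤ k ∧ w k = a)
    (hw : ∀ k, w (k + 1) ≠ w k → l (k + 1) = w k)
    (hex : ∀ n, ∃ τ ∈ GState.openSimplex A, Follow b w l 0 (S τ) n) :
    ∃ τ ∈ GState.openSimplex A, ∀ k, StepC (run b w l (S τ) k) (b k) (w k) (l k) := by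
  choose τ hτ hfol using hex
  set U : Ultrafilter ℕ := hyperfilter ℕ with hU
  have hc : ∀ k, ∀ᶠ r in (U : Filter ℕ), StepC (run b w l (S (τ r)) k) (b k) (w k) (l k) := by
    intro k
    have h1 : ∀ᶠ r in (U : Filter ℕ), k < r := Nat.hyperfilter_le_atTop (eventually_gt_atTop k)
    exact h1.mono fun r hr => follow_run (k := 0) (hfol r) k (Nat.zero_le _) (by omega)
  have hlim : ∀ a, ∃ y ∈ Set.Icc (0 : ℝ) 1, Tendsto (fun r => τ r a) U (𝓝 y) := fun a =>
    ultra_lim U (Eventually.of_forall fun r => ⟨((hτ r).1 a).le, by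
      rw [← (hτ r).2]
      exact Finset.single_le_sum (f := τ r) (fun a _ => ((hτ r).1 a).le) (Finset.mem_univ a)⟩)
  choose τ0 hb hlim using hlim
  have hl : Tendsto τ U (𝓝 τ0) := tendsto_pi_nhds.2 hlim
  have hs0 : ∑ a, τ0 a = 1 := by
    have h1 : Tendsto (fun r => ∑ a, τ r a) U (𝓝 (∑ a, τ0 a)) := tendsto_finsetSum _ fun a _ => hlim a
    refine tendsto_nhds_unique h1 ?_
    simp only [(hτ _).2]
    exact tendsto_const_nhds
  have h0 : τ0 ∈ GState.closedSimplex A := ⟨fun a => (hb a).1, hs0⟩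
  have he : ∀ k, Eq1 U (fun r => run b w l (S (τ r)) k) := by
    intro k
    induction k with
    | zero => exact fam_eq1 fam hτ h0 hl
    | succ k ih => exact (ih.step (hc k)).1
  have hz := fun k => ((he k).step (hc k)).2
  have hZ0 : ∀ a, Zer U (fun r => run b w l (S (τ r)) 0) a → τ0 a = 0 := by
    intro a ha
    have h1 : Tendsto (fun r => (S (τ r)).lb a) U (𝓝 0) := ((he 0).zer_iff a).2 ha
    simp only [fam.lb _ (hτ _)] at h1
    exact tendsto_nhds_unique (hlim a) h1
  have hno : ∀ k a, ¬ Zer U (fun r => run b w l (S (τ r)) k) a := by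
    refine no_zero (Z := fun k => Zer U (fun r => run b w l (S (τ r)) k)) hk hw hz ?_
    by_contra hcon
    push Not at hcon
    rw [Finset.sum_eq_zero fun a _ => hZ0 a (hcon a)] at hs0
    exact zero_ne_one hs0
  have hopen : τ0 ∈ GState.openSimplex A := by
    refine ⟨fun a => (hb a).1.lt_of_ne fun e => hno 0 a ?_, hs0⟩
    refine ((he 0).zer_iff a).1 ?_
    change Tendsto (fun r => (S (τ r)).lb a) U (𝓝 0)
    simp only [fam.lb _ (hτ _)]
    rw [e]; exact hlim a
  have hcv : ∀ k, Cv U (fun r => run b w l (S (τ r)) k) (run b w l (S τ0) k) := by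
    intro k
    induction k with
    | zero => exact fam_cv fam hτ hopen hl
    | succ k ih => exact (ih.step (he k) (hc k) (hno (k + 1) (w k))).2
  exact ⟨τ0, hopen, fun k => ((hcv k).step (he k) (hc k) (hno (k + 1) (w k))).1⟩

end base
end limits
end FF

open GState in
/-- (Full Family Theorem.)  Let `π` be an admissible combinatorial datum whose
Rauzy class contains a cyclic combinatorial datum, and `(f_τ)_{τ∈Δ^𝒜}` a full
family of GIETs over `π`.  Then for every Keane IET `T` with combinatorial
datum `π` on `[0,1)` there is `τ ∈ Δ^𝒜` such that `f_τ` has the same infinite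
Rauzy renormalization path as `T`. -/
theorem full_family_theorem
    {A : Type*} [Fintype A] [DecidableEq A]
    (h2 : 2 ≤ Fintype.card A)
    (pit pib : A → ℕ)
    (hpit : Set.BijOn pit Set.univ (Set.Ico 1 (Fintype.card A + 1)))
    (hpib : Set.BijOn pib Set.univ (Set.Ico 1 (Fintype.card A + 1)))
    (hadm : ∀ k : ℕ, 1 ≤ k → k < Fintype.card A →
      {a : A | pit a ≤ k} ≠ {a : A | pib a ≤ k})
    -- the Rauzy class of `π` contains a cyclic combinatorial datum:
    (hcyc : ∃ P : (A → ℕ) × (A → ℕ),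
      Relation.ReflTransGen (CombStep (Fintype.card A)) (pit, pib) P ∧
      CyclicDatum P.1 P.2)
    -- a full family over `π`:
    (F : (A → ℝ) → GState A) (hF : FullFamily pit pib F)
    -- a Keane IET `T` with combinatorial datum `π` on `[0,1)`, given with its
    -- infinite complete Rauzy renormalization path (winners `w`, losers `l`):
    (T : ℕ → GState A) (w l : ℕ → A)
    (hT0 : (T 0).IsGIET) (hTpit : (T 0).pit = pit) (hTpib : (T 0).pib = pib)
    (hTlen : (T 0).len = 1)
    (hiet : ∀ a : A, ∀ x ∈ (T 0).Itv a, (T 0).f x = x - (T 0).ut a + (T 0).ub a)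
    (hTsteps : ∀ k : ℕ, RauzyStep (T k) (T (k + 1)) (w k) (l k))
    (hkeane : ∀ a : A, ∀ N : ℕ, ∃ k : ℕ, N ≤ k ∧ w k = a) :
    ∃ τ ∈ openSimplex A, ∃ g : ℕ → GState A, g 0 = F τ ∧
      ∀ k : ℕ, RauzyStep (g k) (g (k + 1)) (w k) (l k) := by
  classical
  have hvt : FF.Val pit := FF.val_iff.1 hpit
  have hvb : FF.Val pib := FF.val_iff.1 hpib
  have hne : Nonempty A := Fintype.card_pos_iff.1 (by omega)
  obtain ⟨G, fam⟩ := FF.fam_of_fullFamily hvb hF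
  choose b hb using fun k => FF.cstep_of_rauzyStep (hTsteps k)
  have hval : ∀ k, FF.Val (T k).pit ∧ FF.Val (T k).pib := by
    intro k
    induction k with
    | zero => rw [hTpit, hTpib]; exact ⟨hvt, hvb⟩
    | succ k ih => exact (hb k).val ih.1 ih.2
  have hw : ∀ k, w (k + 1) ≠ w k → l (k + 1) = w k := fun k hk =>
    FF.winner_change (hval k).1 (hval k).2 (hb k) (hb (k + 1)) hk
  have hex : ∀ n, ∃ τ ∈ openSimplex A, FF.Follow b w l 0 (FF.ofG (F τ)) n := by
    intro n
    obtain ⟨lam, hlam, htr, hfol⟩ := FF.path_main (P0 := (pit, pib)) ⟨hvt, hvb⟩ hcyc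
      (D := fun k => ((T k).pit, (T k).pib)) (by simp only [hTpit, hTpib]) hb n
    obtain ⟨τ, hτ, φ, X, sh⟩ := FF.fixed_point fam hvt hvb hne hlam htr
    exact ⟨τ, hτ, sh.follow (FF.iet_ok hvt hvb fun a => by exact_mod_cast hlam a)
      (fam.ok τ hτ) hfol⟩
  obtain ⟨τ, hτ, hstep⟩ := FF.limit_main fam hkeane hw hex
  have hok : ∀ k, FF.Ok (FF.run b w l (FF.ofG (F τ)) k) := fun k =>
    FF.run_ok (fam.ok τ hτ) fun j _ => hstep j
  let g : ℕ → GState A := fun k =>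
    match k with
    | 0 => F τ
    | k + 1 => FF.toG (FF.run b w l (FF.ofG (F τ)) (k + 1))
  have hg : ∀ k, FF.ofG (g k) = FF.run b w l (FF.ofG (F τ)) k := by
    intro k
    cases k with
    | zero => rfl
    | succ k => exact FF.ofG_toG (hok (k + 1))
  refine ⟨τ, hτ, g, rfl, fun k => ?_⟩
  refine FF.rauzyStep_of (b := b k) (by rw [hg]; exact hok k) (by rw [hg]; exact hstep k) ?_
  rw [hg k]
  exact hg (k + 1)
end
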